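/- Let G be a connected triangle-free planar graph on at least 2 vertices. Then the 2-surviving rate satisfies ρ₂(G) > 1/9. -/

import Mathlib

/-- The set of vertices on fire after `t` fire-spread rounds, when the fire breaks out
at `v` and the firefighters protect the vertices of `P s` in round `s + 1` (protection
happens just before the `s`-th spread step and is permanent). -/
def burnedSet {V : Type*} (G : SimpleGraph V) (v : V) (P : ℕ → Set V) : ℕ → Set V
  | 0 => {v}
  | t + 1 => burnedSet G v P t ∪
      {w | (∃ u ∈ burnedSet G v P t, G.Adj u w) ∧ ∀ s ≤ t, w ∉ P s}

/-- A strategy `P` is valid for the per-round budgets `b` if in each round it protects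
at most `b t` vertices, none of which are already on fire. -/
def ValidStrategy {V : Type*} (G : SimpleGraph V) (b : ℕ → ℕ) (v : V) (P : ℕ → Set V) : Prop :=
  ∀ t, (P t).Finite ∧ (P t).ncard ≤ b t ∧ Disjoint (P t) (burnedSet G v P t)

/-- `sn G b v` is the maximum number of vertices that can be saved (i.e. that never
catch fire) when the fire breaks out at `v` and the firefighters may protect at most
`b t` vertices in round `t + 1`. -/
noncomputable def sn {V : Type*} (G : SimpleGraph V) (b : ℕ → ℕ) (v : V) : ℕ :=
  sSup {m | ∃ P, ValidStrategy G b v P ∧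
    m = Nat.card {w : V | ∀ t, w ∉ burnedSet G v P t}}

/-- The surviving rate of `G` with per-round budgets `b` : the expected fraction of
vertices that can be saved when the starting vertex is chosen uniformly at random. -/
noncomputable def survivingRate {V : Type*} [Fintype V] (G : SimpleGraph V) (b : ℕ → ℕ) : ℝ :=
  (∑ v : V, (sn G b v : ℝ)) / (Fintype.card V : ℝ) ^ 2

/-- A plane embedding of a simple graph: vertices are points of the plane and edges are
simple arcs between their endpoints, such that arcs avoid all other vertices and two
arcs of distinct edges meet only in common endpoints. -/
structure PlaneEmbedding {V : Type*} (G : SimpleGraph V) where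
  pos : V → ℝ × ℝ
  arc : V → V → ℝ → ℝ × ℝ
  pos_inj : Function.Injective pos
  arc_cont : ∀ ⦃u v⦄, G.Adj u v → Continuous (arc u v)
  arc_injOn : ∀ ⦃u v⦄, G.Adj u v → Set.InjOn (arc u v) (Set.Icc 0 1)
  arc_zero : ∀ ⦃u v⦄, G.Adj u v → arc u v 0 = pos u
  arc_one : ∀ ⦃u v⦄, G.Adj u v → arc u v 1 = pos v
  arc_symm : ∀ ⦃u v⦄, G.Adj u v → ∀ t, arc v u t = arc u v (1 - t)
  arc_avoid : ∀ ⦃u v⦄, G.Adj u v → ∀ w : V, pos w ∉ arc u v '' Set.Ioo 0 1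
  arc_meet : ∀ ⦃u v x y⦄, G.Adj u v → G.Adj x y → s(u, v) ≠ s(x, y) →
      arc u v '' Set.Icc 0 1 ∩ arc x y '' Set.Icc 0 1 ⊆
        ({pos u, pos v} : Set (ℝ × ℝ)) ∩ {pos x, pos y}

/-- A graph is planar if it admits a plane embedding. -/
def IsPlanar {V : Type*} (G : SimpleGraph V) : Prop :=
  Nonempty (PlaneEmbedding G)

/-!
Let `s` be the number of vertices that two firefighters save when the fire breaks out at a vertex
`v` of a triangle-free plane graph with `n` vertices. Then `n ≤ s + 1` if `deg v ≤ 2`,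
`n ≤ 3 * s + 1` if `deg v ≤ 3`, and `n ≤ 6 * s + 5` if `deg v = 4` and at most one neighbour of `v`
has degree at least `6`. The vertices of degree `4` with two such neighbours receive charge from
them, and discharging against `|E| ≤ 2 * n - 4` concludes.

For the last two bounds, invert the plane at `v` and round to a fine grid. This labels the
triangular lattice by the vertices of `G`, with connected fibres, and with `v` as the label near
infinity. Lift geodesics of `G` from `v` to lattice walks. If for every lattice edge the loop formed
by the two lifts to its ends had few vertices on one of its sides, then the parity with which a loop
winds around its large side would be a closed cochain with a potential, and hence so would the
winding parity around a single lattice point for loops near infinity, which is absurd. So some loop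
has many vertices on both sides. The firefighters protect the two geodesics of this loop together
with the remaining neighbours of `v` on one side of it. They have the time to do so, since the fire
reaches the vertices of a geodesic one round at a time. When `deg v = 4`, there may be one neighbour
too many to protect; one of degree at most `5` is then sacrificed.

The edge count is Euler's inequality in homological form: the space of mod 2 edge sets is split
between the coboundaries of the vertices and the boundaries of the faces of the lattice model, and
each of these boundaries has at least four edges because `G` has no triangle.
-/

/-! ### Strategies from protection deadlines -/

section Strategy

variable {V : Type*} {G : SimpleGraph V}

lemma card_le_sn [Finite V] {b : ℕ → ℕ} {v : V} {P : ℕ → Set V} (hP : ValidStrategy G b v P)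
    {U : Finset V} (hU : ∀ t, ∀ z ∈ burnedSet G v P t, z ∉ U) : U.card ≤ sn G b v := by
  have hle : Nat.card {w : V | ∀ t, w ∉ burnedSet G v P t} ≤ sn G b v := by
    refine le_csSup ⟨Nat.card V, ?_⟩ ⟨P, hP, rfl⟩
    rintro m ⟨P, -, rfl⟩
    exact Finite.card_subtype_le _
  refine le_trans ?_ hle
  rw [← Set.ncard_coe_finset U, ← Nat.card_coe_set_eq]
  exact Nat.card_mono (Set.toFinite _) fun x hx t ht => hU t x ht hx

lemma exists_injOn_lt_mul {ι : Type*} (X : Finset ι) (D : ι → ℕ) (k : ℕ)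
    (h : ∀ t, (X.filter fun x => D x ≤ t).card ≤ k * t) :
    ∃ f : ι → ℕ, Set.InjOn f X ∧ ∀ x ∈ X, f x < k * D x := by
  classical
  obtain ⟨f, hf, hfD⟩ := (Finset.all_card_le_biUnion_card_iff_exists_injective
    fun x : X => Finset.range (k * D x)).1 fun A => by
      rcases A.eq_empty_or_nonempty with rfl | hA
      · simp
      obtain ⟨m, hm, hmax⟩ := A.exists_max_image (fun x => D x) hA
      calc A.card ≤ (X.filter fun x => D x ≤ D m).card :=
            Finset.card_le_card_of_injOn Subtype.val
              (fun x hx => by simpa using hmax x hx) Subtype.val_injective.injOn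
        _ ≤ k * D m := h _
        _ = (Finset.range (k * D m)).card := (Finset.card_range _).symm
        _ ≤ _ := Finset.card_le_card
            (Finset.subset_biUnion_of_mem (fun x : X => Finset.range (k * D x)) hm)
  refine ⟨fun x => if hx : x ∈ X then f ⟨x, hx⟩ else 0, ?_, ?_⟩
  · intro x hx y hy hxy
    rw [Finset.mem_coe] at hx hy
    simpa [hx, hy, hf.eq_iff] using hxy
  · intro x hx
    simpa [hx] using hfD ⟨x, hx⟩

lemma exists_schedule {ι : Type*} (X : Finset ι) (D : ι → ℕ) (k : ℕ)
    (h : ∀ t, (X.filter fun x => D x ≤ t).card ≤ k * t) :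
    ∃ r : ι → ℕ, (∀ x ∈ X, r x < D x) ∧ ∀ t, (X.filter fun x => r x = t).card ≤ k := by
  obtain ⟨f, hinj, hlt⟩ := exists_injOn_lt_mul X D k h
  have hk {x} (hx : x ∈ X) : 0 < k := Nat.pos_of_mul_pos_right ((Nat.zero_le _).trans_lt (hlt x hx))
  refine ⟨fun x => f x / k, fun x hx => Nat.div_lt_of_lt_mul (hlt x hx), fun t => ?_⟩
  calc (X.filter fun x => f x / k = t).card ≤ (Finset.Ico (t * k) (t * k + k)).card := by
        refine Finset.card_le_card_of_injOn f (fun x hx => ?_)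
          (hinj.mono (by simp [Set.subset_def]; tauto))
        obtain ⟨hxX, hxt⟩ := Finset.mem_filter.1 hx
        rw [Nat.div_eq_iff (hk hxX)] at hxt
        have := hk hxX
        simp only [Finset.coe_Ico, Set.mem_Ico]
        omega
    _ = k := by simp

/-- `D` bounds from below the time at which a vertex can catch fire, and `X` contains every vertex
of `U` that the fire can reach directly from outside `U`. -/
theorem card_le_sn_of_deadlines [Finite V] {v : V} {k : ℕ} {U X : Finset V} {D : V → ℕ}
    (hv : v ∉ U) (hD0 : D v = 0) (hD : ∀ y ∉ U, ∀ z, G.Adj y z → D z ≤ D y + 1)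
    (hX : ∀ y ∉ U, ∀ z ∈ U, G.Adj y z → z ∈ X) (hXU : X ⊆ U)
    (hcard : ∀ t, (X.filter fun x => D x ≤ t).card ≤ k * t) :
    U.card ≤ sn G (fun _ => k) v := by
  obtain ⟨r, hrD, hr⟩ := exists_schedule X D k hcard
  let P : ℕ → Set V := fun t => ↑(X.filter fun x => r x = t)
  have hburned : ∀ t, ∀ z ∈ burnedSet G v P t, z ∉ U ∧ D z ≤ t := by
    intro t
    induction t with
    | zero => rintro z rfl; exact ⟨hv, hD0.le⟩
    | succ t ih =>
      rintro z (hz | ⟨⟨u, hu, huz⟩, hzP⟩)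
      · exact ⟨(ih z hz).1, (ih z hz).2.trans t.le_succ⟩
      · obtain ⟨huU, hut⟩ := ih u hu
        have hDz := hD u huU z huz
        refine ⟨fun hzU => ?_, by omega⟩
        have hzX := hX u huU z hzU huz
        have := hrD z hzX
        exact hzP (r z) (by omega) (by simp [P, hzX])
  refine card_le_sn (P := P) (fun t => ⟨Finset.finite_toSet _, ?_, ?_⟩) fun t z hz =>
    (hburned t z hz).1
  · rw [Set.ncard_coe_finset]
    exact hr t
  · rw [Set.disjoint_left]
    intro x hx hxb
    exact (hburned t x hxb).1 (hXU (Finset.mem_filter.1 hx).1)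

end Strategy

/-! ### Saving the region enclosed by two geodesics -/

section Geodesics

variable {V : Type*} {G : SimpleGraph V} {v : V}

lemma dist_le_dist_add_one_of_adj (u : V) {y z : V} (h : G.Adj y z) :
    G.dist u z ≤ G.dist u y + 1 := by
  have := h.diff_dist_adj (u := u)
  omega

lemma card_filter_dist_Ico_le {P : Finset V} (hP : Set.InjOn (G.dist v) P) (a b : ℕ) :
    (P.filter fun z => a ≤ G.dist v z ∧ G.dist v z < b).card ≤ b - a := by
  rw [← Nat.card_Ico]
  refine Finset.card_le_card_of_injOn (G.dist v) ?_ (hP.mono (by simp [Set.subset_def]; tauto))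
  intro z hz
  simpa using (Finset.mem_filter.1 hz).2

variable [DecidableEq V] [Finite V]

/-- The fire enters `R` only through vertices of `C` and through neighbours of the sacrificed
vertices `K`. -/
theorem card_sdiff_le_sn_of_deadlines [DecidableRel G.Adj] {k : ℕ} {R K C : Finset V} {D : V → ℕ}
    (hv : v ∈ K) (hR : ∀ y z, G.Adj y z → z ∈ R → z ∉ C → y ∈ K ∨ y ∈ R) (hD0 : D v = 0)
    (hD : ∀ y ∉ R \ K, ∀ z, G.Adj y z → D z ≤ D y + 1)
    (hcard : ∀ t, (((R \ K).filter fun z => z ∈ C ∨ ∃ y ∈ K, G.Adj y z).filter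
      fun z => D z ≤ t).card ≤ k * t) :
    (R \ K).card ≤ sn G (fun _ => k) v := by
  refine card_le_sn_of_deadlines (by simp [hv]) hD0 hD ?_ (Finset.filter_subset _ _) hcard
  intro y hy z hz hyz
  refine Finset.mem_filter.2 ⟨hz, ?_⟩
  by_contra! hcon
  have hyK : y ∉ K := fun h => hcon.2 y h hyz
  have := hR y z hyz (Finset.mem_sdiff.1 hz).1 hcon.1
  exact hy (Finset.mem_sdiff.2 ⟨this.resolve_left hyK, hyK⟩)

theorem card_sdiff_singleton_le_sn (hconn : G.Connected) {P Q S N : Finset V}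
    (hP : Set.InjOn (G.dist v) P) (hQ : Set.InjOn (G.dist v) Q)
    (hS : ∀ y z, G.Adj y z → z ∈ S → y = v ∨ y ∈ P ∪ Q ∪ S) (hNcard : N.card ≤ 2)
    (hN : ∀ w ∈ P ∪ Q ∪ S, G.Adj v w → w ∈ N) :
    ((P ∪ Q ∪ S) \ {v}).card ≤ sn G (fun _ => 2) v := by
  classical
  refine card_sdiff_le_sn_of_deadlines (D := G.dist v) (C := P ∪ Q) (by simp) ?_ (by simp)
    (fun y _ z => dist_le_dist_add_one_of_adj v) fun t => ?_
  · intro y z hyz hz hzC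
    simpa using hS y z hyz ((Finset.mem_union.1 hz).resolve_left hzC)
  · let level (A : Finset V) := A.filter fun z => 2 ≤ G.dist v z ∧ G.dist v z < t + 1
    have hsub : ∀ z ∈ ((P ∪ Q ∪ S) \ {v}).filter fun z => z ∈ P ∪ Q ∨ ∃ y ∈ ({v} : Finset V),
        G.Adj y z, G.dist v z ≤ t → 0 < t ∧ z ∈ N ∪ (level P ∪ level Q) := by
      intro z hz hzt
      simp only [Finset.mem_filter, Finset.mem_sdiff, Finset.mem_singleton, exists_eq_left] at hz
      obtain ⟨⟨hzR, hzv⟩, hz⟩ := hz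
      have hpos := hconn.pos_dist_of_ne (Ne.symm hzv)
      refine ⟨by omega, ?_⟩
      by_cases hadj : G.Adj v z
      · exact Finset.mem_union_left _ (hN z hzR hadj)
      · have hdist := hconn.one_lt_dist_of_ne_of_not_adj (Ne.symm hzv) hadj
        simp only [level, Finset.mem_union, Finset.mem_filter] at hz ⊢
        have : 2 ≤ G.dist v z ∧ G.dist v z < t + 1 := by omega
        tauto
    rcases Nat.eq_zero_or_pos t with rfl | ht
    · simpa only [mul_zero, Nat.le_zero, Finset.card_eq_zero, Finset.filter_eq_empty_iff] using
        fun z hz hzt => (hsub z hz hzt).1.false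
    · have hle := Finset.card_le_card fun z hz =>
        (hsub z (Finset.mem_filter.1 hz).1 (Finset.mem_filter.1 hz).2).2
      have hPlevel := card_filter_dist_Ico_le hP 2 (t + 1)
      have hQlevel := card_filter_dist_Ico_le hQ 2 (t + 1)
      have := Finset.card_union_le N (level P ∪ level Q)
      have := Finset.card_union_le (level P) (level Q)
      simp only [level] at *
      omega

end Geodesics

section Pure

variable {V : Type*} {G : SimpleGraph V} {v p : V}

/-- Every geodesic from `v` to `z` leaves `v` through the neighbour `p`. -/
def PurelyThrough (G : SimpleGraph V) (v p z : V) : Prop :=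
  ∀ h, G.Adj v h → G.dist h z + 1 = G.dist v z → h = p

lemma PurelyThrough.of_adj {y z : V} (hz : PurelyThrough G v p z) (hyz : G.Adj y z)
    (hdist : G.dist v z = G.dist v y + 1) : PurelyThrough G v p y := by
  intro h hvh hh
  have hhz := dist_le_dist_add_one_of_adj h hyz
  have hvz := dist_le_dist_add_one_of_adj z hvh.symm
  rw [G.dist_comm (u := z), G.dist_comm (u := z)] at hvz
  exact hz h hvh (by omega)

open Classical in
/-- A lower bound for the time at which the fire started at `v` can reach `z` once the vertex `p`
is protected: if `z` is reached purely through `p`, it burns at least one round late. -/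
noncomputable def delayedDist (G : SimpleGraph V) (v p z : V) : ℕ :=
  G.dist v z + if z ≠ v ∧ z ≠ p ∧ PurelyThrough G v p z then 1 else 0

lemma delayedDist_self : delayedDist G v p v = 0 := by
  simp [delayedDist]

lemma dist_le_delayedDist (z : V) : G.dist v z ≤ delayedDist G v p z :=
  Nat.le_add_right _ _

lemma PurelyThrough.delayedDist_eq {z : V} (hz : PurelyThrough G v p z) (hzv : z ≠ v)
    (hzp : z ≠ p) : delayedDist G v p z = G.dist v z + 1 := by
  rw [delayedDist, if_pos ⟨hzv, hzp, hz⟩]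

lemma delayedDist_le_add_one {y z : V} (hyp : y ≠ p) (hyz : G.Adj y z) :
    delayedDist G v p z ≤ delayedDist G v p y + 1 := by
  have hdist := dist_le_dist_add_one_of_adj v hyz
  by_cases hz : z ≠ v ∧ z ≠ p ∧ PurelyThrough G v p z
  · obtain ⟨hzv, hzp, hpure⟩ := hz
    rw [hpure.delayedDist_eq hzv hzp]
    rcases hdist.lt_or_eq with hlt | heq
    · have := dist_le_delayedDist (G := G) (v := v) (p := p) y
      omega
    · have hyv : y ≠ v := by
        rintro rfl
        exact hzp (hpure z hyz (by simp [heq]))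
      rw [(hpure.of_adj hyz heq).delayedDist_eq hyv hyp]
      omega
  · rw [delayedDist, if_neg hz]
    exact hdist.trans (Nat.add_le_add_right (dist_le_delayedDist y) 1)

variable [DecidableEq V] {q r : V} {P Q S B : Finset V}

lemma cases_of_mem_pure_boundary (hconn : G.Connected) (hvp : G.Adj v p)
    (hpure : ∀ z ∈ P, PurelyThrough G v p z) (hPQ : ∀ w ∈ P ∪ Q, G.Adj v w → w = p ∨ w = q)
    (hS : ∀ w ∈ S, G.Adj v w → w = r) (hQ₂ : ∀ z ∈ Q, G.dist v z = 2 → G.Adj q z)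
    (hB : ∀ w ∈ Q ∪ S, w ≠ v → G.Adj q w → w ∈ B) {z : V} (hzR : z ∈ P ∪ Q ∪ S) (hzv : z ≠ v)
    (hzq : z ≠ q) (hz : z ∈ P ∪ Q ∨ G.Adj v z ∨ G.Adj q z) :
    G.dist v z = 1 ∧ (z = p ∨ z = r) ∨ 2 ≤ G.dist v z ∧
      (z ∈ B ∨ (z ∈ P ∧ delayedDist G v p z = G.dist v z + 1) ∨ (z ∈ Q ∧ 3 ≤ G.dist v z)) := by
  by_cases hadj : G.Adj v z
  · refine Or.inl ⟨SimpleGraph.dist_eq_one_iff_adj.2 hadj, ?_⟩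
    rcases Finset.mem_union.1 hzR with h | h
    · exact Or.inl ((hPQ z h hadj).resolve_right hzq)
    · exact Or.inr (hS z h hadj)
  · have hdist := hconn.one_lt_dist_of_ne_of_not_adj hzv.symm hadj
    have hzp : z ≠ p := by rintro rfl; exact hadj hvp
    refine Or.inr ⟨hdist, ?_⟩
    by_cases hzP : z ∈ P
    · exact Or.inr (Or.inl ⟨hzP, (hpure z hzP).delayedDist_eq hzv hzp⟩)
    by_cases hzQ : z ∈ Q
    · rcases Nat.lt_or_eq_of_le hdist with h | h
      · exact Or.inr (Or.inr ⟨hzQ, h⟩)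
      · exact Or.inl (hB z (by simp [hzQ]) hzv (hQ₂ z hzQ h.symm))
    · simp only [Finset.mem_union] at hzR hz
      exact Or.inl (hB z (by simp; tauto) hzv (by tauto))

/-- The neighbour `q` is sacrificed: the first round protects `p` and `r`, the second one the
vertices of `B`, and the round gained on the pure side `P` pays for this. -/
theorem card_sdiff_pair_le_sn [Finite V] (hconn : G.Connected) (hP : Set.InjOn (G.dist v) P)
    (hQ : Set.InjOn (G.dist v) Q) (hS : ∀ y z, G.Adj y z → z ∈ S → y = v ∨ y ∈ P ∪ Q ∪ S)
    (hpP : p ∈ P) (hvp : G.Adj v p) (hpq : p ≠ q)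
    (hpure : ∀ z ∈ P, PurelyThrough G v p z) (hPQ : ∀ w ∈ P ∪ Q, G.Adj v w → w = p ∨ w = q)
    (hSr : ∀ w ∈ S, G.Adj v w → w = r) (hQ₂ : ∀ z ∈ Q, G.dist v z = 2 → G.Adj q z)
    (hBcard : B.card ≤ 2) (hB : ∀ w ∈ Q ∪ S, w ≠ v → G.Adj q w → w ∈ B) :
    ((P ∪ Q ∪ S) \ {v, q}).card ≤ sn G (fun _ => 2) v := by
  classical
  refine card_sdiff_le_sn_of_deadlines (D := delayedDist G v p) (C := P ∪ Q) (by simp) ?_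
    delayedDist_self (fun y hy z hyz => delayedDist_le_add_one ?_ hyz) fun t => ?_
  · intro y z hyz hz hzC
    have := hS y z hyz ((Finset.mem_union.1 hz).resolve_left hzC)
    simp only [Finset.mem_insert, Finset.mem_singleton]
    tauto
  · rintro rfl
    exact hy (by simp [hpP, hpq, hvp.ne'])
  let P' := P.filter fun z => 2 ≤ G.dist v z ∧ G.dist v z < t
  let Q' := Q.filter fun z => 3 ≤ G.dist v z ∧ G.dist v z < t + 1
  let B' : Finset V := if t = 1 then ∅ else B
  have hsub : ∀ z ∈ ((P ∪ Q ∪ S) \ {v, q}).filter fun z => z ∈ P ∪ Q ∨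
      ∃ y ∈ ({v, q} : Finset V), G.Adj y z, delayedDist G v p z ≤ t →
        0 < t ∧ z ∈ ({p, r} ∪ B') ∪ (P' ∪ Q') := by
    intro z hz hzt
    simp only [Finset.mem_filter, Finset.mem_sdiff, Finset.mem_insert, Finset.mem_singleton,
      exists_eq_or_imp, exists_eq_left, not_or] at hz
    obtain ⟨⟨hzR, hzv, hzq⟩, hz⟩ := hz
    have hle := (dist_le_delayedDist z).trans hzt
    simp only [Finset.mem_union, Finset.mem_insert, Finset.mem_singleton, P', Q', B',
      Finset.mem_filter]
    rcases cases_of_mem_pure_boundary hconn hvp hpure hPQ hSr hQ₂ hB hzR hzv hzq hz with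
      ⟨hdist, hz⟩ | ⟨hdist, hzB | ⟨hzP, hdelay⟩ | ⟨hzQ, hdist⟩⟩
    · exact ⟨by omega, by tauto⟩
    · exact ⟨by omega, Or.inl (Or.inr (by rwa [if_neg (by omega)]))⟩
    · exact ⟨by omega, Or.inr (Or.inl ⟨hzP, by omega, by omega⟩)⟩
    · exact ⟨by omega, Or.inr (Or.inr ⟨hzQ, by omega, by omega⟩)⟩
  rcases Nat.eq_zero_or_pos t with rfl | ht
  · simpa only [mul_zero, Nat.le_zero, Finset.card_eq_zero, Finset.filter_eq_empty_iff] using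
      fun z hz hzt => (hsub z hz hzt).1.false
  · have hle := Finset.card_le_card fun z hz =>
      (hsub z (Finset.mem_filter.1 hz).1 (Finset.mem_filter.1 hz).2).2
    have hP' : P'.card ≤ t - 2 := card_filter_dist_Ico_le hP 2 t
    have hQ' : Q'.card ≤ t + 1 - 3 := card_filter_dist_Ico_le hQ 3 (t + 1)
    have hB' : B'.card ≤ if t = 1 then 0 else 2 := by
      simp only [B']
      split_ifs <;> simp [hBcard]
    have := Finset.card_union_le ({p, r} ∪ B') (P' ∪ Q')
    have := Finset.card_union_le {p, r} B'
    have := Finset.card_union_le P' Q'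
    have : ({p, r} : Finset V).card ≤ 2 := Finset.card_le_two
    split_ifs at hB' <;> omega

end Pure

/-! ### Cochains and the triangular lattice -/

section WalkSum

variable {α : Type*} {H : SimpleGraph α} {p q r s t : α}

/-- The sum of a cochain `c`, a function of oriented edges, along a walk. -/
def walkSum {A : Type*} [AddMonoid A] (c : α → α → A) (w : H.Walk p q) : A :=
  (w.darts.map fun d => c d.fst d.snd).sum

section AddMonoid

variable {A : Type*} [AddMonoid A] {c d : α → α → A}

@[simp] lemma walkSum_nil : walkSum c (.nil : H.Walk p p) = 0 := rfl

@[simp] lemma walkSum_cons (h : H.Adj p q) (w : H.Walk q r) :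
    walkSum c (.cons h w) = c p q + walkSum c w := by
  simp [walkSum]

lemma walkSum_append (w : H.Walk p q) (w' : H.Walk q r) :
    walkSum c (w.append w') = walkSum c w + walkSum c w' := by
  simp [walkSum]

lemma walkSum_congr (w : H.Walk p q)
    (h : ∀ a b, H.Adj a b → a ∈ w.support → b ∈ w.support → c a b = d a b) :
    walkSum c w = walkSum d w :=
  congrArg List.sum <| List.map_congr_left fun e he =>
    h _ _ e.adj (w.dart_fst_mem_support_of_mem_darts he) (w.dart_snd_mem_support_of_mem_darts he)

lemma walkSum_eq_zero (w : H.Walk p q)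
    (h : ∀ a b, H.Adj a b → a ∈ w.support → b ∈ w.support → c a b = 0) : walkSum c w = 0 :=
  (walkSum_congr w h).trans (by simp [walkSum])

end AddMonoid

section AddCommMonoid

variable {A : Type*} [AddCommMonoid A] {c d : α → α → A}

lemma walkSum_reverse (hc : ∀ a b, c a b = c b a) (w : H.Walk p q) :
    walkSum c w.reverse = walkSum c w := by
  induction w with
  | nil => rfl
  | cons h w ih => simp [walkSum_append, ih, hc, add_comm]

lemma walkSum_add (w : H.Walk p q) :
    walkSum (fun a b => c a b + d a b) w = walkSum c w + walkSum d w := by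
  simp [walkSum, List.sum_map_add]

end AddCommMonoid

lemma walkSum_finsetSum {ι R : Type*} [Semiring R] (S : Finset ι) (k : ι → R)
    (c : ι → α → α → R) (w : H.Walk p q) :
    walkSum (fun a b => ∑ i ∈ S, k i * c i a b) w = ∑ i ∈ S, k i * walkSum (c i) w := by
  induction w with
  | nil => simp
  | cons h w ih => simp [ih, mul_add, Finset.sum_add_distrib]

lemma walkSum_coboundary {A : Type*} [Ring A] [CharP A 2] (f : α → A) (w : H.Walk p q) :
    walkSum (fun a b => f a + f b) w = f p + f q := by
  induction w with
  | nil => simp [CharTwo.add_self_eq_zero]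
  | cons h w ih =>
    rw [walkSum_cons, ih, add_assoc, CharTwo.add_cancel_left]

lemma exists_walk_of_preconnected_induce {S : Set α} (hS : (H.induce S).Preconnected)
    (hp : p ∈ S) (hq : q ∈ S) : ∃ w : H.Walk p q, ∀ x ∈ w.support, x ∈ S := by
  obtain ⟨w⟩ := hS ⟨p, hp⟩ ⟨q, hq⟩
  refine ⟨w.map (SimpleGraph.Embedding.induce S).toHom, fun x hx => ?_⟩
  obtain ⟨y, -, rfl⟩ := List.mem_map.1 (SimpleGraph.Walk.support_map _ w ▸ hx)
  exact y.2

lemma eq_of_walk {β : Sort*} {f : α → β} {S : Set α}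
    (h : ∀ a b, H.Adj a b → a ∈ S → b ∈ S → f a = f b) (w : H.Walk p q)
    (hw : ∀ x ∈ w.support, x ∈ S) : f p = f q := by
  induction w with
  | nil => rfl
  | cons hadj w ih =>
    rw [h _ _ hadj (hw _ (by simp)) (hw _ (by simp))]
    exact ih fun x hx => hw x (by simp [hx])

/-- The closed walk formed by an edge and two walks leading to its ends. -/
def fundamentalLoop (Q : H.Walk p q) (h : H.Adj q r) (Q' : H.Walk p r) : H.Walk p p :=
  Q.append (.cons h Q'.reverse)

lemma walkSum_fundamentalLoop {A : Type*} [AddCommMonoid A] {c : α → α → A}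
    (hc : ∀ a b, c a b = c b a) (Q : H.Walk p q) (h : H.Adj q r) (Q' : H.Walk p r) :
    walkSum c (fundamentalLoop Q h Q') = walkSum c Q + c q r + walkSum c Q' := by
  simp [fundamentalLoop, walkSum_append, walkSum_reverse hc, add_assoc]

lemma mem_support_fundamentalLoop (Q : H.Walk p q) (h : H.Adj q r) (Q' : H.Walk p r) (z : α) :
    z ∈ (fundamentalLoop Q h Q').support ↔ z ∈ Q.support ∨ z ∈ Q'.support := by
  have := Q.end_mem_support
  simp only [fundamentalLoop, SimpleGraph.Walk.mem_support_append_iff,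
    SimpleGraph.Walk.support_cons, List.mem_cons, SimpleGraph.Walk.support_reverse,
    List.mem_reverse]
  grind

/-- The mod 2 indicator cochain of the unoriented edge `s(s, t)`. -/
def edgeIndicator [DecidableEq α] (s t p q : α) : ZMod 2 :=
  if s(p, q) = s(s, t) then 1 else 0

variable [DecidableEq α]

lemma edgeIndicator_comm (s t p q : α) : edgeIndicator s t p q = edgeIndicator s t q p := by
  simp [edgeIndicator, Sym2.eq_swap]

lemma edgeIndicator_swap (s t p q : α) : edgeIndicator s t p q = edgeIndicator t s p q := by
  simp [edgeIndicator, Sym2.eq_swap]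

lemma walkSum_edgeIndicator_eq_zero (C : H.Walk p q) (h : s ∉ C.support ∨ t ∉ C.support) :
    walkSum (edgeIndicator s t) C = 0 := by
  refine walkSum_eq_zero C fun a b _ ha hb => if_neg ?_
  rw [Sym2.eq_iff]
  rintro (⟨rfl, rfl⟩ | ⟨rfl, rfl⟩) <;> tauto

end WalkSum

/-- The triangular lattice: the square grid `ℤ × ℤ` together with one diagonal of each square. -/
def triLattice : SimpleGraph (ℤ × ℤ) where
  Adj p q := (q.1 = p.1 + 1 ∧ q.2 = p.2) ∨ (q.1 = p.1 ∧ q.2 = p.2 + 1) ∨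
    (q.1 = p.1 + 1 ∧ q.2 = p.2 + 1) ∨ (p.1 = q.1 + 1 ∧ p.2 = q.2) ∨
    (p.1 = q.1 ∧ p.2 = q.2 + 1) ∨ (p.1 = q.1 + 1 ∧ p.2 = q.2 + 1)
  symm := ⟨by intro p q h; omega⟩
  loopless := ⟨by intro p h; omega⟩

/-- The lattice points outside the box `[-m, m]²`. -/
def outsideBox (m : ℤ) : Set (ℤ × ℤ) := {x | m < |x.1| ∨ m < |x.2|}

section Lattice

variable {g g' p q s t τ : ℤ × ℤ}

lemma triLattice_adj : triLattice.Adj p q ↔ (q.1 = p.1 + 1 ∧ q.2 = p.2) ∨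
    (q.1 = p.1 ∧ q.2 = p.2 + 1) ∨ (q.1 = p.1 + 1 ∧ q.2 = p.2 + 1) ∨
    (p.1 = q.1 + 1 ∧ p.2 = q.2) ∨ (p.1 = q.1 ∧ p.2 = q.2 + 1) ∨
    (p.1 = q.1 + 1 ∧ p.2 = q.2 + 1) := Iff.rfl

lemma triLattice_adj_right (x y : ℤ) : triLattice.Adj (x, y) (x + 1, y) := by
  simp [triLattice_adj]

lemma triLattice_adj_up (x y : ℤ) : triLattice.Adj (x, y) (x, y + 1) := by
  simp [triLattice_adj]

lemma triLattice_adj_diag (x y : ℤ) : triLattice.Adj (x, y) (x + 1, y + 1) := by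
  simp [triLattice_adj]

lemma triLattice_adj_induction {motive : ∀ s t, triLattice.Adj s t → Prop}
    (right : ∀ x y, motive (x, y) (x + 1, y) (triLattice_adj_right x y))
    (up : ∀ x y, motive (x, y) (x, y + 1) (triLattice_adj_up x y))
    (diag : ∀ x y, motive (x, y) (x + 1, y + 1) (triLattice_adj_diag x y))
    (symm : ∀ s t h, motive s t h → motive t s h.symm) (h : triLattice.Adj s t) :
    motive s t h := by
  obtain ⟨a, b⟩ := s
  obtain ⟨c, d⟩ := t
  have h' := h
  rw [triLattice_adj] at h'
  dsimp only at h'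
  obtain ⟨rfl, rfl⟩ | ⟨rfl, rfl⟩ | ⟨rfl, rfl⟩ | ⟨rfl, rfl⟩ | ⟨rfl, rfl⟩ | ⟨rfl, rfl⟩ := h'
  · exact right _ _
  · exact up _ _
  · exact diag _ _
  · exact symm _ _ (triLattice_adj_right _ _) (right _ _)
  · exact symm _ _ (triLattice_adj_up _ _) (up _ _)
  · exact symm _ _ (triLattice_adj_diag _ _) (diag _ _)

/-- The third vertex of the lattice triangle to the left of the dart from `s` to `t`. -/
def apex (s t : ℤ × ℤ) : ℤ × ℤ := (s.2 + t.1 - t.2, s.2 + t.1 - s.1)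

@[simp] lemma apex_apex_right (s t : ℤ × ℤ) : apex t (apex s t) = s := by
  ext <;> simp only [apex] <;> ring

@[simp] lemma apex_apex_left (s t : ℤ × ℤ) : apex (apex s t) s = t := by
  ext <;> simp only [apex] <;> ring

@[simp] lemma apex_right (x y : ℤ) : apex (x, y) (x + 1, y) = (x + 1, y + 1) := by
  ext <;> simp only [apex] <;> ring

@[simp] lemma apex_diag (x y : ℤ) : apex (x, y) (x + 1, y + 1) = (x, y + 1) := by
  ext <;> simp only [apex] <;> ring

lemma adj_apex_left (h : triLattice.Adj s t) : triLattice.Adj s (apex s t) := by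
  rw [triLattice_adj] at *
  simp only [apex]
  omega

lemma adj_apex_right (h : triLattice.Adj s t) : triLattice.Adj t (apex s t) := by
  rw [triLattice_adj] at *
  simp only [apex]
  omega

lemma exists_iterate_apex_eq (h : triLattice.Adj g t) :
    ∃ k, (apex g)^[k] (g.1 + 1, g.2) = t := by
  have key : ∃ k < 6, (apex g)^[k] (g.1 + 1, g.2) = t := by
    rw [triLattice_adj] at h
    obtain h | h | h | h | h | h := h
    on_goal 1 => use 0
    on_goal 2 => use 2
    on_goal 3 => use 1
    on_goal 4 => use 3
    on_goal 5 => use 5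
    on_goal 6 => use 4
    all_goals refine ⟨by norm_num, ?_⟩; ext <;> simp only [Function.iterate_succ,
      Function.iterate_zero, Function.comp_apply, id_eq, apex] <;> omega
  exact key.imp fun _ => And.right

/-- A label for the lattice triangle to the left of the dart from `s` to `t`. With `y` the height
of its lowest vertices, the label is `(2 * x + 2, y)` for the triangle `(x, y)`, `(x + 1, y)`,
`(x + 1, y + 1)`, and `(2 * x + 1, y)` for `(x, y)`, `(x + 1, y + 1)`, `(x, y + 1)`. -/
def leftFace (s t : ℤ × ℤ) : ℤ × ℤ :=
  ((2 * (s.1 + t.1 + (apex s t).1) + 3) / 3, min s.2 (min t.2 (apex s t).2))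

lemma leftFace_rotate (s t : ℤ × ℤ) : leftFace t (apex s t) = leftFace s t := by
  ext <;> simp only [leftFace, apex_apex_right]
  · congr 2
    ring
  · omega

lemma leftFace_rotate' (s t : ℤ × ℤ) : leftFace (apex s t) s = leftFace s t := by
  simpa only [apex_apex_right, leftFace_rotate] using leftFace_rotate t (apex s t)

@[simp] lemma leftFace_right (x y : ℤ) : leftFace (x, y) (x + 1, y) = (2 * x + 2, y) := by
  ext <;> simp only [leftFace, apex] <;> omega

@[simp] lemma leftFace_right_symm (x y : ℤ) :
    leftFace (x + 1, y) (x, y) = (2 * x + 1, y - 1) := by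
  ext <;> simp only [leftFace, apex] <;> omega

@[simp] lemma leftFace_up (x y : ℤ) : leftFace (x, y) (x, y + 1) = (2 * x, y) := by
  ext <;> simp only [leftFace, apex] <;> omega

@[simp] lemma leftFace_up_symm (x y : ℤ) : leftFace (x, y + 1) (x, y) = (2 * x + 1, y) := by
  ext <;> simp only [leftFace, apex] <;> omega

@[simp] lemma leftFace_diag (x y : ℤ) : leftFace (x, y) (x + 1, y + 1) = (2 * x + 1, y) := by
  ext <;> simp only [leftFace, apex] <;> omega

@[simp] lemma leftFace_diag_symm (x y : ℤ) :
    leftFace (x + 1, y + 1) (x, y) = (2 * x + 2, y) := by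
  ext <;> simp only [leftFace, apex] <;> omega

/-- The mod 2 cochain recording the lattice edges that cross the horizontal ray going right from
the triangle labelled `τ`. -/
def rayCochain (τ p q : ℤ × ℤ) : ZMod 2 :=
  if s(p.2, q.2) = s(τ.2, τ.2 + 1) ∧ τ.1 ≤ p.1 + q.1 then 1 else 0

lemma rayCochain_comm (τ p q : ℤ × ℤ) : rayCochain τ p q = rayCochain τ q p := by
  simp [rayCochain, Sym2.eq_swap, add_comm]

/-- The potential is nonzero only when `s` and `t` are at the same height: then it indicates the
part of their row lying to the right of `s`. -/
lemma exists_rayCochain_add_rayCochain_eq (h : triLattice.Adj s t) :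
    ∃ f : ℤ × ℤ → ZMod 2, ∀ p q, triLattice.Adj p q →
      rayCochain (leftFace s t) p q + rayCochain (leftFace t s) p q =
        f p + f q + edgeIndicator s t p q := by
  induction h using triLattice_adj_induction with
  | right x y =>
    refine ⟨fun p => if p.2 = y ∧ x < p.1 then 1 else 0, fun p q hpq => ?_⟩
    induction hpq using triLattice_adj_induction with
    | symm s t _ h => simpa [rayCochain_comm _ t, edgeIndicator_comm _ _ t, add_comm] using h
    | _ a b =>
      simp only [rayCochain, edgeIndicator, leftFace_right, leftFace_right_symm, Sym2.eq_iff,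
        Prod.mk.injEq]
      split_ifs <;> first | rfl | omega
  | up x y =>
    refine ⟨fun _ => 0, fun p q hpq => ?_⟩
    induction hpq using triLattice_adj_induction with
    | symm s t _ h => simpa [rayCochain_comm _ t, edgeIndicator_comm _ _ t, add_comm] using h
    | _ a b =>
      simp only [rayCochain, edgeIndicator, leftFace_up, leftFace_up_symm, Sym2.eq_iff,
        Prod.mk.injEq]
      split_ifs <;> first | rfl | omega
  | diag x y =>
    refine ⟨fun _ => 0, fun p q hpq => ?_⟩
    induction hpq using triLattice_adj_induction with
    | symm s t _ h => simpa [rayCochain_comm _ t, edgeIndicator_comm _ _ t, add_comm] using h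
    | _ a b =>
      simp only [rayCochain, edgeIndicator, leftFace_diag, leftFace_diag_symm, Sym2.eq_iff,
        Prod.mk.injEq]
      split_ifs <;> first | rfl | omega
  | symm s t _ h =>
    obtain ⟨f, hf⟩ := h
    exact ⟨f, fun p q hpq => by rw [add_comm, hf p q hpq, edgeIndicator_swap]⟩

/-- The parity with which `C` winds around the lattice triangle labelled `τ`. -/
def faceWinding (τ : ℤ × ℤ) (C : triLattice.Walk p q) : ZMod 2 := walkSum (rayCochain τ) C

/-- The mod 2 cochain recording the lattice edges that cross the horizontal ray going right from
the triangle to the upper right of `g`. -/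
def pointCochain (g : ℤ × ℤ) : ℤ × ℤ → ℤ × ℤ → ZMod 2 := rayCochain (leftFace g (g.1 + 1, g.2))

/-- The parity with which `C` winds around the lattice point `g`. -/
def pointWinding (g : ℤ × ℤ) (C : triLattice.Walk p q) : ZMod 2 := walkSum (pointCochain g) C

lemma faceWinding_add_faceWinding (h : triLattice.Adj s t) (C : triLattice.Walk p p) :
    faceWinding (leftFace s t) C + faceWinding (leftFace t s) C =
      walkSum (edgeIndicator s t) C := by
  obtain ⟨f, hf⟩ := exists_rayCochain_add_rayCochain_eq h
  rw [faceWinding, faceWinding, ← walkSum_add, walkSum_congr C fun a b hab _ _ => hf a b hab,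
    walkSum_add, walkSum_coboundary, CharTwo.add_self_eq_zero, zero_add]

lemma faceWinding_apex (h : triLattice.Adj g t) (C : triLattice.Walk p p) (hg : g ∉ C.support) :
    faceWinding (leftFace g (apex g t)) C = faceWinding (leftFace g t) C := by
  have := faceWinding_add_faceWinding (adj_apex_left h) C
  rwa [walkSum_edgeIndicator_eq_zero C (.inl hg), leftFace_rotate', CharTwo.add_eq_zero] at this

lemma faceWinding_eq_pointWinding (h : triLattice.Adj g t) (C : triLattice.Walk p p)
    (hg : g ∉ C.support) : faceWinding (leftFace g t) C = pointWinding g C := by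
  have key (k : ℕ) : triLattice.Adj g ((apex g)^[k] (g.1 + 1, g.2)) ∧
      faceWinding (leftFace g ((apex g)^[k] (g.1 + 1, g.2))) C = pointWinding g C := by
    induction k with
    | zero => exact ⟨triLattice_adj_right _ _, rfl⟩
    | succ k ih =>
      rw [Function.iterate_succ_apply']
      exact ⟨adj_apex_left ih.1, (faceWinding_apex ih.1 C hg).trans ih.2⟩
  obtain ⟨k, rfl⟩ := exists_iterate_apex_eq h
  exact (key k).2

lemma pointWinding_eq_of_adj (h : triLattice.Adj g g') (C : triLattice.Walk p p)
    (hg : g ∉ C.support) (hg' : g' ∉ C.support) : pointWinding g C = pointWinding g' C := by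
  rw [← faceWinding_eq_pointWinding h C hg,
    ← faceWinding_eq_pointWinding (adj_apex_right h) C hg', leftFace_rotate]

lemma pointWinding_eq_of_walk (C : triLattice.Walk p p) (w : triLattice.Walk g g')
    (h : ∀ x ∈ w.support, x ∉ C.support) : pointWinding g C = pointWinding g' C :=
  eq_of_walk (S := {x | x ∉ C.support})
    (fun _ _ hab ha hb => pointWinding_eq_of_adj hab C ha hb) w h

lemma pointCochain_closed (h : triLattice.Adj s t) (hs : g ≠ s) (ht : g ≠ t)
    (ha : g ≠ apex s t) :
    pointCochain g s t + pointCochain g t (apex s t) + pointCochain g s (apex s t) = 0 := by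
  obtain ⟨x, y⟩ := g
  obtain ⟨a, b⟩ := s
  obtain ⟨c, d⟩ := t
  simp only [triLattice_adj, apex, ne_eq, Prod.mk.injEq] at h hs ht ha
  simp only [pointCochain, leftFace_right, rayCochain, apex, Sym2.eq_iff]
  obtain ⟨rfl, rfl⟩ | ⟨rfl, rfl⟩ | ⟨rfl, rfl⟩ | ⟨rfl, rfl⟩ | ⟨rfl, rfl⟩ | ⟨rfl, rfl⟩ := h <;>
  split_ifs <;> first | rfl | omega

end Lattice

lemma exists_int_antideriv {A : Type*} [AddCommGroup A] (f : ℤ → A) :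
    ∃ F : ℤ → A, F 0 = 0 ∧ ∀ n, F (n + 1) = F n + f n := by
  refine ⟨fun n => Int.inductionOn' n 0 0 (fun k _ a => a + f k) fun k _ a => a - f (k - 1),
    Int.inductionOn'_self, fun n => ?_⟩
  obtain hn | hn := le_or_gt 0 n
  · exact Int.inductionOn'_add_one hn
  · have := Int.inductionOn'_sub_one (motive := fun _ => A) (zero := 0)
      (succ := fun k _ a => a + f k) (pred := fun k _ a => a - f (k - 1)) (b := 0) (z := n + 1)
      (by omega)
    simp only [add_sub_cancel_right] at this
    simp only [this, sub_add_cancel]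

theorem exists_eq_coboundary_of_closed (c : ℤ × ℤ → ℤ × ℤ → ZMod 2)
    (hsymm : ∀ p q, triLattice.Adj p q → c p q = c q p)
    (hclosed : ∀ s t, triLattice.Adj s t → c s t + c t (apex s t) + c s (apex s t) = 0) :
    ∃ f : ℤ × ℤ → ZMod 2, ∀ p q, triLattice.Adj p q → c p q = f p + f q := by
  obtain ⟨A, -, hA⟩ := exists_int_antideriv fun x => c (x, 0) (x + 1, 0)
  choose B hB0 hB using fun x => exists_int_antideriv fun y => c (x, y) (x, y + 1)
  have upper (x y : ℤ) :
      c (x, y) (x + 1, y + 1) + c (x, y + 1) (x + 1, y + 1) + c (x, y) (x, y + 1) = 0 := by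
    simpa [hsymm _ _ (triLattice_adj_right x (y + 1)), add_comm] using
      hclosed _ _ (triLattice_adj_diag x y)
  have lower (x y : ℤ) :
      c (x, y) (x + 1, y) + c (x + 1, y) (x + 1, y + 1) + c (x, y) (x + 1, y + 1) = 0 := by
    simpa [add_comm] using hclosed _ _ (triLattice_adj_right x y)
  have up (x y : ℤ) : c (x, y) (x, y + 1) = (A x + B x y) + (A x + B x (y + 1)) := by
    grind
  have right (x y : ℤ) : c (x, y) (x + 1, y) = (A x + B x y) + (A (x + 1) + B (x + 1) y) := by
    have step (y : ℤ) : c (x, y + 1) (x + 1, y + 1) + (B x (y + 1) + B (x + 1) (y + 1)) =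
        c (x, y) (x + 1, y) + (B x y + B (x + 1) y) := by
      grind
    have all (y : ℤ) : c (x, y) (x + 1, y) + (B x y + B (x + 1) y) = A x + A (x + 1) := by
      induction y with
      | zero => grind
      | succ k ih => rw [step, ih]
      | pred k ih => rw [← ih, ← step, sub_add_cancel]
    grind
  refine ⟨fun p => A p.1 + B p.1 p.2, fun p q hpq => ?_⟩
  induction hpq using triLattice_adj_induction with
  | right x y => exact right x y
  | up x y => exact up x y
  | diag x y => grind
  | symm s t h ih => rw [← hsymm _ _ h, ih, add_comm]

lemma eq_of_forall_eq_add_one {β : Type*} (F : ℤ → β) {a b : ℤ} (hab : a ≤ b)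
    (h : ∀ n, a ≤ n → n < b → F n = F (n + 1)) : F a = F b := by
  induction b, hab using Int.leInduction with
  | base => rfl
  | succ n hn ih => rw [ih fun m h₁ h₂ => h m h₁ (by omega), h n hn (by omega)]

/-- A potential would be constant along a large rectangle around `g`, except for one jump. -/
lemma not_exact_pointCochain_outsideBox (m : ℤ) (g : ℤ × ℤ) (φ : ℤ × ℤ → ZMod 2) :
    ¬ ∀ p ∈ outsideBox m, ∀ q ∈ outsideBox m, triLattice.Adj p q →
      pointCochain g p q = φ p + φ q := by
  intro hφ
  obtain ⟨x, y⟩ := g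
  obtain ⟨N, hm, hx, hx', hy, hy'⟩ : ∃ N : ℤ, |m| < N ∧ -N < x ∧ x < N ∧ -N < y ∧ y + 1 < N :=
    ⟨|m| + |x| + |y| + 2, by grind, by grind, by grind, by grind, by grind⟩
  have const {p q} (hpq : triLattice.Adj p q) (hp : |p.1| = N ∧ |q.1| = N ∨ |p.2| = N ∧ |q.2| = N)
      (h : rayCochain (2 * x + 2, y) p q = 0) : φ p = φ q := by
    have := hφ p (by grind [outsideBox]) q (by grind [outsideBox]) hpq
    rwa [pointCochain, leftFace_right, h, eq_comm, CharTwo.add_eq_zero] at this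
  have row (b : ℤ) (hb : |b| = N) : φ (-N, b) = φ (N, b) :=
    eq_of_forall_eq_add_one (fun a => φ (a, b)) (by omega) fun n _ _ =>
      const (triLattice_adj_right n b) (.inr ⟨hb, hb⟩) (if_neg (by simp only [Sym2.eq_iff]; omega))
  have column (a b b' : ℤ) (ha : |a| = N) (hb : b ≤ b') (h : a = -N ∨ b' ≤ y ∨ y < b) :
      φ (a, b) = φ (a, b') :=
    eq_of_forall_eq_add_one (fun b => φ (a, b)) hb fun n _ _ =>
      const (triLattice_adj_up a n) (.inl ⟨ha, ha⟩) (if_neg (by simp only [Sym2.eq_iff]; omega))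
  have habs : |N| = N := abs_of_nonneg (by grind)
  have habs' : |-N| = N := by rw [abs_neg, habs]
  have jump := hφ (N, y) (by grind [outsideBox]) (N, y + 1) (by grind [outsideBox])
    (triLattice_adj_up N y)
  have around : φ (N, y) = φ (N, y + 1) := calc
    φ (N, y) = φ (N, -N) := (column N (-N) y habs (by omega) (by simp)).symm
    _ = φ (-N, -N) := (row (-N) habs').symm
    _ = φ (-N, N) := column (-N) (-N) N habs' (by omega) (by simp)
    _ = φ (N, N) := row N habs
    _ = φ (N, y + 1) := (column N (y + 1) N habs (by omega) (by simp)).symm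
  rw [around, CharTwo.add_self_eq_zero, pointCochain, leftFace_right, rayCochain,
    if_pos ⟨rfl, by dsimp only; omega⟩] at jump
  exact one_ne_zero jump

/-! ### Lattice models and the separator lemma -/

/-- A model in the triangular lattice of the plane graph `G`, with `v` at infinity: the regions of
the model, one for each vertex, are the fibres of `label`. -/
structure LatticeModel {V : Type*} (G : SimpleGraph V) (v : V) where
  label : ℤ × ℤ → V
  surjective : Function.Surjective label
  fibre_preconnected : ∀ a, (triLattice.induce {g | label g = a}).Preconnected
  compl_preconnected : (triLattice.induce {g | label g ≠ v}).Preconnected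
  exists_adj : ∀ ⦃a b⦄, G.Adj a b → ∃ s t, triLattice.Adj s t ∧ label s = a ∧ label t = b
  exists_box : ∃ m, ∀ g ∈ outsideBox m, label g = v

section Separator

variable {V : Type*} {G : SimpleGraph V} {v : V}

lemma exists_mem_notMem_of_three_mul_lt [DecidableEq V] {W K₁ K₂ K₃ : Finset V} {n : ℕ}
    (hn : 3 * n < W.card) (h₁ : (K₁ ∩ W).card ≤ n) (h₂ : (K₂ ∩ W).card ≤ n)
    (h₃ : (K₃ ∩ W).card ≤ n) : ∃ w ∈ W, w ∉ K₁ ∧ w ∉ K₂ ∧ w ∉ K₃ := by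
  by_contra! hcover
  have hW : W ⊆ (K₁ ∩ W) ∪ (K₂ ∩ W) ∪ (K₃ ∩ W) := fun w hw => by
    have := hcover w hw
    simp only [Finset.mem_union, Finset.mem_inter]
    tauto
  have := Finset.card_le_card hW
  have := Finset.card_union_le ((K₁ ∩ W) ∪ (K₂ ∩ W)) (K₃ ∩ W)
  have := Finset.card_union_le (K₁ ∩ W) (K₂ ∩ W)
  omega

namespace LatticeModel

/-- All points labelled outside some set `K` that contains `P` and at most `n` vertices of `W` lie
on the same side of the closed walk `C`. -/
def HasSmallSide [DecidableEq V] (M : LatticeModel G v) {p : ℤ × ℤ} (C : triLattice.Walk p p)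
    (P W : Finset V) (n : ℕ) : Prop :=
  ∃ (β : ZMod 2) (K : Finset V), P ⊆ K ∧ (K ∩ W).card ≤ n ∧
    ∀ g, M.label g ∉ K → pointWinding g C = β

lemma pointWinding_fundamentalLoop {p q r : ℤ × ℤ} (g : ℤ × ℤ) (Q : triLattice.Walk p q)
    (h : triLattice.Adj q r) (Q' : triLattice.Walk p r) :
    pointWinding g (fundamentalLoop Q h Q') =
      pointWinding g Q + pointCochain g q r + pointWinding g Q' :=
  walkSum_fundamentalLoop (rayCochain_comm _) _ _ _

variable [DecidableEq V] (M : LatticeModel G v) {g₀ : ℤ × ℤ} (Q : ∀ x, triLattice.Walk g₀ x)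
  {W : Finset V} {n : ℕ} {β : ℤ × ℤ → ℤ × ℤ → ZMod 2} {K : ℤ × ℤ → ℤ × ℤ → Finset V}

lemma exists_potential_of_large_side (M : LatticeModel G v) (hn : 3 * n < W.card)
    (hK : ∀ x y, triLattice.Adj x y → {M.label x, M.label y} ⊆ K x y)
    (hKW : ∀ x y, triLattice.Adj x y → (K x y ∩ W).card ≤ n)
    (hβ : ∀ x y (h : triLattice.Adj x y) (g), M.label g ∉ K x y →
      pointWinding g (fundamentalLoop (Q x) h (Q y)) = β x y) :
    ∃ f : ℤ × ℤ → ZMod 2, ∀ x y, triLattice.Adj x y → β x y = f x + f y := by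
  have avoid {g x y} (h : triLattice.Adj x y) (hg : M.label g ∉ K x y) : g ≠ x ∧ g ≠ y := by
    constructor <;> rintro rfl <;> exact hg (hK _ _ h (by simp))
  refine exists_eq_coboundary_of_closed β (fun x y h => ?_) fun x y h => ?_
  · obtain ⟨_, -, hg, hg', -⟩ := exists_mem_notMem_of_three_mul_lt hn (hKW x y h)
      (hKW y x h.symm) (hKW y x h.symm)
    obtain ⟨g, rfl⟩ := M.surjective ‹_›
    rw [← hβ x y h g hg, ← hβ y x h.symm g hg', pointWinding_fundamentalLoop,
      pointWinding_fundamentalLoop, pointCochain, rayCochain_comm]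
    ring
  · have h' := adj_apex_right h
    have h'' := adj_apex_left h
    obtain ⟨_, -, hg, hg', hg''⟩ := exists_mem_notMem_of_three_mul_lt hn (hKW _ _ h) (hKW _ _ h')
      (hKW _ _ h'')
    obtain ⟨g, rfl⟩ := M.surjective ‹_›
    have := pointCochain_closed h (avoid h hg).1 (avoid h hg).2 (avoid h' hg').2
    rw [← hβ _ _ h g hg, ← hβ _ _ h' g hg', ← hβ _ _ h'' g hg'']
    simp only [pointWinding_fundamentalLoop]
    grind

/-- Otherwise the large sides of the loops define a closed cochain, hence one with a potential;
correcting it by the winding parities around a fixed point of `W` gives a potential, near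
infinity, of the ray cochain of that point. -/
theorem exists_not_hasSmallSide (hQ : ∀ x, M.label x = v → ∀ z ∈ (Q x).support, M.label z = v)
    (hvW : v ∉ W) (hn : 3 * n < W.card) :
    ∃ (x y : ℤ × ℤ) (h : triLattice.Adj x y),
      ¬ M.HasSmallSide (fundamentalLoop (Q x) h (Q y)) {M.label x, M.label y} W n := by
  by_contra! H
  choose! β K hK hKW hβ using H
  obtain ⟨f, hf⟩ := M.exists_potential_of_large_side Q hn hK hKW hβ
  obtain ⟨w, hw⟩ : W.Nonempty := Finset.card_pos.1 (by omega)
  obtain ⟨g, rfl⟩ := M.surjective w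
  obtain ⟨m, hm⟩ := M.exists_box
  refine not_exact_pointCochain_outsideBox m g (fun x => f x + pointWinding g (Q x))
    fun x hx y hy hxy => ?_
  obtain ⟨w', hw', hg', -⟩ := exists_mem_notMem_of_three_mul_lt hn (hKW x y hxy) (hKW x y hxy)
    (hKW x y hxy)
  obtain ⟨g', rfl⟩ := M.surjective w'
  obtain ⟨path, hpath⟩ := exists_walk_of_preconnected_induce M.compl_preconnected
    (ne_of_mem_of_not_mem hw hvW) (ne_of_mem_of_not_mem hw' hvW)
  have loop_label (z) (hz : z ∈ (fundamentalLoop (Q x) hxy (Q y)).support) : M.label z = v :=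
    ((mem_support_fundamentalLoop ..).1 hz).elim (hQ x (hm x hx) z) (hQ y (hm y hy) z)
  have same := pointWinding_eq_of_walk (fundamentalLoop (Q x) hxy (Q y)) path
    fun z hz hzC => hpath z hz (loop_label z hzC)
  rw [hβ x y hxy g' hg', hf x y hxy, pointWinding_fundamentalLoop] at same
  grind

end LatticeModel

end Separator

/-! ### The cyclic order of the edges at `v` -/

lemma exists_visit_times {α : Type*} [Finite α] {f : Equiv.Perm α} (hf : ∀ a b, f.SameCycle a b)
    {S : Finset α} {k : ℕ} (hS : S.card = k + 1) {a : α} (ha : a ∈ S) :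
    ∃ (T : ℕ) (e : Fin (k + 1) ↪o ℕ), (f ^ T) a = a ∧ e 0 = 0 ∧ (∀ i, e i < T) ∧
      (Set.Iio T).InjOn (fun j => (f ^ j) a) ∧ ∀ j < T, (f ^ j) a ∈ S ↔ ∃ i, e i = j := by
  classical
  have := Fintype.ofFinite α
  have hcycle : f.IsCycleOn (Finset.univ : Finset α) := ⟨by simp, fun _ _ _ _ => hf _ _⟩
  set T := (Finset.univ : Finset α).card
  have hinj : (Set.Iio T).InjOn (fun j => (f ^ j) a) := fun i hi j hj h =>
    ((hcycle.pow_apply_eq_pow_apply (Finset.mem_univ a)).1 h).eq_of_lt_of_lt hi hj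
  choose pos hposT hpos using fun b => hcycle.exists_pow_eq (Finset.mem_univ a) (Finset.mem_univ b)
  have hcard : (S.image pos).card = k + 1 := by
    rw [Finset.card_image_of_injective _ fun b c h => by rw [← hpos b, h, hpos], hS]
  set e := (S.image pos).orderEmbOfFin hcard
  have hmem (j) (hj : j < T) : (f ^ j) a ∈ S ↔ ∃ i, e i = j := by
    rw [← Set.mem_range, Finset.range_orderEmbOfFin, Finset.mem_coe, Finset.mem_image]
    refine ⟨fun h => ⟨_, h, hinj (hposT _) hj (hpos _)⟩, ?_⟩
    rintro ⟨b, hb, rfl⟩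
    rwa [hpos]
  have heT (i) : e i < T := by
    obtain ⟨b, -, hb⟩ := Finset.mem_image.1 (Finset.orderEmbOfFin_mem _ hcard i)
    exact hb ▸ hposT b
  obtain ⟨i, hi⟩ := (hmem 0 ((Nat.zero_le _).trans_lt (heT 0))).1 ha
  exact ⟨T, e, hcycle.pow_card_apply (Finset.mem_univ a),
    Nat.le_zero.1 ((e.monotone (Fin.zero_le i)).trans_eq hi), heT, hinj, hmem⟩

lemma exists_cyclic_enumeration {α : Type*} [Finite α] {f : Equiv.Perm α}
    (hf : ∀ a b, f.SameCycle a b) {S : Finset α} {k : ℕ} (hS : S.card = k + 1) :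
    ∃ n : Fin (k + 1) → α, Function.Injective n ∧ (∀ i, n i ∈ S) ∧
      ∀ i, ∃ m, (f ^ m) (n i) = n (i + 1) ∧ ∀ j, 0 < j → j < m → (f ^ j) (n i) ∉ S := by
  obtain ⟨a, ha⟩ : S.Nonempty := Finset.card_pos.1 (by omega)
  obtain ⟨T, e, hT, he₀, heT, hinj, hmem⟩ := exists_visit_times hf hS ha
  refine ⟨fun i => (f ^ e i) a, fun i j h => e.injective (hinj (heT i) (heT j) h),
    fun i => (hmem _ (heT i)).2 ⟨i, rfl⟩, fun i => ?_⟩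
  simp only [← Equiv.Perm.mul_apply, ← pow_add]
  induction i using Fin.lastCases with
  | last =>
    have := heT (Fin.last k)
    refine ⟨T - e (Fin.last k), by rw [Nat.sub_add_cancel this.le, Fin.last_add_one, he₀, hT,
      pow_zero, Equiv.Perm.one_apply], fun j hj₀ hj h => ?_⟩
    obtain ⟨l, hl⟩ := (hmem _ (by omega)).1 h
    have := e.monotone (Fin.le_last l)
    omega
  | cast i =>
    have := e.strictMono i.castSucc_lt_succ
    rw [Fin.coeSucc_eq_succ]
    refine ⟨e i.succ - e i.castSucc, by rw [Nat.sub_add_cancel this.le], fun j hj₀ hj h => ?_⟩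
    obtain ⟨l, hl⟩ := (hmem _ (by have := heT i.succ; omega)).1 h
    have h₁ : i.castSucc < l := e.lt_iff_lt.1 (by omega)
    have h₂ : l < i.succ := e.lt_iff_lt.1 (by omega)
    exact absurd h₂ (not_lt.2 (Fin.castSucc_lt_iff_succ_le.1 h₁))

namespace LatticeModel

section Rotation

variable {V : Type*} {G : SimpleGraph V} {v : V} (M : LatticeModel G v)

/-- The oriented lattice edges that leave the region of `v`. -/
def IsExit (d : (ℤ × ℤ) × (ℤ × ℤ)) : Prop :=
  triLattice.Adj d.1 d.2 ∧ M.label d.1 = v ∧ M.label d.2 ≠ v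

/-- The type of the oriented lattice edges that leave the region of `v`. -/
abbrev Exit : Type := {d // M.IsExit d}

open scoped Classical in
/-- The rotation of the exits around the region of `v`: the next exit lies on the same triangle. -/
noncomputable def nextExit : Equiv.Perm M.Exit where
  toFun d := if h : M.label (apex d.1.1 d.1.2) = v
    then ⟨(apex d.1.1 d.1.2, d.1.2), (adj_apex_right d.2.1).symm, h, d.2.2.2⟩
    else ⟨(d.1.1, apex d.1.1 d.1.2), adj_apex_left d.2.1, d.2.2.1, h⟩
  invFun d := if h : M.label (apex d.1.2 d.1.1) = v
    then ⟨(apex d.1.2 d.1.1, d.1.2), (adj_apex_left d.2.1.symm).symm, h, d.2.2.2⟩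
    else ⟨(d.1.1, apex d.1.2 d.1.1), adj_apex_right d.2.1.symm, d.2.2.1, h⟩
  left_inv := by
    rintro ⟨⟨s, t⟩, hst, hs, ht⟩
    by_cases h : M.label (apex s t) = v <;> simp_all
  right_inv := by
    rintro ⟨⟨s, t⟩, hst, hs, ht⟩
    by_cases h : M.label (apex t s) = v <;> simp_all

variable {M}

lemma faceWinding_nextExit (d : M.Exit) {p : ℤ × ℤ} (C : triLattice.Walk p p) :
    faceWinding (leftFace (M.nextExit d).1.1 (M.nextExit d).1.2) C =
      faceWinding (leftFace d.1.1 d.1.2) C +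
        walkSum (edgeIndicator (M.nextExit d).1.1 (M.nextExit d).1.2) C := by
  have h := faceWinding_add_faceWinding (M.nextExit d).2.1 C
  have : leftFace (M.nextExit d).1.2 (M.nextExit d).1.1 = leftFace d.1.1 d.1.2 := by
    dsimp only [nextExit, Equiv.coe_fn_mk]
    split_ifs
    exacts [leftFace_rotate _ _, leftFace_rotate' _ _]
  grind

lemma faceWinding_nextExit_pow (d : M.Exit) {p : ℤ × ℤ} (C : triLattice.Walk p p) (m : ℕ)
    (h : ∀ j, 0 < j → j ≤ m → walkSum (edgeIndicator ((M.nextExit ^ j) d).1.1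
      ((M.nextExit ^ j) d).1.2) C = 0) :
    faceWinding (leftFace ((M.nextExit ^ m) d).1.1 ((M.nextExit ^ m) d).1.2) C =
      faceWinding (leftFace d.1.1 d.1.2) C := by
  induction m with
  | zero => rfl
  | succ m ih =>
    have := h (m + 1) m.succ_pos le_rfl
    rw [pow_succ', Equiv.Perm.mul_apply] at this ⊢
    rw [faceWinding_nextExit, this, add_zero, ih fun j hj hjm => h j hj (by omega)]

instance finite_exit : Finite M.Exit := by
  obtain ⟨m, hm⟩ := M.exists_box
  have hB : (Set.Icc (-|m| - 1) (|m| + 1) ×ˢ Set.Icc (-|m| - 1) (|m| + 1)).Finite :=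
    (Set.finite_Icc _ _).prod (Set.finite_Icc _ _)
  refine ((hB.prod hB).subset ?_).to_subtype
  rintro ⟨⟨a, b⟩, ⟨c, d⟩⟩ ⟨hadj, -, hd⟩
  have hbox := mt (hm (c, d)) hd
  rw [triLattice_adj] at hadj
  simp only [outsideBox, Set.mem_ofPred_eq, not_or, not_lt, abs_le] at hbox
  have := le_abs_self m
  dsimp only at hadj
  simp only [Set.mem_prod, Set.mem_Icc]
  omega

open scoped Classical in
/-- The mod 2 cochain of the lattice edges that, in one orientation, are exits in `I`. -/
noncomputable def exitCochain (I : Set M.Exit) (s t : ℤ × ℤ) : ZMod 2 :=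
  if ∃ d ∈ I, s(d.1.1, d.1.2) = s(s, t) then 1 else 0

lemma exitCochain_comm (I : Set M.Exit) (s t : ℤ × ℤ) :
    exitCochain I s t = exitCochain I t s := by
  rw [exitCochain, exitCochain, Sym2.eq_swap (a := s)]

lemma exitCochain_eq_zero (I : Set M.Exit) {s t : ℤ × ℤ} (h : M.label s = v ↔ M.label t = v) :
    exitCochain I s t = 0 := by
  refine if_neg ?_
  rintro ⟨⟨d, _, h₁, h₂⟩, _, hd⟩
  rcases Sym2.eq_iff.1 hd with ⟨rfl, rfl⟩ | ⟨rfl, rfl⟩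
  exacts [h₂ (h.1 h₁), h₂ (h.2 h₁)]

open scoped Classical in
lemma exitCochain_exit (I : Set M.Exit) (d : M.Exit) :
    exitCochain I d.1.1 d.1.2 = if d ∈ I then 1 else 0 := by
  refine if_congr ⟨?_, fun h => ⟨d, h, rfl⟩⟩ rfl rfl
  rintro ⟨d', h, hd⟩
  rcases Sym2.eq_iff.1 hd with ⟨h₁, h₂⟩ | ⟨h₁, -⟩
  · rwa [← show d' = d from Subtype.ext (Prod.ext h₁ h₂)]
  · exact absurd (h₁ ▸ d'.2.2.1) d.2.2.2

lemma exitCochain_closed {I : Set M.Exit} (hI : ∀ d, M.nextExit d ∈ I ↔ d ∈ I) {s t : ℤ × ℤ}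
    (h : triLattice.Adj s t) :
    exitCochain I s t + exitCochain I t (apex s t) + exitCochain I s (apex s t) = 0 := by
  classical
  have closed {s t} (h : triLattice.Adj s t) (hs : M.label s = v) (ht : M.label t ≠ v) :
      exitCochain I s t + exitCochain I t (apex s t) + exitCochain I s (apex s t) = 0 := by
    set d : M.Exit := ⟨(s, t), h, hs, ht⟩ with hd
    have hnext : exitCochain I (M.nextExit d).1.1 (M.nextExit d).1.2 = exitCochain I s t := by
      rw [exitCochain_exit, exitCochain_exit I d]
      exact if_congr (hI d) rfl rfl
    simp only [nextExit, Equiv.coe_fn_mk, hd] at hnext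
    split_ifs at hnext with ha
    · rw [exitCochain_eq_zero I (iff_of_true hs ha), exitCochain_comm I t]
      grind
    · rw [exitCochain_eq_zero I (iff_of_false ht ha)]
      grind
  have h₂ := closed (adj_apex_right h)
  have h₃ := closed (adj_apex_left h).symm
  rw [apex_apex_right, exitCochain_comm I t s, exitCochain_comm I _ s] at h₂
  rw [apex_apex_left, exitCochain_comm I _ s] at h₃
  have comm := exitCochain_comm I t (apex s t)
  by_cases hs : M.label s = v <;> by_cases ht : M.label t = v
  · by_cases ha : M.label (apex s t) = v
    · simp only [exitCochain_eq_zero, hs, ht, ha, add_zero]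
    · linear_combination h₂ ht ha
  · exact closed h hs ht
  · by_cases ha : M.label (apex s t) = v
    · linear_combination h₃ ha hs + comm
    · linear_combination h₂ ht ha
  · by_cases ha : M.label (apex s t) = v
    · linear_combination h₃ ha hs + comm
    · simp only [exitCochain_eq_zero, hs, ht, ha, add_zero]

lemma nextExit_sameCycle (d d' : M.Exit) : M.nextExit.SameCycle d d' := by
  classical
  set I := {d' | M.nextExit.SameCycle d d'}
  obtain ⟨f, hf⟩ := exists_eq_coboundary_of_closed (exitCochain I)
    (fun _ _ _ => exitCochain_comm I _ _)
    fun _ _ h => exitCochain_closed (fun _ => Equiv.Perm.sameCycle_apply_right) h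
  have const {s t} (h : triLattice.Adj s t) (hst : M.label s = v ↔ M.label t = v) : f s = f t :=
    CharTwo.add_eq_zero.1 ((hf s t h).symm.trans (exitCochain_eq_zero I hst))
  have h₁ : f d'.1.1 = f d.1.1 := by
    obtain ⟨w, hw⟩ := exists_walk_of_preconnected_induce (M.fibre_preconnected v)
      d'.2.2.1 d.2.2.1
    exact eq_of_walk (fun a b hab ha hb => const hab (iff_of_true ha hb)) w hw
  have h₂ : f d'.1.2 = f d.1.2 := by
    obtain ⟨w, hw⟩ := exists_walk_of_preconnected_induce M.compl_preconnected d'.2.2.2 d.2.2.2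
    exact eq_of_walk (fun a b hab ha hb => const hab (iff_of_false ha hb)) w hw
  have key := exitCochain_exit I d'
  rw [hf _ _ d'.2.1, h₁, h₂, ← hf _ _ d.2.1, exitCochain_exit,
    if_pos (show d ∈ I from .refl _ _)] at key
  exact (ite_ne_right_iff.1 (key ▸ one_ne_zero)).1

variable (M) in
/-- A chosen exit into the region of the neighbour `c` of `v` (junk if `c` is no neighbour). -/
noncomputable def exit (c : V) : (ℤ × ℤ) × (ℤ × ℤ) :=
  Classical.epsilon fun d => M.IsExit d ∧ M.label d.2 = c

lemma isExit_exit {c : V} (h : G.Adj v c) : M.IsExit (M.exit c) ∧ M.label (M.exit c).2 = c := by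
  obtain ⟨s, t, hst, hs, ht⟩ := M.exists_adj h
  exact Classical.epsilon_spec (p := fun d => M.IsExit d ∧ M.label d.2 = c)
    ⟨(s, t), ⟨hst, hs, ht ▸ h.ne'⟩, ht⟩

variable (M) in
/-- Every exit that `w` crosses an odd number of times is a chosen one, towards a vertex of `S`. -/
def CrossesOnly (S : Set V) {p q : ℤ × ℤ} (w : triLattice.Walk p q) : Prop :=
  ∀ d, M.IsExit d → (∀ c ∈ S, d ≠ M.exit c) → walkSum (edgeIndicator d.1 d.2) w = 0

lemma exit_injOn : Set.InjOn M.exit (G.neighborSet v) := fun a ha b hb h => by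
  rw [← (isExit_exit (M := M) ha).2, h, (isExit_exit hb).2]

variable (M) in
/-- The family `n` lists the neighbours of `v` in the cyclic order of their exits: no chosen exit
lies between those of `n i` and `n (i + 1)`. This is expressed by the winding parities, next to
these two, of the closed walks that cross no exit in between. -/
structure IsRotation {k : ℕ} (n : Fin (k + 1) → V) : Prop where
  injective : Function.Injective n
  adj_iff : ∀ w, G.Adj v w ↔ ∃ i, n i = w
  faceWinding_eq : ∀ (i) {p : ℤ × ℤ} (C : triLattice.Walk p p),
    M.CrossesOnly {w | G.Adj v w ∧ w ≠ n (i + 1)} C →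
    faceWinding (leftFace (M.exit (n i)).1 (M.exit (n i)).2) C =
      faceWinding (leftFace (M.exit (n (i + 1))).1 (M.exit (n (i + 1))).2) C

lemma IsRotation.add {k : ℕ} {n : Fin (k + 1) → V} (hn : M.IsRotation n) (j : Fin (k + 1)) :
    M.IsRotation fun i => n (i + j) where
  injective := hn.injective.comp (add_left_injective j)
  adj_iff w := (hn.adj_iff w).trans (Equiv.addRight j).surjective.exists
  faceWinding_eq i p C hC := by
    rw [add_right_comm] at hC ⊢
    exact hn.faceWinding_eq (i + j) C hC

variable (M) in
theorem exists_isRotation [Fintype (G.neighborSet v)] {k : ℕ} (hk : G.degree v = k + 1) :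
    ∃ n : Fin (k + 1) → V, M.IsRotation n := by
  classical
  let toExit (c : G.neighborSet v) : M.Exit := ⟨M.exit c, (isExit_exit c.2).1⟩
  have toExit_inj : Function.Injective toExit := fun a b h =>
    Subtype.ext (exit_injOn a.2 b.2 (congrArg Subtype.val h))
  obtain ⟨d, hd, hdS, hnext⟩ := exists_cyclic_enumeration nextExit_sameCycle
    (S := Finset.univ.image toExit) (k := k) (by
      rw [Finset.card_image_of_injective _ toExit_inj, Finset.card_univ,
        SimpleGraph.card_neighborSet_eq_degree, hk])
  simp only [Finset.mem_image, Finset.mem_univ, true_and] at hdS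
  choose c hc using hdS
  have hcd (i) : (d i).1 = M.exit (c i) := congrArg Subtype.val (hc i).symm
  have hinj : Function.Injective c := fun i j h => hd (by rw [← hc i, h, hc j])
  have hsurj : Function.Surjective c :=
    ((Fintype.bijective_iff_injective_and_card c).2 ⟨hinj, by
      rw [Fintype.card_fin, SimpleGraph.card_neighborSet_eq_degree, hk]⟩).2
  refine ⟨fun i => c i, Subtype.val_injective.comp hinj, fun w => ⟨fun h => ?_, ?_⟩,
    fun i p C hC => ?_⟩
  · obtain ⟨i, hi⟩ := hsurj ⟨w, h⟩
    exact ⟨i, congrArg Subtype.val hi⟩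
  · rintro ⟨i, rfl⟩
    exact (c i).2
  · obtain ⟨m, hm, hbetween⟩ := hnext i
    rw [← hcd, ← hcd, ← hm, faceWinding_nextExit_pow]
    refine fun j hj hjm => hC _ ((M.nextExit ^ j) (d i)).2 fun w hw h => ?_
    rcases hjm.eq_or_lt with rfl | hjm
    · rw [hm, hcd] at h
      exact hw.2 (exit_injOn (c _).2 hw.1 h).symm
    · exact hbetween j hj hjm
        (Finset.mem_image.2 ⟨⟨w, hw.1⟩, Finset.mem_univ _, Subtype.ext h.symm⟩)

end Rotation

end LatticeModel

/-! ### Geodesics and their lifts -/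

section Geodesic

variable {V : Type*} {G : SimpleGraph V} {v z a : V} {p : G.Walk v z}

lemma dist_getVert (hp : p.length = G.dist v z) {i : ℕ} (hi : i ≤ p.length) :
    G.dist v (p.getVert i) = i := by
  rw [← SimpleGraph.length_eq_dist_of_subwalk hp (p.isSubwalk_take i),
    SimpleGraph.Walk.take_length, min_eq_left hi]

lemma dist_add_dist_of_mem_support (hp : p.length = G.dist v z) (ha : a ∈ p.support) :
    G.dist v a + G.dist a z = G.dist v z := by
  obtain ⟨i, rfl, hi⟩ := SimpleGraph.Walk.mem_support_iff_exists_getVert.1 ha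
  rw [dist_getVert hp hi, ← SimpleGraph.length_eq_dist_of_subwalk hp (p.isSubwalk_drop i),
    SimpleGraph.Walk.drop_length, ← hp, Nat.add_sub_cancel' hi]

lemma getVert_dist (hp : p.length = G.dist v z) (ha : a ∈ p.support) :
    p.getVert (G.dist v a) = a := by
  obtain ⟨i, rfl, hi⟩ := SimpleGraph.Walk.mem_support_iff_exists_getVert.1 ha
  rw [dist_getVert hp hi]

lemma injOn_dist_support (hp : p.length = G.dist v z) :
    Set.InjOn (G.dist v) {a | a ∈ p.support} := fun a ha b hb h => by
  rw [← getVert_dist hp ha, h, getVert_dist hp hb]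

lemma eq_start_of_mem_support (hp : p.length = G.dist v z) (ha : a ∈ p.support) (hz : z = v) :
    a = v := by
  have := dist_add_dist_of_mem_support hp ha
  rw [hz, SimpleGraph.dist_self] at this
  rw [← getVert_dist hp ha, show G.dist v a = 0 by omega, p.getVert_zero]

lemma eq_snd_of_adj (hp : p.length = G.dist v z) (ha : a ∈ p.support) (h : G.Adj v a) :
    a = p.snd := by
  rw [← getVert_dist hp ha, SimpleGraph.dist_eq_one_iff_adj.2 h]

lemma adj_snd_of_dist_eq_two (hp : p.length = G.dist v z) (ha : a ∈ p.support)
    (h : G.dist v a = 2) : G.Adj p.snd a := by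
  have hlen : 2 ≤ p.length := by
    have := dist_add_dist_of_mem_support hp ha
    omega
  rw [← getVert_dist hp ha, h]
  exact p.adj_getVert_succ hlen

lemma PurelyThrough.of_mem_support {c : V} (hconn : G.Connected) (hz : PurelyThrough G v c z)
    (hp : p.length = G.dist v z) (ha : a ∈ p.support) : PurelyThrough G v c a := by
  intro h hvh hh
  have h₁ := dist_add_dist_of_mem_support hp ha
  have h₂ := hconn.dist_triangle (u := h) (v := a) (w := z)
  have h₃ := hconn.dist_triangle (u := v) (v := h) (w := z)
  rw [SimpleGraph.dist_eq_one_iff_adj.2 hvh] at h₃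
  exact hz h hvh (by omega)

lemma exists_adj_dist_add_one (hconn : G.Connected) (hz : z ≠ v) :
    ∃ c, G.Adj v c ∧ G.dist c z + 1 = G.dist v z := by
  obtain ⟨p, hp⟩ := hconn.exists_walk_length_eq_dist v z
  have hnil : ¬ p.Nil := SimpleGraph.Walk.not_nil_of_ne hz.symm
  refine ⟨p.snd, p.adj_snd hnil, ?_⟩
  have := dist_add_dist_of_mem_support (a := p.snd) hp (p.getVert_mem_support 1)
  rw [SimpleGraph.dist_eq_one_iff_adj.2 (p.adj_snd hnil)] at this
  omega

lemma exists_geodesic_snd_eq {c : V} (hconn : G.Connected) (h : G.Adj v c)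
    (hc : G.dist c z + 1 = G.dist v z) : ∃ p : G.Walk v z, p.length = G.dist v z ∧ p.snd = c := by
  obtain ⟨p, hp⟩ := hconn.exists_walk_length_eq_dist c z
  exact ⟨.cons h p, by simp [hp, hc], by simp⟩

end Geodesic

namespace LatticeModel

section LiesOver

variable {V : Type*} {G : SimpleGraph V} {v : V} {M : LatticeModel G v} {P P' : Set V}
  {x y z : ℤ × ℤ}

lemma CrossesOnly.mono {Q : triLattice.Walk x y} (h : M.CrossesOnly P Q) (hPP' : P ⊆ P') :
    M.CrossesOnly P' Q :=
  fun d hd hP' => h d hd fun c hc => hP' c (hPP' hc)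

lemma crossesOnly_of_forall {Q : triLattice.Walk x y}
    (h : (∀ g ∈ Q.support, M.label g = v) ∨ ∀ g ∈ Q.support, M.label g ≠ v) :
    M.CrossesOnly P Q := fun _ hd _ =>
  walkSum_edgeIndicator_eq_zero Q <| h.symm.imp (fun h hg => h _ hg hd.2.1)
    fun h hg => hd.2.2 (h _ hg)

variable (M) in
/-- The lattice walk `Q` stays in the regions of the vertices of `P` and crosses, besides the chosen
exits towards vertices of `P`, each exit an even number of times. -/
structure LiesOver (P : Set V) (Q : triLattice.Walk x y) : Prop where
  label_mem : ∀ g ∈ Q.support, M.label g ∈ P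
  crossesOnly : M.CrossesOnly {c | G.Adj v c ∧ c ∈ P} Q

namespace LiesOver

lemma mono {Q : triLattice.Walk x y} (h : M.LiesOver P Q) (hPP' : P ⊆ P') : M.LiesOver P' Q :=
  ⟨fun g hg => hPP' (h.label_mem g hg), h.crossesOnly.mono fun _ hc => ⟨hc.1, hPP' hc.2⟩⟩

lemma append {Q : triLattice.Walk x y} {Q' : triLattice.Walk y z} (h : M.LiesOver P Q)
    (h' : M.LiesOver P Q') : M.LiesOver P (Q.append Q') where
  label_mem g hg := ((SimpleGraph.Walk.mem_support_append_iff ..).1 hg).elim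
    (h.label_mem g) (h'.label_mem g)
  crossesOnly d hd hP := by
    rw [walkSum_append, h.crossesOnly d hd hP, h'.crossesOnly d hd hP, add_zero]

lemma reverse {Q : triLattice.Walk x y} (h : M.LiesOver P Q) : M.LiesOver P Q.reverse where
  label_mem g hg := h.label_mem g (by simpa using hg)
  crossesOnly d hd hP := by
    rw [walkSum_reverse fun _ _ => edgeIndicator_comm .., h.crossesOnly d hd hP]

lemma fundamentalLoop {Q : triLattice.Walk z x} {Q' : triLattice.Walk z y}
    (hQ : M.LiesOver P Q) (hQ' : M.LiesOver P Q') (hxy : triLattice.Adj x y)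
    (hx : M.label x ≠ v) (hy : M.label y ≠ v) : M.LiesOver P (fundamentalLoop Q hxy Q') := by
  refine hQ.append (append (y := y) (Q := hxy.toWalk) ⟨fun g hg => ?_, ?_⟩ hQ'.reverse)
  · obtain rfl | rfl : g = x ∨ g = y := by simpa using hg
    exacts [hQ.label_mem _ Q.end_mem_support, hQ'.label_mem _ Q'.end_mem_support]
  · exact crossesOnly_of_forall (.inr (by simp [hx, hy]))

end LiesOver

variable (M) in
lemma exists_lift {a b : V} (p : G.Walk a b) (x y : ℤ × ℤ) (hx : M.label x = a)
    (hy : M.label y = b) : ∃ Q : triLattice.Walk x y, ∀ g ∈ Q.support, M.label g ∈ p.support := by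
  induction p generalizing x with
  | nil =>
    obtain ⟨Q, hQ⟩ := exists_walk_of_preconnected_induce (M.fibre_preconnected _) hx hy
    exact ⟨Q, fun g hg => by simpa using hQ g hg⟩
  | cons h p ih =>
    obtain ⟨s, t, hst, hs, ht⟩ := M.exists_adj h
    obtain ⟨Q, hQ⟩ := exists_walk_of_preconnected_induce (M.fibre_preconnected _) hx hs
    obtain ⟨Q', hQ'⟩ := ih t ht hy
    refine ⟨Q.append (.cons hst Q'), fun g hg => ?_⟩
    simp only [SimpleGraph.Walk.mem_support_append_iff, SimpleGraph.Walk.support_cons,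
      List.mem_cons] at hg ⊢
    rcases hg with hg | rfl | hg
    exacts [.inl (hQ g hg), .inl hs, .inr (hQ' g hg)]

variable (M) in
lemma exists_liesOver {b : V} {p : G.Walk v b} (hp : p.IsPath) (x y : ℤ × ℤ) (hx : M.label x = v)
    (hy : M.label y = b) : ∃ Q : triLattice.Walk x y, M.LiesOver {c | c ∈ p.support} Q := by
  cases p with
  | nil =>
    obtain ⟨Q, hQ⟩ := exists_walk_of_preconnected_induce (M.fibre_preconnected _) hx hy
    exact ⟨Q, fun g hg => by simpa using hQ g hg, crossesOnly_of_forall (.inl hQ)⟩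
  | @cons _ c _ h p =>
    rw [SimpleGraph.Walk.cons_isPath_iff] at hp
    obtain ⟨⟨hst, hs, -⟩, ht⟩ := isExit_exit (M := M) h
    obtain ⟨Q, hQ⟩ := exists_walk_of_preconnected_induce (M.fibre_preconnected _) hx hs
    obtain ⟨Q', hQ'⟩ := M.exists_lift p _ y ht hy
    refine ⟨Q.append (.cons hst Q'), fun g hg => ?_, fun d hd hdc => ?_⟩
    · simp only [SimpleGraph.Walk.mem_support_append_iff, SimpleGraph.Walk.support_cons,
        List.mem_cons, Set.mem_ofPred_eq] at hg ⊢
      rcases hg with hg | rfl | hg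
      exacts [.inl (hQ g hg), .inl hs, .inr (hQ' g hg)]
    · have hQd : M.CrossesOnly ∅ Q := crossesOnly_of_forall (.inl hQ)
      have hQ'd : M.CrossesOnly ∅ Q' :=
        crossesOnly_of_forall (.inr fun g hg hgv => hp.2 (hgv ▸ hQ' g hg))
      have hne : d ≠ M.exit c := hdc c ⟨h, by simp⟩
      rw [walkSum_append, walkSum_cons, hQd d hd (by simp), hQ'd d hd (by simp), zero_add, add_zero,
        edgeIndicator, if_neg]
      rw [Sym2.eq_iff]
      rintro (⟨h₁, h₂⟩ | ⟨h₁, -⟩)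
      · exact hne (Prod.ext h₁.symm h₂.symm)
      · exact hd.2.2 (h₁ ▸ hs)

end LiesOver

end LatticeModel

/-! ### Loops with a small side -/

namespace LatticeModel

lemma LiesOver.pointWinding_exit {V : Type*} {G : SimpleGraph V} {v w : V} {M : LatticeModel G v}
    {x : ℤ × ℤ} {C : triLattice.Walk x x} {P : Set V} (hC : M.LiesOver P C) (h : G.Adj v w)
    (hw : w ∉ P) :
    pointWinding (M.exit w).2 C = faceWinding (leftFace (M.exit w).1 (M.exit w).2) C := by
  obtain ⟨⟨hadj, -, -⟩, hlabel⟩ := isExit_exit (M := M) h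
  have hmem : (M.exit w).2 ∉ C.support := fun hg => hw (hlabel ▸ hC.label_mem _ hg)
  have hadd := faceWinding_add_faceWinding hadj C
  rw [walkSum_edgeIndicator_eq_zero C (.inr hmem),
    faceWinding_eq_pointWinding hadj.symm C hmem] at hadd
  grind

section Side

variable {V : Type*} [DecidableEq V] {G : SimpleGraph V} {v : V}
  {M : LatticeModel G v} {g₀ x y : ℤ × ℤ} {C : triLattice.Walk x x} {P P' W : Finset V}
  {n n' : ℕ} {β β' : ZMod 2} {w : V}

lemma HasSmallSide.mono (h : M.HasSmallSide C P W n) (hP : P' ⊆ P) (hn : n ≤ n') :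
    M.HasSmallSide C P' W n' := by
  obtain ⟨β, K, hPK, hK, hβ⟩ := h
  exact ⟨β, K, hP.trans hPK, hK.trans hn, hβ⟩

lemma HasSmallSide.swap {Q : triLattice.Walk g₀ x} {Q' : triLattice.Walk g₀ y}
    {hxy : triLattice.Adj x y} (h : M.HasSmallSide (fundamentalLoop Q hxy Q') P W n) :
    M.HasSmallSide (fundamentalLoop Q' hxy.symm Q) P W n := by
  obtain ⟨β, K, hPK, hK, hβ⟩ := h
  refine ⟨β, K, hPK, hK, fun g hg => ?_⟩
  rw [← hβ g hg, pointWinding_fundamentalLoop, pointWinding_fundamentalLoop, pointCochain,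
    rayCochain_comm]
  ring

lemma HasSmallSide.trans {Q : triLattice.Walk g₀ x} {Q' R : triLattice.Walk g₀ y}
    {hxy : triLattice.Adj x y} (h : M.HasSmallSide (fundamentalLoop Q hxy R) P W n)
    (h' : M.HasSmallSide (Q'.append R.reverse) P' W n') :
    M.HasSmallSide (fundamentalLoop Q hxy Q') (P ∪ P') W (n + n') := by
  obtain ⟨β, K, hPK, hK, hβ⟩ := h
  obtain ⟨β', K', hPK', hK', hβ'⟩ := h'
  refine ⟨β + β', K ∪ K', Finset.union_subset_union hPK hPK', ?_, fun g hg => ?_⟩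
  · rw [Finset.union_inter_distrib_right]
    exact (Finset.card_union_le _ _).trans (add_le_add hK hK')
  · rw [Finset.mem_union, not_or] at hg
    rw [← hβ g hg.1, ← hβ' g hg.2, pointWinding_fundamentalLoop, pointWinding_fundamentalLoop]
    rw [pointWinding, pointWinding, pointWinding, pointWinding, walkSum_append,
      walkSum_reverse (c := pointCochain g) (rayCochain_comm _)]
    grind

variable [Fintype V]

variable (M C P) in
open Classical in
/-- The vertices outside `P` whose regions have winding parity `β` with respect to the closed walk
`C`, where `C` stays in the regions of the vertices of `P`. -/
noncomputable def side (β : ZMod 2) : Finset V :=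
  {w | w ∉ P ∧ ∃ g, M.label g = w ∧ pointWinding g C = β}

lemma notMem_of_mem_side (hw : w ∈ M.side C P β) : w ∉ P := by
  simp only [side, Finset.mem_filter_univ] at hw
  exact hw.1

lemma label_mem_side_iff (hC : ∀ z ∈ C.support, M.label z ∈ P) {g : ℤ × ℤ} :
    M.label g ∈ M.side C P β ↔ M.label g ∉ P ∧ pointWinding g C = β := by
  simp only [side, Finset.mem_filter_univ]
  refine and_congr_right fun hg => ⟨?_, fun h => ⟨g, rfl, h⟩⟩
  rintro ⟨g', hgg', rfl⟩
  obtain ⟨path, hpath⟩ := exists_walk_of_preconnected_induce (M.fibre_preconnected _) rfl hgg'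
  exact pointWinding_eq_of_walk C path fun z hz hzC => hg (hpath z hz ▸ hC z hzC)

lemma mem_or_mem_side_of_adj (hC : ∀ z ∈ C.support, M.label z ∈ P) {a b : V} (hab : G.Adj a b)
    (hb : b ∈ M.side C P β) : a ∈ P ∨ a ∈ M.side C P β := by
  obtain ⟨s, t, hst, rfl, rfl⟩ := M.exists_adj hab
  refine or_iff_not_imp_left.2 fun hs => ?_
  rw [label_mem_side_iff hC] at hb ⊢
  rw [pointWinding_eq_of_adj hst C (fun h => hs (hC _ h)) fun h => hb.1 (hC _ h)]
  exact ⟨hs, hb.2⟩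

lemma disjoint_side (hC : ∀ z ∈ C.support, M.label z ∈ P) (hβ : β ≠ β') :
    Disjoint (M.side C P β) (M.side C P β') := by
  refine Finset.disjoint_left.2 fun w h h' => hβ ?_
  obtain ⟨g, rfl⟩ := M.surjective w
  rw [← ((label_mem_side_iff hC).1 h).2, ((label_mem_side_iff hC).1 h').2]

lemma card_inter_add_card_inter_side_le (hC : ∀ z ∈ C.support, M.label z ∈ P) (T : Finset V) :
    (T ∩ P).card + (T ∩ M.side C P 0).card + (T ∩ M.side C P 1).card ≤ T.card := by
  have hP (β) : Disjoint P (M.side C P β) :=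
    Finset.disjoint_right.2 fun w hw => notMem_of_mem_side hw
  rw [← Finset.card_union_of_disjoint
      ((hP 0).mono Finset.inter_subset_right Finset.inter_subset_right),
    ← Finset.inter_union_distrib_left, ← Finset.card_union_of_disjoint
      ((Finset.disjoint_union_left.2 ⟨hP 1, disjoint_side hC zero_ne_one⟩).mono
        Finset.inter_subset_right Finset.inter_subset_right)]
  exact Finset.card_le_card
    (Finset.union_subset Finset.inter_subset_left Finset.inter_subset_left)

lemma hasSmallSide_of_card_sdiff_le (hC : ∀ z ∈ C.support, M.label z ∈ P) {A : Finset V}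
    (hA : Disjoint A W) (h : ((P ∪ M.side C P β) \ A).card ≤ n) : M.HasSmallSide C P W n := by
  refine ⟨β + 1, P ∪ M.side C P β, Finset.subset_union_left,
    (Finset.card_le_card fun w hw => ?_).trans h, fun g hg => ?_⟩
  · rw [Finset.mem_inter] at hw
    exact Finset.mem_sdiff.2 ⟨hw.1, Finset.disjoint_right.1 hA hw.2⟩
  · have hne : pointWinding g C ≠ β := fun hβ => hg <| by
      by_cases hgP : M.label g ∈ P
      · exact Finset.mem_union_left _ hgP
      · exact Finset.mem_union_right _ ((label_mem_side_iff hC).2 ⟨hgP, hβ⟩)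
    exact (by decide : ∀ γ β : ZMod 2, γ ≠ β → γ = β + 1) _ _ hne

lemma hasSmallSide_of_neighbors (hconn : G.Connected) {Q N : Finset V}
    (hC : ∀ z ∈ C.support, M.label z ∈ P ∪ Q) (hP : Set.InjOn (G.dist v) P)
    (hQ : Set.InjOn (G.dist v) Q) (hvW : v ∉ W) (hNcard : N.card ≤ 2)
    (hN : ∀ w ∈ P ∪ Q ∪ M.side C (P ∪ Q) β, G.Adj v w → w ∈ N) :
    M.HasSmallSide C (P ∪ Q) W (sn G (fun _ => 2) v) :=
  hasSmallSide_of_card_sdiff_le hC (Finset.disjoint_singleton_left.2 hvW) <|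
    card_sdiff_singleton_le_sn hconn hP hQ
      (fun _ _ hab hb => .inr (Finset.mem_union.2 (mem_or_mem_side_of_adj hC hab hb))) hNcard hN

end Side

section Geodesics

variable {V : Type*} [DecidableEq V] {G : SimpleGraph V}
  {v z z' w : V} {M : LatticeModel G v} {p : G.Walk v z} {q : G.Walk v z'} {x : ℤ × ℤ}
  {C : triLattice.Walk x x} {W : Finset V}

/-- The set of all vertices of two walks. -/
abbrev supportUnion {V : Type*} [DecidableEq V] {G : SimpleGraph V} {v z z' : V} (p : G.Walk v z)
    (q : G.Walk v z') : Finset V :=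
  p.support.toFinset ∪ q.support.toFinset

lemma eq_snd_or_eq_snd_of_adj (hp : p.length = G.dist v z) (hq : q.length = G.dist v z')
    (hw : w ∈ supportUnion p q) (h : G.Adj v w) : w = p.snd ∨ w = q.snd := by
  rw [Finset.mem_union, List.mem_toFinset, List.mem_toFinset] at hw
  exact hw.imp (eq_snd_of_adj hp · h) (eq_snd_of_adj hq · h)

lemma card_neighborFinset_inter_supportUnion_le_two [Fintype (G.neighborSet v)]
    (hp : p.length = G.dist v z) (hq : q.length = G.dist v z') :
    (G.neighborFinset v ∩ supportUnion p q).card ≤ 2 := by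
  refine (Finset.card_le_card fun w hw => ?_).trans (Finset.card_le_two (a := p.snd) (b := q.snd))
  rw [Finset.mem_inter, SimpleGraph.mem_neighborFinset] at hw
  rw [Finset.mem_insert, Finset.mem_singleton]
  exact eq_snd_or_eq_snd_of_adj hp hq hw.2 hw.1

lemma hasSmallSide_of_degree_add_card_le [Fintype V] [DecidableRel G.Adj] (hconn : G.Connected)
    (hC : ∀ g ∈ C.support, M.label g ∈ supportUnion p q) (hp : p.length = G.dist v z)
    (hq : q.length = G.dist v z') (hvW : v ∉ W)
    (hcard : G.degree v + (G.neighborFinset v ∩ supportUnion p q).card ≤ 5) :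
    M.HasSmallSide C (supportUnion p q) W (sn G (fun _ => 2) v) := by
  have hcount := card_inter_add_card_inter_side_le hC (G.neighborFinset v)
  rw [G.card_neighborFinset_eq_degree] at hcount
  obtain ⟨β, hβ⟩ : ∃ β, (G.neighborFinset v ∩ supportUnion p q).card +
      (G.neighborFinset v ∩ M.side C (supportUnion p q) β).card ≤ 2 := by
    by_contra! h
    have := h 0
    have := h 1
    omega
  refine hasSmallSide_of_neighbors (β := β) hconn hC (by simpa using injOn_dist_support hp)
    (by simpa using injOn_dist_support hq) hvW ((Finset.card_union_le _ _).trans hβ)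
    fun w hw h => ?_
  rw [← Finset.inter_union_distrib_left]
  exact Finset.mem_inter.2 ⟨(G.mem_neighborFinset v w).2 h, hw⟩

lemma hasSmallSide_of_not_adj_side [Fintype V] (hconn : G.Connected)
    (hC : ∀ g ∈ C.support, M.label g ∈ supportUnion p q) (hp : p.length = G.dist v z)
    (hq : q.length = G.dist v z') (hvW : v ∉ W) {β : ZMod 2}
    (hβ : ∀ w ∈ M.side C (supportUnion p q) β, ¬ G.Adj v w) :
    M.HasSmallSide C (supportUnion p q) W (sn G (fun _ => 2) v) := by
  refine hasSmallSide_of_neighbors (N := {p.snd, q.snd}) (β := β) hconn hC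
    (by simpa using injOn_dist_support hp) (by simpa using injOn_dist_support hq) hvW
    Finset.card_le_two fun w hw h => ?_
  rw [Finset.mem_insert, Finset.mem_singleton]
  exact (Finset.mem_union.1 hw).elim (eq_snd_or_eq_snd_of_adj hp hq · h) fun hw => (hβ w hw h).elim

lemma hasSmallSide_of_snd_eq_rotation [Finite V] (hconn : G.Connected) {n : Fin 4 → V}
    (hn : M.IsRotation n) (hC : M.LiesOver (supportUnion p q : Finset V) C)
    (hp : p.length = G.dist v z) (hq : q.length = G.dist v z') (hvW : v ∉ W) {i : Fin 4}
    (hpi : p.snd = n i) (hqi : q.snd = n (i + 1)) :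
    M.HasSmallSide C (supportUnion p q) W (sn G (fun _ => 2) v) := by
  cases nonempty_fintype V
  have hadj {w : V} (hw : w ∈ supportUnion p q) (h : G.Adj v w) : w = n i ∨ w = n (i + 1) :=
    hpi ▸ hqi ▸ eq_snd_or_eq_snd_of_adj hp hq hw h
  have notMem (j : Fin 4) (h₁ : j ≠ i) (h₂ : j ≠ i + 1) : n j ∉ supportUnion p q := fun hj =>
    (hadj hj ((hn.adj_iff _).2 ⟨j, rfl⟩)).elim (h₁ ∘ (hn.injective ·)) (h₂ ∘ (hn.injective ·))
  have h₂ := notMem (i + 2) (by simp) (by simp)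
  have h₃ := notMem (i + 2 + 1) (by simp [add_assoc]) (by simp)
  have same := hn.faceWinding_eq (i + 2) C <| hC.crossesOnly.mono fun w hw =>
    ⟨hw.1, fun h => h₃ (h ▸ hw.2)⟩
  rw [← hC.pointWinding_exit ((hn.adj_iff _).2 ⟨_, rfl⟩) h₂,
    ← hC.pointWinding_exit ((hn.adj_iff _).2 ⟨_, rfl⟩) h₃] at same
  have notMem_side (j : Fin 4) (hj : pointWinding (M.exit (n j)).2 C =
      pointWinding (M.exit (n (i + 2))).2 C) :
      n j ∉ M.side C (supportUnion p q) (pointWinding (M.exit (n (i + 2))).2 C + 1) := fun h => by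
    rw [← (isExit_exit (M := M) ((hn.adj_iff _).2 ⟨j, rfl⟩)).2,
      label_mem_side_iff hC.label_mem, hj] at h
    exact absurd h.2 (by simp)
  refine hasSmallSide_of_not_adj_side (β := pointWinding (M.exit (n (i + 2))).2 C + 1) hconn
    hC.label_mem hp hq hvW fun w hw h => ?_
  obtain ⟨j, rfl⟩ := (hn.adj_iff w).1 h
  obtain rfl | rfl | rfl | rfl : j = i ∨ j = i + 1 ∨ j = i + 2 ∨ j = i + 2 + 1 := by
    clear * -
    decide +revert
  · exact notMem_of_mem_side hw (Finset.mem_union_left _ <| List.mem_toFinset.2 <|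
      hpi ▸ p.getVert_mem_support 1)
  · exact notMem_of_mem_side hw (Finset.mem_union_right _ <| List.mem_toFinset.2 <|
      hqi ▸ q.getVert_mem_support 1)
  exacts [notMem_side _ rfl hw, notMem_side _ same.symm hw]

lemma card_neighborFinset_snd_inter_support_le_one [Fintype (G.neighborSet q.snd)]
    (hq : q.length = G.dist v z') (hvq : G.Adj v q.snd) :
    ((G.neighborFinset q.snd ∩ q.support.toFinset).erase v).card ≤ 1 := by
  have dist_eq_two {c : V} (hc : c ∈ (G.neighborFinset q.snd ∩ q.support.toFinset).erase v) :
      c ∈ q.support ∧ G.dist v c = 2 := by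
    simp only [Finset.mem_erase, Finset.mem_inter, SimpleGraph.mem_neighborFinset,
      List.mem_toFinset] at hc
    obtain ⟨hcv, hadj, hcq⟩ := hc
    have h₀ : G.dist v c ≠ 0 := (hvq.reachable.trans hadj.reachable).dist_eq_zero_iff.not.2 hcv.symm
    have h₁ : G.dist v c ≠ 1 := fun h =>
      hadj.ne' (eq_snd_of_adj hq hcq (SimpleGraph.dist_eq_one_iff_adj.1 h))
    have := dist_le_dist_add_one_of_adj v hadj
    rw [SimpleGraph.dist_eq_one_iff_adj.2 hvq] at this
    exact ⟨hcq, by omega⟩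
  refine Finset.card_le_one.2 fun a ha b hb => ?_
  exact injOn_dist_support hq (dist_eq_two ha).1 (dist_eq_two hb).1
    ((dist_eq_two ha).2.trans (dist_eq_two hb).2.symm)

lemma exists_card_neighborFinset_snd_inter_le_two [Fintype V] [Fintype (G.neighborSet q.snd)]
    (hC : ∀ g ∈ C.support, M.label g ∈ supportUnion p q) (hq : q.length = G.dist v z')
    (hvq : G.Adj v q.snd) (hqdeg : G.degree q.snd ≤ 5) :
    ∃ β, ((G.neighborFinset q.snd ∩
      (q.support.toFinset ∪ M.side C (supportUnion p q) β)).erase v).card ≤ 2 := by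
  have hone := card_neighborFinset_snd_inter_support_le_one hq hvq
  have hcount := card_inter_add_card_inter_side_le hC (G.neighborFinset q.snd)
  have hQ : ((G.neighborFinset q.snd ∩ q.support.toFinset).erase v).card + 1 ≤
      (G.neighborFinset q.snd ∩ supportUnion p q).card := by
    rw [Finset.card_erase_add_one (by simp [hvq.symm])]
    exact Finset.card_le_card (Finset.inter_subset_inter_left Finset.subset_union_right)
  have hle (β) : ((G.neighborFinset q.snd ∩
      (q.support.toFinset ∪ M.side C (supportUnion p q) β)).erase v).card ≤
      ((G.neighborFinset q.snd ∩ q.support.toFinset).erase v).card +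
        (G.neighborFinset q.snd ∩ M.side C (supportUnion p q) β).card := by
    rw [Finset.inter_union_distrib_left, Finset.erase_union_distrib]
    grw [Finset.card_union_le, Finset.card_erase_le (s := _ ∩ M.side _ _ β)]
  rw [G.card_neighborFinset_eq_degree] at hcount
  by_contra! h
  have := (h 0).trans_le (hle 0)
  have := (h 1).trans_le (hle 1)
  omega

/-- Either some side of `C` contains no neighbour of `v`, or each of them contains exactly one. -/
lemma hasSmallSide_of_purelyThrough [Fintype V] [DecidableRel G.Adj] (hconn : G.Connected)
    (hC : ∀ g ∈ C.support, M.label g ∈ supportUnion p q) (hp : p.length = G.dist v z)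
    (hq : q.length = G.dist v z') (hvp : G.Adj v p.snd) (hvq : G.Adj v q.snd)
    (hpq : p.snd ≠ q.snd) (hpure : PurelyThrough G v p.snd z) (hdeg : G.degree v ≤ 4)
    (hqdeg : G.degree q.snd ≤ 5) (hvW : v ∉ W) (hqW : q.snd ∉ W) :
    M.HasSmallSide C (supportUnion p q) W (sn G (fun _ => 2) v) := by
  have hP : Set.InjOn (G.dist v) (p.support.toFinset : Set V) := by
    simpa using injOn_dist_support hp
  have hQ : Set.InjOn (G.dist v) (q.support.toFinset : Set V) := by
    simpa using injOn_dist_support hq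
  have hadj {w : V} (hw : w ∈ supportUnion p q) (h : G.Adj v w) : w = p.snd ∨ w = q.snd :=
    eq_snd_or_eq_snd_of_adj hp hq hw h
  have hsides := card_inter_add_card_inter_side_le hC (G.neighborFinset v)
  have htwo : 2 ≤ (G.neighborFinset v ∩ supportUnion p q).card := by
    rw [← Finset.card_pair hpq]
    refine Finset.card_le_card ?_
    simp [Finset.insert_subset_iff, hvp, hvq, p.getVert_mem_support 1, q.getVert_mem_support 1]
  rw [G.card_neighborFinset_eq_degree] at hsides
  by_cases hempty : ∃ β, (G.neighborFinset v ∩ M.side C (supportUnion p q) β).card = 0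
  · obtain ⟨β, hβ⟩ := hempty
    refine hasSmallSide_of_not_adj_side (β := β) hconn hC hp hq hvW fun w hw h => ?_
    rw [Finset.card_eq_zero] at hβ
    exact absurd (Finset.mem_inter.2 ⟨(G.mem_neighborFinset v w).2 h, hw⟩) (by simp [hβ])
  push Not at hempty
  obtain ⟨β, hβ⟩ := exists_card_neighborFinset_snd_inter_le_two hC hq hvq hqdeg
  obtain ⟨r, hr⟩ : ∃ r, G.neighborFinset v ∩ M.side C (supportUnion p q) β = {r} := by
    refine Finset.card_eq_one.1 ?_
    have := hempty 0
    have := hempty 1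
    obtain rfl | rfl : β = 0 ∨ β = 1 := by clear * -; decide +revert
    all_goals omega
  refine hasSmallSide_of_card_sdiff_le (A := {v, q.snd}) (β := β) hC (by simp [hvW, hqW]) <|
    card_sdiff_pair_le_sn (r := r) hconn hP hQ
      (fun _ _ hab hb => .inr (Finset.mem_union.2 (mem_or_mem_side_of_adj hC hab hb)))
      (List.mem_toFinset.2 (p.getVert_mem_support 1)) hvp hpq
      (fun a ha => hpure.of_mem_support hconn hp (List.mem_toFinset.1 ha))
      (fun w => hadj) (fun w hw h => ?_)
      (fun a ha => adj_snd_of_dist_eq_two hq (List.mem_toFinset.1 ha)) hβ fun w hw hwv h => ?_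
  · rw [← Finset.mem_singleton, ← hr]
    exact Finset.mem_inter.2 ⟨(G.mem_neighborFinset v w).2 h, hw⟩
  · exact Finset.mem_erase.2
      ⟨hwv, Finset.mem_inter.2 ⟨(G.mem_neighborFinset _ w).2 h, hw⟩⟩

end Geodesics

end LatticeModel

/-! ### Vertices of degree at most four -/

namespace LatticeModel

variable {V : Type*} {G : SimpleGraph V} {v w c : V} {M : LatticeModel G v}
  {g₀ x y : ℤ × ℤ}

variable (M g₀ x) in
/-- A geodesic of `G` from `v` to the vertex of the lattice point `x`, together with a lift of it
to the lattice. -/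
structure GeodesicLift where
  geodesic : G.Walk v (M.label x)
  length_eq : geodesic.length = G.dist v (M.label x)
  walk : triLattice.Walk g₀ x
  liesOver : M.LiesOver {a | a ∈ geodesic.support} walk

lemma nonempty_geodesicLift (hconn : G.Connected) (hg₀ : M.label g₀ = v) (x : ℤ × ℤ) :
    Nonempty (M.GeodesicLift g₀ x) := by
  obtain ⟨p, hp⟩ := hconn.exists_walk_length_eq_dist v (M.label x)
  obtain ⟨Q, hQ⟩ := M.exists_liesOver (p.isPath_of_length_eq_dist hp) g₀ x hg₀ rfl
  exact ⟨p, hp, Q, hQ⟩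

lemma exists_geodesicLift_snd_eq (hconn : G.Connected) (hg₀ : M.label g₀ = v) (h : G.Adj v c)
    (hc : G.dist c (M.label x) + 1 = G.dist v (M.label x)) :
    ∃ a : M.GeodesicLift g₀ x, a.geodesic.snd = c := by
  obtain ⟨p, hp, hpc⟩ := exists_geodesic_snd_eq hconn h hc
  obtain ⟨Q, hQ⟩ := M.exists_liesOver (p.isPath_of_length_eq_dist hp) g₀ x hg₀ rfl
  exact ⟨⟨p, hp, Q, hQ⟩, hpc⟩

namespace GeodesicLift

variable (a : M.GeodesicLift g₀ x) (b : M.GeodesicLift g₀ y) (hxy : triLattice.Adj x y)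

lemma label_eq (hx : M.label x = v) : ∀ g ∈ a.walk.support, M.label g = v :=
  fun _ hg => eq_start_of_mem_support a.length_eq (a.liesOver.label_mem _ hg) hx

variable [DecidableEq V]

lemma label_mem_supportUnion {g : ℤ × ℤ} (hg : g ∈ (fundamentalLoop a.walk hxy b.walk).support) :
    M.label g ∈ supportUnion a.geodesic b.geodesic := by
  rw [Finset.mem_union, List.mem_toFinset, List.mem_toFinset]
  exact ((mem_support_fundamentalLoop ..).1 hg).imp (a.liesOver.label_mem g)
    (b.liesOver.label_mem g)

lemma liesOver_supportUnion_left :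
    M.LiesOver (supportUnion a.geodesic b.geodesic : Finset V) a.walk :=
  a.liesOver.mono fun _ h => Finset.mem_union_left _ (List.mem_toFinset.2 h)

lemma liesOver_supportUnion_right :
    M.LiesOver (supportUnion a.geodesic b.geodesic : Finset V) b.walk :=
  b.liesOver.mono fun _ h => Finset.mem_union_right _ (List.mem_toFinset.2 h)

lemma pair_subset_supportUnion :
    {M.label x, M.label y} ⊆ supportUnion a.geodesic b.geodesic := by
  simp [Finset.insert_subset_iff]

end GeodesicLift

theorem card_le_of_degree_le_three [Fintype V] [DecidableRel G.Adj] (M : LatticeModel G v)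
    (hconn : G.Connected) (hdeg : G.degree v ≤ 3) :
    Fintype.card V ≤ 3 * sn G (fun _ => 2) v + 1 := by
  classical
  by_contra! hlt
  obtain ⟨g₀, hg₀⟩ := M.surjective v
  have a (x) : M.GeodesicLift g₀ x := (nonempty_geodesicLift hconn hg₀ x).some
  obtain ⟨x, y, hxy, hlarge⟩ := M.exists_not_hasSmallSide (W := Finset.univ.erase v)
    (n := sn G (fun _ => 2) v) (fun x => (a x).walk) (fun x => (a x).label_eq) (by simp) (by
      rw [Finset.card_erase_of_mem (Finset.mem_univ v), Finset.card_univ]; omega)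
  refine hlarge <| (hasSmallSide_of_degree_add_card_le hconn
    (fun g => (a x).label_mem_supportUnion (a y) hxy) (a x).length_eq (a y).length_eq (by simp)
    ?_).mono ((a x).pair_subset_supportUnion (a y)) le_rfl
  have := card_neighborFinset_inter_supportUnion_le_two (a x).length_eq (a y).length_eq
  omega

/-- The geodesic of `a` leaves `v` through `n i`, and no geodesic with the same ends leaves `v`
through `n j` for some `j < i`. -/
structure GeodesicLift.IsFirst {k : ℕ} (a : M.GeodesicLift g₀ x) (n : Fin (k + 1) → V)
    (i : Fin (k + 1)) : Prop where
  snd_eq : a.geodesic.snd = n i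
  dist_ne : ∀ j < i, G.dist (n j) (M.label x) + 1 ≠ G.dist v (M.label x)

section Rotation

variable {n : Fin 4 → V} {a : M.GeodesicLift g₀ x} {b : M.GeodesicLift g₀ y} {W : Finset V}
  {i j : Fin 4}

lemma IsRotation.degree_eq [Fintype (G.neighborSet v)] {k : ℕ} {n : Fin (k + 1) → V}
    (hn : M.IsRotation n) : G.degree v = k + 1 := by
  classical
  rw [← G.card_neighborFinset_eq_degree, ← Finset.card_fin (k + 1),
    ← Finset.card_image_of_injective _ hn.injective]
  congr 1
  ext w
  simp [hn.adj_iff]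

lemma exists_isFirst (hconn : G.Connected) (hg₀ : M.label g₀ = v) (hn : M.IsRotation n)
    (hx : M.label x ≠ v) : ∃ (a : M.GeodesicLift g₀ x) (i : Fin 4), a.IsFirst n i := by
  obtain ⟨c, hvc, hc⟩ := exists_adj_dist_add_one hconn hx
  obtain ⟨i, rfl⟩ := (hn.adj_iff c).1 hvc
  obtain ⟨j, hj, hmin⟩ := wellFounded_lt.has_min
    {j | G.dist (n j) (M.label x) + 1 = G.dist v (M.label x)} ⟨i, hc⟩
  obtain ⟨a, ha⟩ := exists_geodesicLift_snd_eq hconn hg₀ ((hn.adj_iff _).2 ⟨j, rfl⟩) hj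
  exact ⟨a, j, ha, fun l hl h => hmin l h hl⟩

lemma GeodesicLift.IsFirst.purelyThrough (ha : a.IsFirst n i) (hn : M.IsRotation n)
    (h : ∀ j, i < j → G.dist (n j) (M.label x) + 1 ≠ G.dist v (M.label x)) :
    PurelyThrough G v a.geodesic.snd (M.label x) := by
  intro c hvc hc
  obtain ⟨j, rfl⟩ := (hn.adj_iff c).1 hvc
  rw [ha.snd_eq]
  rcases lt_trichotomy j i with hj | rfl | hj
  exacts [(ha.dist_ne j hj hc).elim, rfl, (h j hj hc).elim]

/-- Otherwise a geodesic through `n 3` splits the loop into two loops through consecutive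
neighbours of `v`. -/
lemma hasSmallSide_of_isFirst_opposite [Fintype V] [DecidableEq V] [DecidableRel G.Adj]
    (hconn : G.Connected) (hg₀ : M.label g₀ = v) (hn : M.IsRotation n)
    (hdeg : G.degree (n i) ≤ 5) (hxy : triLattice.Adj x y)
    (hx : M.label x ≠ v) (hy : M.label y ≠ v) (ha : a.IsFirst n i) (hb : b.IsFirst n j)
    (hij : i = 0 ∧ j = 2 ∨ i = 1 ∧ j = 3) (hvW : v ∉ W) (hnW : n i ∉ W) :
    M.HasSmallSide (fundamentalLoop a.walk hxy b.walk) {M.label x, M.label y} W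
      (2 * sn G (fun _ => 2) v) := by
  have hadj (i) : G.Adj v (n i) := (hn.adj_iff _).2 ⟨i, rfl⟩
  by_cases hpure : ∀ l, j < l → G.dist (n l) (M.label y) + 1 ≠ G.dist v (M.label y)
  · refine ((hasSmallSide_of_purelyThrough hconn
      (fun g => b.label_mem_supportUnion a hxy.symm) b.length_eq a.length_eq (hb.snd_eq ▸ hadj j)
      (ha.snd_eq ▸ hadj i) ?_ (hb.purelyThrough hn hpure) hn.degree_eq.le (ha.snd_eq ▸ hdeg) hvW
      (ha.snd_eq ▸ hnW)).swap).mono ?_ (by omega)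
    · rw [ha.snd_eq, hb.snd_eq, hn.injective.ne_iff]
      omega
    · rw [Finset.pair_comm]
      exact b.pair_subset_supportUnion a
  · push Not at hpure
    obtain ⟨l, hl, hdist⟩ := hpure
    obtain ⟨rfl, rfl, rfl⟩ : i = 0 ∧ j = 2 ∧ l = 3 := by
      omega
    obtain ⟨b', hb'⟩ := exists_geodesicLift_snd_eq hconn hg₀ (hadj 3) hdist
    have hab' : M.HasSmallSide (fundamentalLoop a.walk hxy b'.walk)
        (supportUnion b'.geodesic a.geodesic) W (sn G (fun _ => 2) v) :=
      hasSmallSide_of_snd_eq_rotation hconn hn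
        ((b'.liesOver_supportUnion_right a).fundamentalLoop (b'.liesOver_supportUnion_left a) hxy
          hx hy) b'.length_eq a.length_eq hvW hb' ha.snd_eq
    have hbb' : M.HasSmallSide (b.walk.append b'.walk.reverse)
        (supportUnion b.geodesic b'.geodesic) W (sn G (fun _ => 2) v) :=
      hasSmallSide_of_snd_eq_rotation hconn hn
        ((b.liesOver_supportUnion_left b').append (b.liesOver_supportUnion_right b').reverse)
        b.length_eq b'.length_eq hvW hb.snd_eq hb'
    refine (hab'.trans hbb').mono ?_ (two_mul _).ge
    exact (a.pair_subset_supportUnion b).trans (Finset.union_subset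
      (Finset.subset_union_right.trans Finset.subset_union_left)
      (Finset.subset_union_left.trans Finset.subset_union_right))

lemma hasSmallSide_of_isFirst_lt [Fintype V] [DecidableEq V] [DecidableRel G.Adj]
    (hconn : G.Connected) (hg₀ : M.label g₀ = v) (hn : M.IsRotation n)
    (h₀ : G.degree (n 0) ≤ 5) (h₁ : G.degree (n 1) ≤ 5) (hxy : triLattice.Adj x y)
    (hx : M.label x ≠ v) (hy : M.label y ≠ v) (ha : a.IsFirst n i) (hb : b.IsFirst n j)
    (hij : i < j) (hvW : v ∉ W) (hnW : ∀ l, n l ∉ W) :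
    M.HasSmallSide (fundamentalLoop a.walk hxy b.walk) {M.label x, M.label y} W
      (2 * sn G (fun _ => 2) v) := by
  have hle : sn G (fun _ => 2) v ≤ 2 * sn G (fun _ => 2) v := by omega
  obtain rfl | ⟨rfl, rfl⟩ | hij : j = i + 1 ∨ (i = 0 ∧ j = 3) ∨ i = 0 ∧ j = 2 ∨ i = 1 ∧ j = 3 := by
    omega
  · refine (hasSmallSide_of_snd_eq_rotation hconn hn ?_ a.length_eq b.length_eq hvW ha.snd_eq
      hb.snd_eq).mono (a.pair_subset_supportUnion b) hle
    exact (a.liesOver_supportUnion_left b).fundamentalLoop (a.liesOver_supportUnion_right b) hxy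
      hx hy
  · refine (hasSmallSide_of_snd_eq_rotation hconn hn ?_ b.length_eq a.length_eq hvW hb.snd_eq
      ha.snd_eq).mono (by
        rw [Finset.pair_comm]; exact b.pair_subset_supportUnion a) hle
    exact (b.liesOver_supportUnion_right a).fundamentalLoop (b.liesOver_supportUnion_left a) hxy
      hx hy
  · refine hasSmallSide_of_isFirst_opposite hconn hg₀ hn ?_ hxy hx hy ha hb hij hvW (hnW i)
    rcases hij with ⟨rfl, -⟩ | ⟨rfl, -⟩
    exacts [h₀, h₁]

lemma GeodesicLift.card_neighborFinset_inter_supportUnion_le_one [Fintype (G.neighborSet v)]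
    [DecidableEq V] (a : M.GeodesicLift g₀ x) (b : M.GeodesicLift g₀ y)
    (h : M.label x = v ∨ M.label y = v ∨ a.geodesic.snd = b.geodesic.snd) :
    (G.neighborFinset v ∩ supportUnion a.geodesic b.geodesic).card ≤ 1 := by
  suffices h : ∃ c, G.neighborFinset v ∩ supportUnion a.geodesic b.geodesic ⊆ {c} from
    h.elim fun c hc => Finset.card_le_card hc
  simp only [Finset.subset_singleton_iff', Finset.mem_inter, SimpleGraph.mem_neighborFinset,
    Finset.mem_union, List.mem_toFinset]
  have ha {w : V} := eq_snd_of_adj (a := w) a.length_eq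
  have hb {w : V} := eq_snd_of_adj (a := w) b.length_eq
  rcases h with hx | hy | hab
  · exact ⟨b.geodesic.snd, fun w ⟨hvw, hw⟩ => hw.elim
      (fun hw => (hvw.ne' (eq_start_of_mem_support a.length_eq hw hx)).elim) (hb · hvw)⟩
  · exact ⟨a.geodesic.snd, fun w ⟨hvw, hw⟩ => hw.elim (ha · hvw)
      (fun hw => (hvw.ne' (eq_start_of_mem_support b.length_eq hw hy)).elim)⟩
  · exact ⟨b.geodesic.snd, fun w ⟨hvw, hw⟩ => hw.elim (hab ▸ ha · hvw) (hb · hvw)⟩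

lemma IsRotation.card_le [Fintype V] [DecidableRel G.Adj] (hconn : G.Connected)
    (hn : M.IsRotation n) (h₀ : G.degree (n 0) ≤ 5) (h₁ : G.degree (n 1) ≤ 5) :
    Fintype.card V ≤ 6 * sn G (fun _ => 2) v + 5 := by
  classical
  by_contra! hlt
  obtain ⟨g₀, hg₀⟩ := M.surjective v
  have first (x) : ∃ (a : M.GeodesicLift g₀ x) (i : Fin 4), M.label x ≠ v → a.IsFirst n i := by
    by_cases hx : M.label x = v
    · exact ⟨(nonempty_geodesicLift hconn hg₀ x).some, 0, (absurd hx ·)⟩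
    · exact (exists_isFirst hconn hg₀ hn hx).imp fun _ => Exists.imp fun _ h _ => h
  choose a i ha using first
  obtain ⟨x, y, hxy, hlarge⟩ := M.exists_not_hasSmallSide (n := 2 * sn G (fun _ => 2) v)
    (W := Finset.univ \ insert v (G.neighborFinset v))
    (fun x => (a x).walk) (fun x => (a x).label_eq) (by simp) (by
      rw [Finset.card_sdiff_of_subset (Finset.subset_univ _), Finset.card_univ,
        Finset.card_insert_of_notMem (by simp), G.card_neighborFinset_eq_degree, hn.degree_eq]
      omega)
  have hnW (j) : n j ∉ Finset.univ \ insert v (G.neighborFinset v) := by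
    simp [(hn.adj_iff (n j)).2 ⟨j, rfl⟩]
  by_cases h : M.label x = v ∨ M.label y = v ∨ (a x).geodesic.snd = (a y).geodesic.snd
  · refine hlarge <| (hasSmallSide_of_degree_add_card_le hconn
      (fun g => (a x).label_mem_supportUnion (a y) hxy) (a x).length_eq (a y).length_eq (by simp)
      ?_).mono ((a x).pair_subset_supportUnion (a y)) (by omega)
    have := (a x).card_neighborFinset_inter_supportUnion_le_one (a y) h
    have := hn.degree_eq
    omega
  · push Not at h
    obtain ⟨hx, hy, hne⟩ := h
    rw [(ha x hx).snd_eq, (ha y hy).snd_eq, hn.injective.ne_iff] at hne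
    rcases hne.lt_or_gt with hij | hij
    · exact hlarge <| hasSmallSide_of_isFirst_lt hconn hg₀ hn h₀ h₁ hxy hx hy (ha x hx) (ha y hy)
        hij (by simp) hnW
    · rw [Finset.pair_comm] at hlarge
      exact hlarge (hasSmallSide_of_isFirst_lt hconn hg₀ hn h₀ h₁ hxy.symm hy hx (ha y hy)
        (ha x hx) hij (by simp) hnW).swap

end Rotation

theorem card_le_of_degree_eq_four [Fintype V] [DecidableRel G.Adj] (M : LatticeModel G v)
    (hconn : G.Connected) (hdeg : G.degree v = 4)
    (hlarge : ∀ a c, G.Adj v a → G.Adj v c → 6 ≤ G.degree a → 6 ≤ G.degree c → a = c) :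
    Fintype.card V ≤ 6 * sn G (fun _ => 2) v + 5 := by
  obtain ⟨n, hn⟩ := M.exists_isRotation hdeg
  have unique {i j : Fin 4} (hi : 6 ≤ G.degree (n i)) (hj : 6 ≤ G.degree (n j)) : i = j :=
    hn.injective (hlarge _ _ ((hn.adj_iff _).2 ⟨i, rfl⟩) ((hn.adj_iff _).2 ⟨j, rfl⟩) hi hj)
  obtain ⟨j, h₀, h₁⟩ : ∃ j : Fin 4, G.degree (n (0 + j)) ≤ 5 ∧ G.degree (n (1 + j)) ≤ 5 := by
    by_contra! h
    have large_or (j : Fin 4) : 6 ≤ G.degree (n j) ∨ 6 ≤ G.degree (n (1 + j)) := by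
      have := h j
      rw [zero_add] at this
      omega
    rcases large_or 0 with h₀ | h₁ <;> rcases large_or 2 with h₂ | h₃
    · exact absurd (unique h₀ h₂) (by decide)
    · exact absurd (unique h₀ h₃) (by decide)
    · exact absurd (unique h₁ h₂) (by decide)
    · exact absurd (unique h₁ h₃) (by decide)
  exact (hn.add j).card_le hconn h₀ h₁

end LatticeModel

/-! ### The edge count of a triangle-free planar graph -/

section EdgeCoboundary

variable {V : Type*} {G : SimpleGraph V}

/-- The parity of the number of times the walk `w` uses the edge `ε`. -/
def edgeParity [DecidableEq V] (ε : Sym2 V) {a b : V} (w : G.Walk a b) : ZMod 2 :=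
  walkSum (fun x y => if s(x, y) = ε then 1 else 0) w

/-- The mod 2 coboundary of a function on the vertices, as a function on the edges. -/
def edgeCoboundary (G : SimpleGraph V) : (V → ZMod 2) →ₗ[ZMod 2] (G.edgeSet → ZMod 2) where
  toFun u ε := Sym2.lift ⟨fun a b => u a + u b, fun _ _ => add_comm _ _⟩ ε.1
  map_add' u u' := by
    ext ⟨ε, hε⟩
    induction ε
    exact add_add_add_comm ..
  map_smul' r u := by
    ext ⟨ε, hε⟩
    induction ε
    exact (mul_add ..).symm

lemma edgeCoboundary_eq {u : V → ZMod 2} {a b : V} {ε : G.edgeSet} (h : s(a, b) = ε) :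
    edgeCoboundary G u ε = u a + u b := by
  obtain ⟨_, hε⟩ := ε
  subst h
  rfl

lemma edgeCoboundary_single [DecidableEq V] (w : V) (ε : G.edgeSet) :
    edgeCoboundary G (Pi.single w 1) ε = if w ∈ ε.1 then 1 else 0 := by
  obtain ⟨ε, hε⟩ := ε
  induction ε with | _ a b =>
  have hab : a ≠ b := G.ne_of_adj hε
  rw [edgeCoboundary_eq rfl]
  simp only [Pi.single_apply, Sym2.mem_iff]
  grind

lemma exists_edgeCoboundary_eq [DecidableEq V] [Fintype G.edgeSet] (hconn : G.Connected)
    {α : G.edgeSet → ZMod 2}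
    (hα : ∀ a (w : G.Walk a a), ∑ ε, α ε * edgeParity ε.1 w = 0) :
    ∃ u, edgeCoboundary G u = α := by
  let c (a b : V) : ZMod 2 := ∑ ε : G.edgeSet, α ε * if s(a, b) = ε.1 then 1 else 0
  have hc (a) (w : G.Walk a a) : walkSum c w = 0 := (walkSum_finsetSum ..).trans (hα a w)
  have hcomm (a b) : c a b = c b a := by simp only [c, Sym2.eq_swap]
  obtain ⟨v⟩ := hconn.nonempty
  let W (a : V) : G.Walk v a := (hconn.preconnected v a).some
  refine ⟨fun a => walkSum c (W a), ?_⟩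
  ext ⟨ε, hε⟩
  induction ε with | _ a b =>
  have hcab : c a b = α ⟨s(a, b), hε⟩ := by simp [c, ← Subtype.ext_iff (a1 := ⟨s(a, b), hε⟩)]
  have := walkSum_fundamentalLoop hcomm (W a) hε (W b)
  rw [edgeCoboundary_eq rfl]
  grind

lemma finrank_range_edgeCoboundary_lt [Fintype V] [Nonempty V] :
    Module.finrank (ZMod 2) (LinearMap.range (edgeCoboundary G)) < Fintype.card V := by
  have hone : (1 : V → ZMod 2) ∈ LinearMap.ker (edgeCoboundary G) := by
    ext ⟨ε, hε⟩
    induction ε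
    exact CharTwo.add_self_eq_zero 1
  have hpos : 0 < Module.finrank (ZMod 2) (LinearMap.ker (edgeCoboundary G)) :=
    Module.finrank_pos_iff_exists_ne_zero.2
      ⟨⟨1, hone⟩, fun h => one_ne_zero (congrArg Subtype.val h)⟩
  have := LinearMap.finrank_range_add_finrank_ker (edgeCoboundary G)
  rw [Module.finrank_fintype_fun_eq_card] at this
  omega

/-- From an edge `ab` of the set one finds further edges `ad`, `bc` and `cx` in it. -/
lemma four_le_card_of_even_degree [DecidableEq V] (hfree : G.CliqueFree 3) {B : Finset (Sym2 V)}
    (hBG : ∀ ε ∈ B, ε ∈ G.edgeSet) (hB : B.Nonempty)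
    (heven : ∀ w : V, Even (B.filter (w ∈ ·)).card) : 4 ≤ B.card := by
  have hnext (w a : V) (h : s(w, a) ∈ B) : ∃ b, s(w, b) ∈ B ∧ b ≠ a := by
    by_contra! hcon
    have hone : B.filter (w ∈ ·) = {s(w, a)} := by
      refine Finset.eq_singleton_iff_unique_mem.2 ⟨by simpa using h, fun ε hε => ?_⟩
      obtain ⟨hεB, b, rfl⟩ := Finset.mem_filter.1 hε
      rw [hcon b hεB]
    simpa [hone] using heven w
  obtain ⟨ε, hab⟩ := hB
  induction ε with | _ a b =>
  obtain ⟨d, had, hdb⟩ := hnext a b hab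
  obtain ⟨c, hbc, hca⟩ := hnext b a (Sym2.eq_swap ▸ hab)
  obtain ⟨x, hcx, hxb⟩ := hnext c b (Sym2.eq_swap ▸ hbc)
  have hcd : c ≠ d := by
    rintro rfl
    exact hfree {a, b, c} (SimpleGraph.is3Clique_triple_iff.2 ⟨hBG _ hab, hBG _ had, hBG _ hbc⟩)
  have := G.ne_of_adj (hBG _ hab)
  have := G.ne_of_adj (hBG _ had)
  have := G.ne_of_adj (hBG _ hbc)
  have hsub : {s(a, b), s(a, d), s(b, c), s(c, x)} ⊆ B := by grind
  refine le_of_eq_of_le ?_ (Finset.card_le_card hsub)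
  repeat rw [Finset.card_insert_of_notMem (by simp; grind)]
  simp

end EdgeCoboundary

section FaceBoundary

variable {E Φ : Type*} [DecidableEq Φ] (F F' : E → Φ) {f : Φ} {ε : E}

/-- Whether the face `f` is on exactly one side of the edge `ε`, as an element of `ZMod 2`, where
`F` and `F'` give the two sides of each edge. -/
def faceBoundary (f : Φ) (ε : E) : ZMod 2 :=
  (if F ε = f then 1 else 0) + if F' ε = f then 1 else 0

variable {F F'} in
lemma faceBoundary_ne_zero_iff :
    faceBoundary F F' f ε ≠ 0 ↔ F ε ≠ F' ε ∧ (F ε = f ∨ F' ε = f) := by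
  unfold faceBoundary
  grind

variable [Fintype E]

/-- The mod 2 boundary operator dual to the faces: it sends a set of edges to the faces having an
odd number of these edges in their boundary. -/
def dualBoundary : (E → ZMod 2) →ₗ[ZMod 2] (Φ → ZMod 2) :=
  Matrix.mulVecLin (faceBoundary F F')

lemma dualBoundary_apply (α : E → ZMod 2) (f : Φ) :
    dualBoundary F F' α f = ∑ ε, faceBoundary F F' f ε * α ε := rfl

/-- The faces with nonempty boundary. -/
def properFaces : Finset Φ :=
  (Finset.univ.filter fun ε => F ε ≠ F' ε).biUnion fun ε => {F ε, F' ε}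

lemma mem_properFaces : f ∈ properFaces F F' ↔ ∃ ε, faceBoundary F F' f ε ≠ 0 := by
  simp [properFaces, faceBoundary_ne_zero_iff, eq_comm (a := f)]

lemma sum_dualBoundary_mul {D : Finset Φ} (hD : ∀ ε, F ε ∈ D ∧ F' ε ∈ D) (α : E → ZMod 2)
    (h : Φ → ZMod 2) :
    ∑ f ∈ D, dualBoundary F F' α f * h f = ∑ ε, α ε * (h (F ε) + h (F' ε)) := by
  simp only [dualBoundary_apply, Finset.sum_mul]
  rw [Finset.sum_comm]
  refine Finset.sum_congr rfl fun ε _ => ?_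
  simp [faceBoundary, add_mul, mul_add, Finset.sum_add_distrib, hD]

variable {F F'} in
lemma sum_mul_add_eq_zero {α : E → ZMod 2} (hα : dualBoundary F F' α = 0) (h : Φ → ZMod 2) :
    ∑ ε, α ε * (h (F ε) + h (F' ε)) = 0 := by
  rw [← sum_dualBoundary_mul F F' (D := Finset.univ.biUnion fun ε => {F ε, F' ε}) (by simp; grind)]
  simp [hα]

lemma sum_dualBoundary_eq_zero (α : E → ZMod 2) :
    ∑ f ∈ properFaces F F', dualBoundary F F' α f = 0 := by
  simp only [dualBoundary_apply]
  rw [Finset.sum_comm]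
  refine Finset.sum_eq_zero fun ε _ => ?_
  rw [← Finset.sum_mul]
  by_cases h : F ε = F' ε
  · simp [faceBoundary, h, CharTwo.add_self_eq_zero]
  · have hF : F ε ∈ properFaces F F' :=
      (mem_properFaces F F').2 ⟨ε, faceBoundary_ne_zero_iff.2 ⟨h, .inl rfl⟩⟩
    have hF' : F' ε ∈ properFaces F F' :=
      (mem_properFaces F F').2 ⟨ε, faceBoundary_ne_zero_iff.2 ⟨h, .inr rfl⟩⟩
    simp [faceBoundary, Finset.sum_add_distrib, hF, hF', CharTwo.add_self_eq_zero]

lemma dualBoundary_apply_of_notMem (α : E → ZMod 2) (hf : f ∉ properFaces F F') :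
    dualBoundary F F' α f = 0 := by
  simp only [mem_properFaces, not_exists, not_not] at hf
  simp [dualBoundary_apply, hf]

lemma card_le_finrank_ker_dualBoundary_add {S : Finset Φ}
    (hS : ∀ α, (∀ f ∈ S, dualBoundary F F' α f = 0) → dualBoundary F F' α = 0) :
    Fintype.card E ≤ Module.finrank (ZMod 2) (LinearMap.ker (dualBoundary F F')) + S.card := by
  let L := (LinearMap.funLeft (ZMod 2) (ZMod 2) ((↑) : S → Φ)) ∘ₗ dualBoundary F F'
  have hker : LinearMap.ker L ≤ LinearMap.ker (dualBoundary F F') :=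
    fun α hα => hS α fun f hf => congrFun (LinearMap.mem_ker.1 hα) ⟨f, hf⟩
  have hL := LinearMap.finrank_range_add_finrank_ker L
  have hrange := Submodule.finrank_le (LinearMap.range L)
  have := Submodule.finrank_mono hker
  rw [Module.finrank_fintype_fun_eq_card] at hL hrange
  rw [Fintype.card_coe] at hrange
  omega

/-- The boundaries of the proper faces add up to zero, so that one face may be left out. -/
lemma card_le_finrank_ker_dualBoundary_add_card_properFaces :
    Fintype.card E ≤ Module.finrank (ZMod 2) (LinearMap.ker (dualBoundary F F')) +
      ((properFaces F F').card - 1) := by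
  have hzero {α} (h : ∀ f ∈ properFaces F F', dualBoundary F F' α f = 0) :
      dualBoundary F F' α = 0 := by
    ext f
    by_cases hf : f ∈ properFaces F F'
    · exact h f hf
    · exact dualBoundary_apply_of_notMem F F' α hf
  obtain hempty | ⟨f₀, hf₀⟩ := (properFaces F F').eq_empty_or_nonempty
  · simpa [hempty] using card_le_finrank_ker_dualBoundary_add F F' fun _ => hzero
  rw [← Finset.card_erase_of_mem hf₀]
  refine card_le_finrank_ker_dualBoundary_add F F' fun α hα => hzero fun f hf => ?_
  by_cases hff₀ : f = f₀
  · have := sum_dualBoundary_eq_zero F F' α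
    rwa [Finset.sum_eq_single_of_mem f hf fun g hg hgf =>
      hα g (Finset.mem_erase.2 ⟨hff₀ ▸ hgf, hg⟩)] at this
  · exact hα f (Finset.mem_erase.2 ⟨hff₀, hf⟩)

lemma mul_card_properFaces_le {m : ℕ}
    (hm : ∀ f ∈ properFaces F F', m ≤ (Finset.univ.filter (faceBoundary F F' f · ≠ 0)).card) :
    m * (properFaces F F').card ≤ 2 * Fintype.card E := by
  have htwo (ε : E) : ((properFaces F F').filter (faceBoundary F F' · ε ≠ 0)).card ≤ 2 := by
    refine (Finset.card_le_card fun f hf => ?_).trans (Finset.card_le_two (a := F ε) (b := F' ε))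
    have := faceBoundary_ne_zero_iff.1 (Finset.mem_filter.1 hf).2
    grind
  have := Finset.card_mul_le_card_mul (fun f ε => faceBoundary F F' f ε ≠ 0)
    (s := properFaces F F') (t := Finset.univ) hm fun ε _ => htwo ε
  rw [Finset.card_univ] at this
  linarith

end FaceBoundary

section EdgeCount

variable {V Φ : Type*} [DecidableEq Φ] {G : SimpleGraph V} [Fintype G.edgeSet]
  {F F' : G.edgeSet → Φ}

lemma four_le_card_faceBoundary (hfree : G.CliqueFree 3)
    (hcycle : ∀ u, dualBoundary F F' (edgeCoboundary G u) = 0) {f : Φ}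
    (hf : f ∈ properFaces F F') : 4 ≤ (Finset.univ.filter (faceBoundary F F' f · ≠ 0)).card := by
  classical
  set B := Finset.univ.filter (faceBoundary F F' f · ≠ 0) with hB
  rw [← Finset.card_map (.subtype _)]
  refine four_le_card_of_even_degree hfree (fun ε hε => ?_) ?_ fun w => ?_
  · obtain ⟨ε, -, rfl⟩ := Finset.mem_map.1 hε
    exact ε.2
  · obtain ⟨ε, hε⟩ := (mem_properFaces F F').1 hf
    exact Finset.map_nonempty.2 ⟨ε, by simpa [hB] using hε⟩
  · rw [Finset.filter_map, Finset.card_map, ← ZMod.natCast_eq_zero_iff_even,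
      ← Pi.zero_apply (M := fun _ : Φ => ZMod 2) f, ← hcycle (Pi.single w 1), dualBoundary_apply,
      hB, Finset.filter_filter, Finset.card_filter]
    push_cast
    refine Finset.sum_congr rfl fun ε _ => ?_
    rw [edgeCoboundary_single]
    generalize faceBoundary F F' f ε = x
    obtain rfl | rfl : x = 0 ∨ x = 1 := by decide +revert
    · simp
    · simp

theorem card_edgeSet_add_four_le_of_exact [Fintype V] [Nonempty V] (hn : 3 ≤ Fintype.card V)
    (hfree : G.CliqueFree 3)
    (hexact : LinearMap.ker (dualBoundary F F') = LinearMap.range (edgeCoboundary G)) :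
    Fintype.card G.edgeSet + 4 ≤ 2 * Fintype.card V := by
  have hcycle (u) : dualBoundary F F' (edgeCoboundary G u) = 0 :=
    LinearMap.mem_ker.1 (hexact ▸ LinearMap.mem_range_self _ u)
  have := card_le_finrank_ker_dualBoundary_add_card_properFaces F F'
  have := finrank_range_edgeCoboundary_lt (G := G)
  have := mul_card_properFaces_le F F' fun f => four_le_card_faceBoundary hfree hcycle
  rw [hexact] at *
  omega

end EdgeCount

section Darts

variable {α A ι : Type*} {H : SimpleGraph α}

lemma finsum_dart_eq_sum [AddCommGroup A] [Fintype ι] {e : ι → H.Dart}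
    (he : Function.Injective fun i => (e i).edge) {φ : H.Dart → A}
    (hφ : (Function.support φ).Finite)
    (hcancel : ∀ d, (∀ i, d.edge ≠ (e i).edge) → φ d + φ d.symm = 0) :
    ∑ᶠ d, φ d = ∑ i, (φ (e i) + φ (e i).symm) := by
  classical
  set T : Finset H.Dart := Finset.univ.image e ∪ Finset.univ.image fun i => (e i).symm with hT
  have hmem (d : H.Dart) : d ∈ T ↔ ∃ i, d.edge = (e i).edge := by
    simp only [hT, Finset.mem_union, Finset.mem_image, Finset.mem_univ, true_and,
      ← exists_or, SimpleGraph.dart_edge_eq_iff]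
    grind [SimpleGraph.Dart.symm_symm]
  have hrest : ∑ d ∈ hφ.toFinset \ T, φ d = 0 := by
    refine Finset.sum_involution (fun d _ => d.symm) (fun d hd => hcancel d ?_)
      (fun d _ _ => d.symm_ne) (fun d hd => ?_) fun d _ => d.symm_symm
    · simpa [hmem] using (Finset.mem_sdiff.1 hd).2
    · simp only [Finset.mem_sdiff, Set.Finite.mem_toFinset, Function.mem_support, hmem,
        SimpleGraph.Dart.edge_symm] at hd ⊢
      refine ⟨fun h => hd.1 ?_, hd.2⟩
      simpa [h] using hcancel d (not_exists.1 hd.2)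
  rw [finsum_eq_sum_of_support_subset φ (s := T ∪ hφ.toFinset) (by simp),
    ← Finset.union_sdiff_self_eq_union, Finset.sum_union Finset.disjoint_sdiff, hrest, add_zero, hT,
    Finset.sum_union, Finset.sum_image, Finset.sum_image, Finset.sum_add_distrib]
  · exact fun i _ j _ hij => he (by simpa using congrArg SimpleGraph.Dart.edge hij)
  · exact fun i _ j _ hij => he (congrArg SimpleGraph.Dart.edge hij)
  · refine Finset.disjoint_left.2 ?_
    rintro _ hi hj
    obtain ⟨i, -, rfl⟩ := Finset.mem_image.1 hi
    obtain ⟨j, -, hj⟩ := Finset.mem_image.1 hj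
    obtain rfl := he (by simpa using congrArg SimpleGraph.Dart.edge hj)
    exact (e j).symm_ne hj

/-- The next dart counterclockwise along the face to the left of a dart. -/
def nextDart : triLattice.Dart ≃ triLattice.Dart where
  toFun d := ⟨(d.snd, apex d.fst d.snd), adj_apex_right d.adj⟩
  invFun d := ⟨(apex d.fst d.snd, d.fst), (adj_apex_left d.adj).symm⟩
  left_inv d := by simp
  right_inv d := by simp

lemma finsum_dart_eq_zero_of_nextDart {φ : triLattice.Dart → ZMod 2}
    (hφ : (Function.support φ).Finite)
    (hface : ∀ d, φ d + φ (nextDart d) + φ (nextDart (nextDart d)) = 0) : ∑ᶠ d, φ d = 0 := by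
  have hnext (ψ : triLattice.Dart → ZMod 2) : ∑ᶠ d, ψ (nextDart d) = ∑ᶠ d, ψ d :=
    finsum_comp_equiv nextDart
  have hfin {ψ : triLattice.Dart → ZMod 2} (hψ : (Function.support ψ).Finite) :
      (Function.support fun d => ψ (nextDart d)).Finite := hψ.preimage nextDart.injective.injOn
  have hsum : ∑ᶠ d, (φ d + φ (nextDart d) + φ (nextDart (nextDart d))) = 0 := by
    simp only [hface, finsum_zero]
  rw [finsum_add_distrib ((hφ.union (hfin hφ)).subset (Function.support_add _ _)) (hfin (hfin hφ)),
    finsum_add_distrib hφ (hfin hφ), hnext fun d => φ (nextDart d), hnext,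
    CharTwo.add_self_eq_zero, zero_add] at hsum
  exact hsum

end Darts

namespace LatticeModel

variable {V : Type*} {G : SimpleGraph V} {v : V} (M : LatticeModel G v)

lemma exists_edgeLift (ε : G.edgeSet) :
    ∃ d : triLattice.Dart, s(M.label d.fst, M.label d.snd) = ε := by
  obtain ⟨ε, hε⟩ := ε
  induction ε with | _ a b =>
  obtain ⟨s, t, hst, rfl, rfl⟩ := M.exists_adj hε
  exact ⟨⟨(s, t), hst⟩, rfl⟩

/-- A lattice edge, with an orientation, representing the edge `ε` of `G`. -/
noncomputable def edgeLift (ε : G.edgeSet) : triLattice.Dart := (M.exists_edgeLift ε).choose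

lemma label_edgeLift (ε : G.edgeSet) :
    s(M.label (M.edgeLift ε).fst, M.label (M.edgeLift ε).snd) = ε :=
  (M.exists_edgeLift ε).choose_spec

lemma map_edge_edgeLift (ε : G.edgeSet) : (M.edgeLift ε).edge.map M.label = ε := M.label_edgeLift ε

lemma label_ne_of_edge_edgeLift_eq {ε : G.edgeSet} {s t : ℤ × ℤ}
    (h : (M.edgeLift ε).edge = s(s, t)) : M.label s ≠ M.label t := by
  have hε : s(M.label s, M.label t) = ε :=
    (congrArg (Sym2.map M.label) h).symm.trans (M.map_edge_edgeLift ε)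
  exact G.ne_of_adj (G.mem_edgeSet.1 (hε ▸ ε.2))

lemma edge_edgeLift_injective : Function.Injective fun ε => (M.edgeLift ε).edge :=
  fun ε ε' h => Subtype.ext <|
    (M.map_edge_edgeLift ε).symm.trans ((congrArg _ h).trans (M.map_edge_edgeLift ε'))

/-- The lattice edges separating faces of the model: those inside a region, so that the triangles
there have empty boundary, and the chosen representatives of the edges of `G`. -/
def IsWall (s t : ℤ × ℤ) : Prop :=
  M.label s = M.label t ∨ ∃ ε, (M.edgeLift ε).edge = s(s, t)

/-- The faces of the model: lattice triangles, merged across the edges that are not walls. -/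
def Face : Type :=
  Quot fun τ τ' => ∃ s t, triLattice.Adj s t ∧ ¬ M.IsWall s t ∧ τ = leftFace s t ∧ τ' = leftFace t s

/-- The face of the model to the left of a dart. -/
def face (d : triLattice.Dart) : M.Face := Quot.mk _ (leftFace d.fst d.snd)

lemma face_nextDart (d : triLattice.Dart) : M.face (nextDart d) = M.face d :=
  congrArg (Quot.mk _) (leftFace_rotate d.fst d.snd)

lemma face_symm {d : triLattice.Dart} (hd : ¬ M.IsWall d.fst d.snd) : M.face d.symm = M.face d :=
  (Quot.sound ⟨_, _, d.adj, hd, rfl, rfl⟩).symm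

/-- The face to the left of the lattice edge representing `ε`. -/
noncomputable def leftSide (ε : G.edgeSet) : M.Face := M.face (M.edgeLift ε)

/-- The face to the right of the lattice edge representing `ε`. -/
noncomputable def rightSide (ε : G.edgeSet) : M.Face := M.face (M.edgeLift ε).symm

lemma finite_support_coboundary_label (u : V → ZMod 2) :
    (Function.support fun d : triLattice.Dart =>
      u (M.label d.fst) + u (M.label d.snd)).Finite := by
  obtain ⟨m, hm⟩ := M.exists_box
  let I := Finset.Icc (-(m + 1)) (m + 1)
  refine (((I ×ˢ I) ×ˢ (I ×ˢ I)).finite_toSet.preimage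
    (SimpleGraph.Dart.toProd_injective.injOn)).subset fun d hd => ?_
  have hbox : ¬ (d.fst ∈ outsideBox m ∧ d.snd ∈ outsideBox m) := fun h =>
    hd (by simp only [hm _ h.1, hm _ h.2, CharTwo.add_self_eq_zero])
  have := triLattice_adj.1 d.adj
  simp only [outsideBox, Set.mem_ofPred_eq, lt_abs] at hbox
  simp only [Set.mem_preimage, Finset.mem_coe, Finset.mem_product, Finset.mem_Icc, I]
  omega

lemma exists_walk_of_label_eq {x y : ℤ × ℤ} (h : M.label x = M.label y) :
    ∃ Q : triLattice.Walk x y, ∀ s t, M.label s ≠ M.label t → edgeParity s(s, t) Q = 0 := by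
  obtain ⟨Q, hQ⟩ := exists_walk_of_preconnected_induce (M.fibre_preconnected (M.label y)) h rfl
  refine ⟨Q, fun s t hst => walkSum_edgeIndicator_eq_zero Q ?_⟩
  by_contra! hcon
  exact hst ((hQ s hcon.1).trans (hQ t hcon.2).symm)

lemma exists_edge_edgeLift_eq {a b : V} (h : G.Adj a b) :
    ∃ s t, triLattice.Adj s t ∧ M.label s = a ∧ M.label t = b ∧
      (M.edgeLift ⟨s(a, b), h⟩).edge = s(s, t) := by
  obtain ⟨h₁, h₂⟩ | ⟨h₁, h₂⟩ := Sym2.eq_iff.1 (M.label_edgeLift ⟨s(a, b), h⟩)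
  · exact ⟨_, _, (M.edgeLift _).adj, h₁, h₂, rfl⟩
  · exact ⟨_, _, (M.edgeLift _).adj.symm, h₂, h₁, Sym2.eq_swap⟩

lemma exists_walk_edgeParity_eq [DecidableEq V] {a b : V} (p : G.Walk a b) (x y : ℤ × ℤ)
    (hx : M.label x = a) (hy : M.label y = b) : ∃ Q : triLattice.Walk x y,
      (∀ ε, edgeParity (M.edgeLift ε).edge Q = edgeParity ε.1 p) ∧
      ∀ s t, ¬ M.IsWall s t → edgeParity s(s, t) Q = 0 := by
  induction p generalizing x with
  | nil =>
    obtain ⟨Q, hQ⟩ := M.exists_walk_of_label_eq (hx.trans hy.symm)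
    exact ⟨Q, fun ε => hQ _ _ (M.label_ne_of_edge_edgeLift_eq rfl), fun s t h => hQ s t (h ∘ .inl)⟩
  | @cons a b _ h p ih =>
    obtain ⟨s, t, hst, hs, ht, hlift⟩ := M.exists_edge_edgeLift_eq h
    obtain ⟨Q, hQ⟩ := M.exists_walk_of_label_eq (hx.trans hs.symm)
    obtain ⟨Q', hQ', hQ''⟩ := ih t ht hy
    refine ⟨Q.append (.cons hst Q'), fun ε => ?_, fun s' t' hwall => ?_⟩
    · have hiff : s(s, t) = (M.edgeLift ε).edge ↔ s(a, b) = ε.1 := by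
        rw [← hlift, M.edge_edgeLift_injective.eq_iff, Subtype.ext_iff]
      have hflat : edgeParity (M.edgeLift ε).edge Q = 0 :=
        hQ _ _ (M.label_ne_of_edge_edgeLift_eq (ε := ε) rfl)
      have := hQ' ε
      simp_all only [edgeParity, walkSum_append, walkSum_cons, zero_add]
    · have hne : s(s, t) ≠ s(s', t') := fun heq => hwall (.inr ⟨_, hlift.trans heq⟩)
      have := hQ _ _ (hwall ∘ .inl)
      have := hQ'' _ _ hwall
      simp_all [edgeParity, walkSum_append]

section

variable [Fintype G.edgeSet] [DecidableEq M.Face]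

/-- Sum the coboundary over all darts having the face `f` on their left. -/
lemma dualBoundary_edgeCoboundary (u : V → ZMod 2) :
    dualBoundary M.leftSide M.rightSide (edgeCoboundary G u) = 0 := by
  ext f
  let δ (d : triLattice.Dart) : ZMod 2 := u (M.label d.fst) + u (M.label d.snd)
  have hδ (d) : δ d.symm = δ d := add_comm _ _
  let φ (d : triLattice.Dart) : ZMod 2 := (if M.face d = f then 1 else 0) * δ d
  have hφ : (Function.support φ).Finite :=
    (M.finite_support_coboundary_label u).subset (Function.support_mul_subset_right _ _)
  have hzero : ∑ᶠ d, φ d = 0 := finsum_dart_eq_zero_of_nextDart hφ fun d => by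
    simp only [φ, face_nextDart, ← mul_add]
    simp only [δ, nextDart, Equiv.coe_fn_mk, apex_apex_right]
    grind
  rw [finsum_dart_eq_sum M.edge_edgeLift_injective hφ fun d hd => ?_] at hzero
  · refine (Finset.sum_congr rfl fun ε _ => ?_).trans hzero
    simp only [φ, hδ, ← add_mul]
    exact congrArg _ (edgeCoboundary_eq (M.label_edgeLift ε))
  · by_cases hlabel : M.label d.fst = M.label d.snd
    · simp [φ, δ, hlabel, CharTwo.add_self_eq_zero]
    · have := M.face_symm (d := d) fun h => h.elim hlabel fun ⟨ε, hε⟩ => hd ε hε.symm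
      simp only [φ, this, hδ, CharTwo.add_self_eq_zero]

lemma sum_mul_edgeParity_eq_zero [DecidableEq V] {α : G.edgeSet → ZMod 2}
    (hα : dualBoundary M.leftSide M.rightSide α = 0) {a : V} (p : G.Walk a a) :
    ∑ ε, α ε * edgeParity ε.1 p = 0 := by
  obtain ⟨x, hx⟩ := M.surjective a
  obtain ⟨Q, hQ, hQ'⟩ := M.exists_walk_edgeParity_eq p x x hx hx
  let h : M.Face → ZMod 2 := Quot.lift (faceWinding · Q) <| by
    rintro _ _ ⟨s, t, hst, hwall, rfl, rfl⟩
    exact CharTwo.add_eq_zero.1 ((faceWinding_add_faceWinding hst Q).trans (hQ' s t hwall))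
  rw [← sum_mul_add_eq_zero hα h]
  refine Finset.sum_congr rfl fun ε _ => ?_
  rw [← hQ ε]
  exact congrArg _ (faceWinding_add_faceWinding (M.edgeLift ε).adj Q).symm

end

theorem card_edgeSet_add_four_le (M : LatticeModel G v) [Fintype V] [Fintype G.edgeSet]
    (hconn : G.Connected) (hn : 3 ≤ Fintype.card V) (hfree : G.CliqueFree 3) :
    Fintype.card G.edgeSet + 4 ≤ 2 * Fintype.card V := by
  classical
  have := hconn.nonempty
  refine card_edgeSet_add_four_le_of_exact (F := M.leftSide) (F' := M.rightSide) hn hfree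
    (le_antisymm (fun α hα => exists_edgeCoboundary_eq hconn fun _ =>
      M.sum_mul_edgeParity_eq_zero hα) ?_)
  rintro _ ⟨u, rfl⟩
  exact M.dualBoundary_edgeCoboundary u

end LatticeModel

/-! ### Discharging -/

section Discharging

variable {V : Type*} [Fintype V] {G : SimpleGraph V} [DecidableRel G.Adj]

variable (G) in
/-- The charge that `x` sends to `y` under the discharging rule: every vertex of degree at least six
sends half the number of vertices to each of its neighbours of degree four. -/
noncomputable def sentCharge (x y : V) : ℝ :=
  if G.Adj x y ∧ 6 ≤ G.degree x ∧ G.degree y = 4 then Fintype.card V / 2 else 0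

lemma sentCharge_nonneg (x y : V) : 0 ≤ sentCharge G x y := by
  unfold sentCharge
  split_ifs <;> positivity

lemma sum_sentCharge_eq_zero {x : V} (hx : G.degree x < 6) : ∑ y, sentCharge G x y = 0 :=
  Finset.sum_eq_zero fun _ _ => if_neg fun h => hx.not_ge h.2.1

lemma sum_sentCharge_le (x : V) :
    ∑ y, sentCharge G x y ≤ G.degree x * (Fintype.card V / 2 : ℝ) := by
  calc ∑ y, sentCharge G x y
      ≤ ∑ y, if G.Adj x y then (Fintype.card V / 2 : ℝ) else 0 := by
        refine Finset.sum_le_sum fun y _ => ?_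
        unfold sentCharge
        split_ifs with h h' h'
        · exact le_rfl
        · exact absurd h.1 h'
        · positivity
        · exact le_rfl
    _ = G.degree x * (Fintype.card V / 2 : ℝ) := by
        rw [← Finset.sum_filter, Finset.sum_const, ← G.neighborFinset_eq_filter,
          G.card_neighborFinset_eq_degree, nsmul_eq_mul]

lemma card_le_sum_sentCharge {y a c : V} (hy : G.degree y = 4) (hac : a ≠ c) (ha : G.Adj y a)
    (hc : G.Adj y c) (ha6 : 6 ≤ G.degree a) (hc6 : 6 ≤ G.degree c) :
    (Fintype.card V : ℝ) ≤ ∑ x, sentCharge G x y := by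
  classical
  have hpair : ∑ x ∈ {a, c}, sentCharge G x y ≤ ∑ x, sentCharge G x y :=
    Finset.sum_le_sum_of_subset_of_nonneg (Finset.subset_univ _) fun x _ _ => sentCharge_nonneg x y
  have hsend : ∀ x, G.Adj y x → 6 ≤ G.degree x → sentCharge G x y = Fintype.card V / 2 :=
    fun x hx hx6 => if_pos ⟨hx.symm, hx6, hy⟩
  rwa [Finset.sum_pair hac, hsend a ha ha6, hsend c hc hc6, add_halves] at hpair

lemma sum_sentCharge_sub_sum_le {s : ℕ} {v : V}
    (h2 : G.degree v ≤ 2 → Fintype.card V ≤ s + 1)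
    (h3 : G.degree v ≤ 3 → Fintype.card V ≤ 3 * s + 1)
    (h4 : G.degree v = 4 →
      (∀ a c, G.Adj v a → G.Adj v c → 6 ≤ G.degree a → 6 ≤ G.degree c → a = c) →
      Fintype.card V ≤ 6 * s + 5) :
    ∑ y, sentCharge G v y - ∑ x, sentCharge G x v ≤
      9 * s + 9 + (2 * G.degree v - 9) * (Fintype.card V : ℝ) := by
  have hin : 0 ≤ ∑ x, sentCharge G x v := Finset.sum_nonneg fun x _ => sentCharge_nonneg x v
  rcases lt_or_ge (G.degree v) 6 with hlt | hge
  · rw [sum_sentCharge_eq_zero hlt]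
    obtain hd | hd | hd | hd :
        G.degree v ≤ 2 ∨ G.degree v = 3 ∨ G.degree v = 4 ∨ G.degree v = 5 := by omega
    · have hs : (Fintype.card V : ℝ) ≤ s + 1 := mod_cast h2 hd
      have : 0 ≤ (G.degree v : ℝ) * Fintype.card V := by positivity
      linarith
    · have hs : (Fintype.card V : ℝ) ≤ 3 * s + 1 := mod_cast h3 hd.le
      rw [hd]
      push_cast
      linarith
    · rw [hd]
      push_cast
      by_cases hlarge : ∀ a c, G.Adj v a → G.Adj v c → 6 ≤ G.degree a → 6 ≤ G.degree c → a = c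
      · have hs : (Fintype.card V : ℝ) ≤ 6 * s + 5 := mod_cast h4 hd hlarge
        linarith
      · push Not at hlarge
        obtain ⟨a, c, ha, hc, ha6, hc6, hac⟩ := hlarge
        linarith [card_le_sum_sentCharge hd hac ha hc ha6 hc6]
    · rw [hd]
      push_cast
      linarith
  · have hout := sum_sentCharge_le (G := G) v
    have hd : (6 : ℝ) ≤ G.degree v := mod_cast hge
    nlinarith [Nat.cast_nonneg (α := ℝ) (Fintype.card V)]

/-- Charge is neither created nor destroyed, so summing the bound at each vertex leaves
`4|E| n ≤ 8n² - 16n` against `9n² - 9n - 9 ∑ s`. -/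
theorem card_sq_lt_nine_mul_sum {s : V → ℕ}
    (hE : G.edgeFinset.card + 4 ≤ 2 * Fintype.card V)
    (h2 : ∀ v, G.degree v ≤ 2 → Fintype.card V ≤ s v + 1)
    (h3 : ∀ v, G.degree v ≤ 3 → Fintype.card V ≤ 3 * s v + 1)
    (h4 : ∀ v, G.degree v = 4 →
      (∀ a c, G.Adj v a → G.Adj v c → 6 ≤ G.degree a → 6 ≤ G.degree c → a = c) →
      Fintype.card V ≤ 6 * s v + 5) :
    (Fintype.card V : ℝ) ^ 2 < 9 * ∑ v, (s v : ℝ) := by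
  have hsum := Finset.sum_le_sum fun v (_ : v ∈ Finset.univ) =>
    sum_sentCharge_sub_sum_le (h2 v) (h3 v) (h4 v)
  have hdegree : ∑ v, (G.degree v : ℝ) = 2 * G.edgeFinset.card :=
    mod_cast G.sum_degrees_eq_twice_card_edges
  rw [Finset.sum_sub_distrib, Finset.sum_comm, sub_self, Finset.sum_add_distrib,
    Finset.sum_add_distrib, ← Finset.mul_sum, ← Finset.sum_mul, Finset.sum_sub_distrib,
    ← Finset.mul_sum, hdegree] at hsum
  simp only [Finset.sum_const, Finset.card_univ, nsmul_eq_mul] at hsum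
  have hE' : (G.edgeFinset.card : ℝ) + 4 ≤ 2 * Fintype.card V := mod_cast hE
  have hn : (0 : ℝ) < Fintype.card V := mod_cast (by omega : 0 < Fintype.card V)
  nlinarith [hn]

end Discharging

section SurvivingRate

variable {V : Type*} [Fintype V] {G : SimpleGraph V}

lemma card_le_sn_add_one_of_degree_le_two [DecidableRel G.Adj] (hconn : G.Connected) {v : V}
    (hv : G.degree v ≤ 2) : Fintype.card V ≤ sn G (fun _ => 2) v + 1 := by
  classical
  have h := card_sdiff_singleton_le_sn (P := ∅) (Q := ∅) (S := Finset.univ.erase v)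
    (N := G.neighborFinset v) hconn (by simp) (by simp) (fun y z _ _ => by simp [em]) hv
    fun w _ hw => (G.mem_neighborFinset v w).2 hw
  rw [Finset.union_empty, Finset.empty_union, Finset.sdiff_singleton_eq_erase, Finset.erase_idem,
    Finset.card_erase_of_mem (Finset.mem_univ v), Finset.card_univ] at h
  omega

lemma card_sq_lt_nine_mul_sum_sn_of_card_eq_two (hconn : G.Connected) (hn : Fintype.card V = 2) :
    (Fintype.card V : ℝ) ^ 2 < 9 * ∑ v, (sn G (fun _ => 2) v : ℝ) := by
  classical
  have hsn : ∀ v, (1 : ℝ) ≤ sn G (fun _ => 2) v := fun v => by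
    have := card_le_sn_add_one_of_degree_le_two hconn
      (show G.degree v ≤ 2 from hn ▸ (G.degree_lt_card_verts v).le)
    exact mod_cast (by omega : 1 ≤ sn G (fun _ => 2) v)
  have hsum := Finset.sum_le_sum fun v (_ : v ∈ Finset.univ) => hsn v
  simp only [Finset.sum_const, Finset.card_univ, hn, nsmul_eq_mul] at hsum
  rw [hn]
  push_cast at hsum ⊢
  linarith

theorem card_sq_lt_nine_mul_sum_sn (hconn : G.Connected)
    (hM : ∀ v, Nonempty (LatticeModel G v)) (hn : 2 ≤ Fintype.card V) (hfree : G.CliqueFree 3) :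
    (Fintype.card V : ℝ) ^ 2 < 9 * ∑ v, (sn G (fun _ => 2) v : ℝ) := by
  classical
  rcases hn.eq_or_lt with hn | hn
  · exact card_sq_lt_nine_mul_sum_sn_of_card_eq_two hconn hn.symm
  · have hE : G.edgeFinset.card + 4 ≤ 2 * Fintype.card V := by
      obtain ⟨v⟩ := hconn.nonempty
      rw [SimpleGraph.edgeFinset_card]
      exact (hM v).some.card_edgeSet_add_four_le hconn hn hfree
    exact card_sq_lt_nine_mul_sum hE
      (fun v => card_le_sn_add_one_of_degree_le_two hconn)
      (fun v => (hM v).some.card_le_of_degree_le_three hconn)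
      (fun v => (hM v).some.card_le_of_degree_eq_four hconn)

end SurvivingRate

/-! ### Contact representations on the lattice -/

section Retraction

variable {α : Type*} {H : SimpleGraph α} {A C S : Set α}

lemma preconnected_induce_of_walk (hC : (H.induce C).Preconnected) (hCS : C ⊆ S)
    (h : ∀ x ∈ S, ∃ y ∈ C, ∃ w : H.Walk x y, ∀ z ∈ w.support, z ∈ S) :
    (H.induce S).Preconnected := by
  rintro ⟨x, hx⟩ ⟨y, hy⟩
  obtain ⟨x', hx', w, hw⟩ := h x hx
  obtain ⟨y', hy', w', hw'⟩ := h y hy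
  have hcore := (hC ⟨x', hx'⟩ ⟨y', hy'⟩).map (SimpleGraph.induceHomOfLE H hCS).toHom
  exact (w.induce S hw).reachable.trans (hcore.trans (w'.induce S hw').reachable.symm)

lemma preconnected_induce_of_inter_nonempty (hC : (H.induce C).Preconnected) (hCS : C ⊆ S)
    (h : ∀ x ∈ S, ∃ T ⊆ S, x ∈ T ∧ (T ∩ C).Nonempty ∧ (H.induce T).Preconnected) :
    (H.induce S).Preconnected := by
  refine preconnected_induce_of_walk hC hCS fun x hx => ?_
  obtain ⟨T, hTS, hxT, ⟨y, hyT, hyC⟩, hT⟩ := h x hx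
  obtain ⟨w, hw⟩ := exists_walk_of_preconnected_induce hT hxT hyT
  exact ⟨y, hyC, w, fun z hz => hTS (hw z hz)⟩

lemma exists_parent (hS : (H.induce S).Preconnected) (hAS : A ⊆ S) (hA : A.Nonempty) :
    ∃ (depth : α → ℕ) (parent : α → α), (∀ y ∈ A, depth y = 0) ∧ ∀ x ∈ S, x ∉ A →
      H.Adj x (parent x) ∧ parent x ∈ S ∧ depth x = depth (parent x) + 1 := by
  let lengths (x : α) : Set ℕ :=
    {n | ∃ y ∈ A, ∃ w : H.Walk x y, (∀ z ∈ w.support, z ∈ S) ∧ w.length = n}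
  have hparent : ∀ x, ∃ x', x ∈ S → x ∉ A →
      H.Adj x x' ∧ x' ∈ S ∧ sInf (lengths x) = sInf (lengths x') + 1 := by
    intro x
    by_cases hx : x ∈ S
    swap
    · exact ⟨x, fun h => absurd h hx⟩
    obtain ⟨y₀, hy₀⟩ := hA
    obtain ⟨w₀, hw₀⟩ := exists_walk_of_preconnected_induce hS hx (hAS hy₀)
    obtain ⟨y, hy, w, hw, hlen⟩ := Nat.sInf_mem (s := lengths x) ⟨_, y₀, hy₀, w₀, hw₀, rfl⟩
    cases w with
    | nil => exact ⟨x, fun _ h => absurd hy h⟩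
    | @cons _ x' _ hadj w =>
      rw [SimpleGraph.Walk.length_cons] at hlen
      simp only [SimpleGraph.Walk.support_cons, List.forall_mem_cons] at hw
      have htail : w.length ∈ lengths x' := ⟨y, hy, w, hw.2, rfl⟩
      obtain ⟨y', hy', w', hw', hlen'⟩ := Nat.sInf_mem ⟨_, htail⟩
      have hcons : w'.length + 1 ∈ lengths x :=
        ⟨y', hy', .cons hadj w', by simpa [hx] using hw', by simp⟩
      have := Nat.sInf_le htail
      have := Nat.sInf_le hcons
      exact ⟨x', fun _ _ => ⟨hadj, hw.2 _ w.start_mem_support, by omega⟩⟩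
  choose parent hparent using hparent
  refine ⟨fun x => sInf (lengths x), parent, fun y hy => ?_, hparent⟩
  exact Nat.sInf_eq_zero.2 (Or.inl ⟨y, hy, .nil, by simpa using hAS hy, rfl⟩)

theorem exists_retraction (hS : (H.induce S).Preconnected) (hAS : A ⊆ S) (hA : A.Nonempty) :
    ∃ ρ : α → α, (∀ y ∈ A, ρ y = y) ∧ (∀ x ∈ S, ρ x ∈ A) ∧
      ∀ y, (H.induce {x ∈ S | ρ x = y}).Preconnected := by
  obtain ⟨depth, parent, hdepth, hparent⟩ := exists_parent hS hAS hA
  let ρ (x : α) : α := parent^[depth x] x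
  have hρA : ∀ y ∈ A, ρ y = y := fun y hy => by
    simp only [ρ, hdepth y hy, Function.iterate_zero_apply]
  have hρ : ∀ x ∈ S, ρ x ∈ A ∧ ∃ w : H.Walk x (ρ x), ∀ z ∈ w.support, z ∈ S ∧ ρ z = ρ x := by
    intro x
    induction hn : depth x using Nat.strong_induction_on generalizing x with
    | _ n ih =>
      intro hx
      by_cases hxA : x ∈ A
      · rw [hρA x hxA]
        exact ⟨hxA, .nil, by simp [hx, hρA x hxA]⟩
      obtain ⟨hadj, hpS, hpd⟩ := hparent x hx hxA
      have hstep : ρ x = ρ (parent x) := by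
        simp only [ρ, hpd, Function.iterate_succ_apply]
      obtain ⟨hmem, w, hw⟩ := ih _ (by omega) (parent x) rfl hpS
      rw [hstep]
      exact ⟨hmem, .cons hadj w, by simpa [hx, hstep] using hw⟩
  refine ⟨ρ, hρA, fun x hx => (hρ x hx).1, fun y => ?_⟩
  by_cases hy : ∃ x ∈ S, ρ x = y
  · obtain ⟨x₀, hx₀, rfl⟩ := hy
    have hroot := (hρ x₀ hx₀).1
    refine preconnected_induce_of_walk (C := {ρ x₀}) SimpleGraph.Preconnected.of_subsingleton
      (Set.singleton_subset_iff.2 ⟨hAS hroot, hρA _ hroot⟩) ?_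
    rintro x ⟨hx, hxy⟩
    obtain ⟨-, w, hw⟩ := hρ x hx
    exact ⟨ρ x, hxy, w, fun z hz => ⟨(hw z hz).1, (hw z hz).2.trans hxy⟩⟩
  · rintro ⟨x, hx⟩
    exact absurd ⟨x, hx⟩ hy

end Retraction

/-- The subdivision of `H`: its vertices are the vertices and the edges of `H`, adjacent when
incident. -/
def subdivision {W : Type*} (H : SimpleGraph W) : SimpleGraph (W ⊕ H.edgeSet) :=
  .fromRel fun i j => ∃ w e, w ∈ e.1 ∧ i = .inl w ∧ j = .inr e

lemma subdivision_adj_inr_inl {W : Type*} {H : SimpleGraph W} {e : H.edgeSet} {w : W} :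
    (subdivision H).Adj (.inr e) (.inl w) ↔ w ∈ e.1 := by
  simp [subdivision]

/-- A contact representation of `K` in `X` by nonempty sets that are connected in the sense of
`conn`: the sets of two distinct vertices meet precisely when the vertices are adjacent. -/
structure IsContactRep {ι X : Type*} (K : SimpleGraph ι) (conn : Set X → Prop) (c : ι → Set X) :
    Prop where
  conn : ∀ i, conn (c i)
  nonempty : ∀ i, (c i).Nonempty
  inter_nonempty : ∀ ⦃i j⦄, K.Adj i j → (c i ∩ c j).Nonempty
  disjoint : ∀ ⦃i j⦄, i ≠ j → ¬ K.Adj i j → Disjoint (c i) (c j)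

lemma exists_eqOn_of_pairwise_disjoint {ι α β : Type*} {S : ι → Set α}
    (hS : Pairwise (Function.onFun Disjoint S)) (f : ι → α → β) (g : α → β) :
    ∃ h : α → β, (∀ i, Set.EqOn h (f i) (S i)) ∧ ∀ x, (∀ i, x ∉ S i) → h x = g x := by
  classical
  refine ⟨fun x => if hx : ∃ i, x ∈ S i then f hx.choose x else g x, fun i x hx => ?_,
    fun x hx => dif_neg (not_exists.2 hx)⟩
  have hex : ∃ i, x ∈ S i := ⟨i, hx⟩
  have hi : hex.choose = i := by
    by_contra hne
    exact Set.disjoint_left.1 (hS hne) hex.choose_spec hx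
  exact (dif_pos hex).trans (by rw [hi])

namespace IsContactRep

variable {W α : Type*} {H : SimpleGraph W} {T : SimpleGraph α} {c : W ⊕ H.edgeSet → Set α}

lemma exists_edge_retraction
    (hc : IsContactRep (subdivision H) (fun s => (T.induce s).Preconnected) c) (e : H.edgeSet) :
    ∃ ρ : α → α, (∀ w, ∀ x ∈ c (.inr e) ∩ c (.inl w), ρ x = x) ∧
      (∀ x ∈ c (.inr e), ρ x ∈ c (.inr e) ∧ ∃ w ∈ e.1, ρ x ∈ c (.inl w)) ∧
      ∀ y, (T.induce {x ∈ c (.inr e) | ρ x = y}).Preconnected := by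
  have hne : (c (.inr e) ∩ ⋃ w, c (.inl w)).Nonempty := by
    obtain ⟨x, hx, hxw⟩ := hc.inter_nonempty (subdivision_adj_inr_inl.2 (Sym2.out_fst_mem e.1))
    exact ⟨x, hx, Set.mem_iUnion.2 ⟨_, hxw⟩⟩
  obtain ⟨ρ, hρA, hρ, hfibre⟩ := exists_retraction (hc.conn (.inr e)) Set.inter_subset_left hne
  refine ⟨ρ, fun w x hx => hρA x ⟨hx.1, Set.mem_iUnion.2 ⟨w, hx.2⟩⟩, fun x hx => ?_, hfibre⟩
  obtain ⟨he, hcells⟩ := hρ x hx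
  obtain ⟨w, hw⟩ := Set.mem_iUnion.1 hcells
  refine ⟨he, w, ?_, hw⟩
  by_contra hmem
  exact Set.disjoint_left.1 (hc.disjoint (by simp) (subdivision_adj_inr_inl.not.2 hmem)) he hw

lemma exists_label_iUnion [Nonempty W]
    (hc : IsContactRep (subdivision H) (fun s => (T.induce s).Preconnected) c) :
    ∃ f : α → W, (∀ w, ∀ x ∈ c (.inl w), f x = w) ∧ (∀ e, ∀ x ∈ c (.inr e), f x ∈ e.1) ∧
      ∀ w, (T.induce {x ∈ ⋃ i, c i | f x = w}).Preconnected := by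
  obtain ⟨owner, howner, -⟩ := exists_eqOn_of_pairwise_disjoint (S := fun w => c (.inl w))
    (fun a b hab => hc.disjoint (by simpa using hab) (by simp [subdivision])) (fun w _ => w)
    fun _ => Classical.arbitrary W
  choose ρ hρfix hρ hfibre using hc.exists_edge_retraction
  obtain ⟨f, hf, hf'⟩ := exists_eqOn_of_pairwise_disjoint (S := fun e => c (.inr e))
    (fun a b hab => hc.disjoint (by simpa using hab) (by simp [subdivision]))
    (fun e x => owner (ρ e x)) owner
  have hcell : ∀ w, ∀ x ∈ c (.inl w), f x = w := fun w x hx => by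
    by_cases hxe : ∃ e, x ∈ c (.inr e)
    · obtain ⟨e, he⟩ := hxe
      exact (hf e he).trans ((congrArg owner (hρfix e w x ⟨he, hx⟩)).trans (howner w hx))
    · exact (hf' x (not_exists.1 hxe)).trans (howner w hx)
  have hedge : ∀ e, ∀ x ∈ c (.inr e), f x ∈ e.1 ∧ ρ e x ∈ c (.inl (f x)) := by
    intro e x hx
    obtain ⟨-, w, hwe, hw⟩ := hρ e x hx
    have hfx : f x = w := (hf e hx).trans (howner w hw)
    exact hfx ▸ ⟨hwe, hw⟩
  refine ⟨f, hcell, fun e x hx => (hedge e x hx).1, fun w => ?_⟩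
  refine preconnected_induce_of_inter_nonempty (hc.conn (.inl w))
    (fun x hx => ⟨Set.mem_iUnion.2 ⟨_, hx⟩, hcell w x hx⟩) ?_
  rintro x ⟨hx, rfl⟩
  obtain ⟨i | e, hi⟩ := Set.mem_iUnion.1 hx
  · rw [hcell i x hi]
    exact ⟨c (.inl i), fun y hy => ⟨Set.mem_iUnion.2 ⟨_, hy⟩, hcell i y hy⟩, hi, ⟨x, hi, hi⟩,
      hc.conn _⟩
  · have hroot := (hedge e x hi).2
    refine ⟨{y ∈ c (.inr e) | ρ e y = ρ e x}, ?_, ⟨hi, rfl⟩,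
      ⟨ρ e x, ⟨(hρ e x hi).1, hρfix e _ _ ⟨(hρ e x hi).1, hroot⟩⟩, hroot⟩, hfibre e _⟩
    rintro y ⟨hy, hyx⟩
    exact ⟨Set.mem_iUnion.2 ⟨_, hy⟩,
      (hf e hy).trans ((congrArg owner hyx).trans (hf e hi).symm)⟩

theorem exists_label [Nonempty W]
    (hc : IsContactRep (subdivision H) (fun s => (T.induce s).Preconnected) c) {B : Set α}
    (hB : (T.induce B).Preconnected) (hcB : ∀ i, c i ⊆ B) :
    ∃ f : α → W, (∀ w, ∀ x ∈ c (.inl w), f x = w) ∧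
      (∀ w, (T.induce {x ∈ B | f x = w}).Preconnected) ∧
      ∀ ⦃a b⦄, H.Adj a b → ∃ s ∈ B, ∃ t ∈ B, T.Adj s t ∧ f s = a ∧ f t = b := by
  obtain ⟨f, hcell, hedge, hconn⟩ := hc.exists_label_iUnion
  obtain ⟨w₀⟩ := ‹Nonempty W›
  obtain ⟨x₀, hx₀⟩ := hc.nonempty (.inl w₀)
  have hUB : ⋃ i, c i ⊆ B := Set.iUnion_subset hcB
  obtain ⟨ρ, hρU, hρ, hfibre⟩ := exists_retraction hB hUB ⟨x₀, Set.mem_iUnion.2 ⟨_, hx₀⟩⟩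
  have hρc : ∀ i, ∀ x ∈ c i, ρ x = x := fun i x hx => hρU x (Set.mem_iUnion.2 ⟨i, hx⟩)
  have hcell' : ∀ w, ∀ x ∈ c (.inl w), f (ρ x) = w := fun w x hx => by
    rw [hρc _ x hx, hcell w x hx]
  refine ⟨f ∘ ρ, hcell', fun w => ?_, fun a b hab => ?_⟩
  · refine preconnected_induce_of_inter_nonempty (hconn w)
      (fun x hx => ⟨hUB hx.1, (congrArg f (hρU x hx.1)).trans hx.2⟩) ?_
    rintro x ⟨hx, rfl⟩
    exact ⟨{y ∈ B | ρ y = ρ x}, fun y hy => ⟨hy.1, congrArg f hy.2⟩, ⟨hx, rfl⟩,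
      ⟨ρ x, ⟨hUB (hρ x hx), hρU _ (hρ x hx)⟩, hρ x hx, rfl⟩, hfibre _⟩
  · let e : H.edgeSet := ⟨s(a, b), hab⟩
    obtain ⟨x, hx, hxa⟩ := hc.inter_nonempty
      (subdivision_adj_inr_inl (e := e).2 (Sym2.mem_mk_left a b))
    obtain ⟨y, hy, hyb⟩ := hc.inter_nonempty
      (subdivision_adj_inr_inl (e := e).2 (Sym2.mem_mk_right a b))
    obtain ⟨w, hw⟩ := exists_walk_of_preconnected_induce (hc.conn (.inr e)) hx hy
    obtain ⟨d, hd, hda, hdb⟩ := w.exists_boundary_dart {z | f (ρ z) = a} (hcell' a x hxa)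
      fun h => hab.ne (h.symm.trans (hcell' b y hyb))
    have hfst := hw _ (w.dart_fst_mem_support_of_mem_darts hd)
    have hsnd := hw _ (w.dart_snd_mem_support_of_mem_darts hd)
    refine ⟨d.fst, hcB _ hfst, d.snd, hcB _ hsnd, d.adj, hda, ?_⟩
    have hmem := hedge e _ hsnd
    rw [← hρc _ _ hsnd] at hmem
    exact (Sym2.mem_iff.1 hmem).resolve_left hdb

end IsContactRep

section Lattice

lemma preconnected_induce_image_of_ordConnected {α : Type*} {H : SimpleGraph α} {f : ℤ → α}
    (hf : ∀ x, H.Adj (f x) (f (x + 1))) {s : Set ℤ} (hs : s.OrdConnected) :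
    (H.induce (f '' s)).Preconnected := by
  rintro ⟨_, x, hx, rfl⟩ ⟨_, y, hy, rfl⟩
  wlog hxy : x ≤ y generalizing x y
  · exact (this y hy x hx (le_of_not_ge hxy)).symm
  have hreach : ∀ z (hxz : x ≤ z) (hzy : z ≤ y), (H.induce (f '' s)).Reachable
      ⟨f x, x, hx, rfl⟩ ⟨f z, z, hs.out hx hy ⟨hxz, hzy⟩, rfl⟩ := by
    refine Int.leInduction (fun _ => .refl _) fun z hxz ih hzy => ?_
    exact (ih (by omega)).trans (SimpleGraph.Adj.reachable (hf z))
  exact hreach y hxy le_rfl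

lemma preconnected_induce_prod {s t : Set ℤ} (hs : s.OrdConnected) (ht : t.OrdConnected) :
    (triLattice.induce (s ×ˢ t)).Preconnected := by
  rcases (s ×ˢ t).eq_empty_or_nonempty with hempty | ⟨⟨x₀, y₀⟩, hx₀, -⟩
  · rw [hempty]
    exact .of_subsingleton
  refine preconnected_induce_of_inter_nonempty
    (preconnected_induce_image_of_ordConnected (fun y => triLattice_adj_up x₀ y) ht)
    (Set.image_subset_iff.2 fun y hy => ⟨hx₀, hy⟩) ?_
  rintro ⟨x, y⟩ ⟨hx, hy⟩
  exact ⟨(·, y) '' s, Set.image_subset_iff.2 fun z hz => ⟨hz, hy⟩, ⟨x, hx, rfl⟩,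
    ⟨(x₀, y), ⟨x₀, hx₀, rfl⟩, y, hy, rfl⟩,
    preconnected_induce_image_of_ordConnected (fun x => triLattice_adj_right x y) hs⟩

lemma preconnected_outsideBox (m : ℤ) : (triLattice.induce (outsideBox m)).Preconnected := by
  have hunion : outsideBox m = Set.Iio (-m) ×ˢ Set.univ ∪ Set.univ ×ˢ Set.Ioi m ∪
      Set.Ioi m ×ˢ Set.univ ∪ Set.univ ×ˢ Set.Iio (-m) := by
    ext x
    simp only [outsideBox, Set.mem_ofPred_eq, Set.mem_union, Set.mem_prod, Set.mem_Iio,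
      Set.mem_Ioi, Set.mem_univ, lt_abs]
    grind
  rw [hunion]
  have hfst {s : Set ℤ} (hs : s.OrdConnected) := preconnected_induce_prod hs Set.ordConnected_univ
  have hsnd {s : Set ℤ} (hs : s.OrdConnected) := preconnected_induce_prod Set.ordConnected_univ hs
  have hleft_up := SimpleGraph.induce_union_connected (hfst (Set.ordConnected_Iio (a := -m)))
    (hsnd (Set.ordConnected_Ioi (a := m))) ⟨(-m - 1, m + 1), by simp⟩
  have hleft_up_right := SimpleGraph.induce_union_connected hleft_up.preconnected
    (hfst (Set.ordConnected_Ioi (a := m))) ⟨(m + 1, m + 1), by simp⟩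
  exact (SimpleGraph.induce_union_connected hleft_up_right.preconnected
    (hsnd (Set.ordConnected_Iio (a := -m))) ⟨(m + 1, -m - 1), by simp⟩).preconnected

lemma compl_outsideBox (m : ℤ) : (outsideBox m)ᶜ = Set.Icc (-m) m ×ˢ Set.Icc (-m) m := by
  ext x
  simp only [outsideBox, Set.mem_compl_iff, Set.mem_ofPred_eq, not_or, not_lt, abs_le,
    Set.mem_prod, Set.mem_Icc]

lemma exists_adj_mem_outsideBox {m : ℤ} {x : ℤ × ℤ} (hx : |x.1| = m ∨ |x.2| = m) :
    ∃ y ∈ outsideBox m, triLattice.Adj x y := by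
  obtain ⟨a, b⟩ := x
  simp only [outsideBox, Set.mem_ofPred_eq, lt_abs]
  rcases hx with rfl | rfl
  · rcases le_total 0 a with ha | ha
    · exact ⟨(a + 1, b), by grind, triLattice_adj_right a b⟩
    · exact ⟨(a - 1, b), by grind, by simpa using (triLattice_adj_right (a - 1) b).symm⟩
  · rcases le_total 0 b with hb | hb
    · exact ⟨(a, b + 1), by grind, triLattice_adj_up a b⟩
    · exact ⟨(a, b - 1), by grind, by simpa using (triLattice_adj_up a (b - 1)).symm⟩

theorem IsContactRep.nonempty_latticeModel {V : Type*} {G : SimpleGraph V} {v : V}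
    [Nonempty ({v}ᶜ : Set V)]
    {c : ({v}ᶜ : Set V) ⊕ (G.induce {v}ᶜ).edgeSet → Set (ℤ × ℤ)}
    (hc : IsContactRep (subdivision (G.induce {v}ᶜ))
      (fun s => (triLattice.induce s).Preconnected) c)
    {m : ℤ} (hbox : ∀ i, c i ⊆ (outsideBox m)ᶜ)
    (hv : ∀ w : ({v}ᶜ : Set V), G.Adj w v → ∃ x ∈ c (.inl w), |x.1| = m ∨ |x.2| = m) :
    Nonempty (LatticeModel G v) := by
  classical
  have hB : (triLattice.induce (outsideBox m)ᶜ).Preconnected := by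
    rw [compl_outsideBox]
    exact preconnected_induce_prod Set.ordConnected_Icc Set.ordConnected_Icc
  obtain ⟨f, hcell, hfibre, hadj⟩ := hc.exists_label hB hbox
  let label (x : ℤ × ℤ) : V := if x ∈ outsideBox m then v else f x
  have hout : ∀ x ∈ outsideBox m, label x = v := fun x hx => if_pos hx
  have hin : ∀ x ∈ (outsideBox m)ᶜ, label x = f x := fun x hx => if_neg hx
  have hlabel : ∀ x, label x = v ↔ x ∈ outsideBox m := fun x =>
    ⟨fun h => of_not_not fun hx => (f x).2 ((hin x hx).symm.trans h), hout x⟩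
  have hlabel' : ∀ w : ({v}ᶜ : Set V), {x | label x = w} = {x ∈ (outsideBox m)ᶜ | f x = w} := by
    refine fun w => Set.ext fun x => ⟨fun h => ?_, fun h => (hin x h.1).trans (congrArg _ h.2)⟩
    have hx : x ∉ outsideBox m := fun hx => w.2 (h.symm.trans (hout x hx))
    exact ⟨hx, Subtype.ext ((hin x hx).symm.trans h)⟩
  have hv' : ∀ w, G.Adj w v → ∃ s t, triLattice.Adj s t ∧ label s = w ∧ label t = v := by
    intro w hw
    obtain ⟨x, hx, hxm⟩ := hv ⟨w, hw.ne⟩ hw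
    obtain ⟨y, hy, hxy⟩ := exists_adj_mem_outsideBox hxm
    exact ⟨x, y, hxy, by rw [hin x (hbox _ hx), hcell _ x hx], hout y hy⟩
  refine ⟨⟨label, fun w => ?_, fun w => ?_, ?_, fun a b hab => ?_, m, hout⟩⟩
  · rcases eq_or_ne w v with rfl | hw
    · exact ⟨(m + 1, 0), hout _ (Or.inl (lt_abs.2 (Or.inl (lt_add_one m))))⟩
    · obtain ⟨x, hx⟩ := hc.nonempty (.inl ⟨w, hw⟩)
      exact ⟨x, by rw [hin x (hbox _ hx), hcell _ x hx]⟩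
  · rcases eq_or_ne w v with rfl | hw
    · exact Set.ext hlabel ▸ preconnected_outsideBox m
    · exact hlabel' ⟨w, hw⟩ ▸ hfibre ⟨w, hw⟩
  · exact Set.ext (fun x => (hlabel x).not) ▸ hB
  · by_cases hb : b = v
    · exact hb ▸ hv' a (hb ▸ hab)
    by_cases ha : a = v
    · obtain ⟨s, t, hst, hs, ht⟩ := hv' b (ha ▸ hab.symm)
      exact ⟨t, s, hst.symm, ht.trans ha.symm, hs⟩
    obtain ⟨s, hs, t, ht, hst, hsa, htb⟩ := hadj (a := ⟨a, ha⟩) (b := ⟨b, hb⟩) hab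
    exact ⟨s, t, hst, (hin s hs).trans (congrArg _ hsa), (hin t ht).trans (congrArg _ htb)⟩

end Lattice

/-! ### Rounding to the lattice -/

section Rounding

open Filter

/-- The lattice points at distance at most `1`, in the sup norm, from the dilate `m • s`. -/
def gridNhd (m : ℕ) (s : Set (ℝ × ℝ)) : Set (ℤ × ℤ) :=
  {x | ∃ p ∈ s, dist ((x.1 : ℝ), (x.2 : ℝ)) (m • p) ≤ 1}

variable {m : ℕ} {s t : Set (ℝ × ℝ)} {p q : ℝ × ℝ}

lemma gridNhd_mono (hst : s ⊆ t) : gridNhd m s ⊆ gridNhd m t :=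
  fun _ ⟨p, hp, hx⟩ => ⟨p, hst hp, hx⟩

lemma exists_dist_nsmul_le_half (m : ℕ) (p : ℝ × ℝ) :
    ∃ x : ℤ × ℤ, dist ((x.1 : ℝ), (x.2 : ℝ)) (m • p) ≤ 1 / 2 := by
  refine ⟨(round (m * p.1), round (m * p.2)), ?_⟩
  rw [Prod.dist_eq, max_le_iff, dist_comm, dist_comm (round (m * p.2) : ℝ)]
  simpa only [Prod.fst_smul, Prod.snd_smul, nsmul_eq_mul, Real.dist_eq] using
    ⟨abs_sub_round (m * p.1), abs_sub_round (m * p.2)⟩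

lemma nonempty_gridNhd_inter (hps : p ∈ s) (hpt : p ∈ t) :
    (gridNhd m s ∩ gridNhd m t).Nonempty := by
  obtain ⟨x, hx⟩ := exists_dist_nsmul_le_half m p
  have hx' := hx.trans (by norm_num : (1 / 2 : ℝ) ≤ 1)
  exact ⟨x, ⟨p, hps, hx'⟩, p, hpt, hx'⟩

lemma preconnected_gridNhd_singleton (m : ℕ) (p : ℝ × ℝ) :
    (triLattice.induce (gridNhd m {p})).Preconnected := by
  have hprod : gridNhd m {p} = (Int.cast ⁻¹' Metric.closedBall (m • p.1) 1 : Set ℤ) ×ˢ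
      (Int.cast ⁻¹' Metric.closedBall (m • p.2) 1 : Set ℤ) := by
    ext x
    simp [gridNhd, Prod.dist_eq]
  have hord (a : ℝ) : (Int.cast ⁻¹' Metric.closedBall a 1 : Set ℤ).OrdConnected := by
    rw [Real.closedBall_eq_Icc]
    exact Set.ordConnected_Icc.preimage_mono Int.cast_mono
  exact hprod ▸ preconnected_induce_prod (hord _) (hord _)

lemma preconnected_gridNhd_pair (hpq : dist (m • p) (m • q) ≤ 1 / 2) :
    (triLattice.induce (gridNhd m {p} ∪ gridNhd m {q})).Preconnected := by
  obtain ⟨x, hx⟩ := exists_dist_nsmul_le_half m p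
  refine (SimpleGraph.induce_union_connected (preconnected_gridNhd_singleton m p)
    (preconnected_gridNhd_singleton m q) ⟨x, ⟨p, rfl, by linarith⟩, q, rfl, ?_⟩).preconnected
  linarith [dist_triangle ((x.1 : ℝ), (x.2 : ℝ)) (m • p) (m • q)]

lemma preconnected_gridNhd (m : ℕ) (hs : IsPreconnected s) :
    (triLattice.induce (gridNhd m s)).Preconnected := by
  let joined (p q : ℝ × ℝ) : Prop := ∃ T ⊆ gridNhd m s,
    gridNhd m {p} ∪ gridNhd m {q} ⊆ T ∧ (triLattice.induce T).Preconnected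
  have hsub {p} (hp : p ∈ s) : gridNhd m {p} ⊆ gridNhd m s :=
    gridNhd_mono (Set.singleton_subset_iff.2 hp)
  have hjoined {p q} (hp : p ∈ s) (hq : q ∈ s) : joined p q := by
    refine hs.induction₂ joined (fun p hp => ?_) (fun p q r _ hq _ => ?_)
      (fun p q _ _ => ?_) hp hq
    · have hclose : ∀ᶠ q in nhds p, dist (m • p) (m • q) < 1 / 2 :=
        (show Continuous fun q => dist (m • p) (m • q) by fun_prop).continuousAt.eventually_lt_const
          (by simp)
      filter_upwards [nhdsWithin_le_nhds hclose, self_mem_nhdsWithin] with q hq hqs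
      exact ⟨_, Set.union_subset (hsub hp) (hsub hqs), le_rfl, preconnected_gridNhd_pair hq.le⟩
    · rintro ⟨T, hTs, hpq, hT⟩ ⟨T', hTs', hqr, hT'⟩
      obtain ⟨x, hx, -⟩ := nonempty_gridNhd_inter (m := m) (Set.mem_singleton q) hq
      refine ⟨T ∪ T', Set.union_subset hTs hTs', Set.union_subset_union
        (Set.subset_union_left.trans hpq) (Set.subset_union_right.trans hqr), ?_⟩
      exact (SimpleGraph.induce_union_connected hT hT'
        ⟨x, hpq (.inr hx), hqr (.inl hx)⟩).preconnected
    · rintro ⟨T, hTs, hpq, hT⟩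
      exact ⟨T, hTs, Set.union_comm (gridNhd m {p}) _ ▸ hpq, hT⟩
  rintro ⟨x, p, hp, hx⟩ ⟨y, q, hq, hy⟩
  obtain ⟨T, hTs, hpq, hT⟩ := hjoined hp hq
  exact (hT ⟨x, hpq (.inl ⟨p, rfl, hx⟩)⟩ ⟨y, hpq (.inr ⟨q, rfl, hy⟩)⟩).map
    (SimpleGraph.induceHomOfLE triLattice hTs).toHom

lemma eventually_disjoint_gridNhd (hs : IsCompact s) (ht : IsCompact t) (hst : Disjoint s t) :
    ∀ᶠ m in atTop, Disjoint (gridNhd m s) (gridNhd m t) := by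
  obtain ⟨ε, hε, hdist⟩ := Metric.exists_pos_forall_lt_edist hs ht.isClosed hst
  filter_upwards [(tendsto_natCast_atTop_atTop (R := ℝ)).eventually_gt_atTop (2 / ε)] with m hm
  rw [Set.disjoint_left]
  rintro x ⟨p, hp, hxp⟩ ⟨q, hq, hxq⟩
  have hpq : (ε : ℝ) < dist p q := by
    have := hdist p hp q hq
    rwa [edist_nndist, ENNReal.coe_lt_coe, ← NNReal.coe_lt_coe, coe_nndist] at this
  have hscale : dist (m • p) (m • q) = m * dist p q := by
    simp only [← Nat.cast_smul_eq_nsmul ℝ, dist_smul₀, Real.norm_natCast]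
  have htriangle := dist_triangle_left (m • p) (m • q) ((x.1 : ℝ), (x.2 : ℝ))
  have hε' : (0 : ℝ) < ε := hε
  rw [div_lt_iff₀ hε'] at hm
  nlinarith [Nat.cast_nonneg (α := ℝ) m]

lemma gridNhd_subset_compl_outsideBox (hs : s ⊆ Metric.closedBall 0 1) :
    gridNhd m s ⊆ (outsideBox (m + 1))ᶜ := by
  rintro x ⟨p, hp, hx⟩
  have hmp : dist (m • p) 0 ≤ m := by
    rw [dist_zero_right, ← Nat.cast_smul_eq_nsmul ℝ, norm_smul, Real.norm_natCast]
    exact mul_le_of_le_one_right m.cast_nonneg (mem_closedBall_zero_iff.1 (hs hp))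
  have hx' : dist ((x.1 : ℝ), (x.2 : ℝ)) 0 ≤ m + 1 := by
    linarith [dist_triangle ((x.1 : ℝ), (x.2 : ℝ)) (m • p) 0]
  obtain ⟨h₁, h₂⟩ : |(x.1 : ℝ)| ≤ m + 1 ∧ |(x.2 : ℝ)| ≤ m + 1 := by
    rwa [dist_zero_right, norm_prod_le_iff] at hx'
  simp only [outsideBox, Set.mem_compl_iff, Set.mem_ofPred_eq, not_or, not_lt]
  exact ⟨by exact_mod_cast h₁, by exact_mod_cast h₂⟩

lemma exists_mem_gridNhd_of_norm_eq_one (hp : p ∈ s) (hp1 : ‖p‖ = 1) :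
    ∃ x ∈ gridNhd m s, |x.1| = m + 1 ∨ |x.2| = m + 1 := by
  have hedge {a : ℝ} (ha : |a| = 1) : ∃ k : ℤ, |k| = m + 1 ∧ dist (k : ℝ) (m • a) ≤ 1 := by
    rcases (abs_eq zero_le_one).1 ha with rfl | rfl
    · exact ⟨m + 1, abs_of_nonneg (by positivity), by simp⟩
    · exact ⟨-(m + 1), by rw [abs_neg, abs_of_nonneg (by positivity)], by simp⟩
  obtain ⟨x, hx⟩ := exists_dist_nsmul_le_half m p
  rw [Prod.dist_eq, max_le_iff] at hx
  have hnear {y : ℤ × ℤ} (h₁ : dist (y.1 : ℝ) (m • p.1) ≤ 1) (h₂ : dist (y.2 : ℝ) (m • p.2) ≤ 1) :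
      y ∈ gridNhd m s := ⟨p, hp, max_le h₁ h₂⟩
  rcases max_choice ‖p.1‖ ‖p.2‖ with h | h
  · obtain ⟨k, hk, hkp⟩ := hedge (h.symm.trans hp1)
    exact ⟨(k, x.2), hnear hkp (hx.2.trans (by norm_num)), .inl hk⟩
  · obtain ⟨k, hk, hkp⟩ := hedge (h.symm.trans hp1)
    exact ⟨(x.1, k), hnear (hx.1.trans (by norm_num)) hkp, .inr hk⟩

theorem IsContactRep.eventually_gridNhd {ι : Type*} [Finite ι] {K : SimpleGraph ι}
    {c : ι → Set (ℝ × ℝ)} (hc : IsContactRep K (fun s => IsCompact s ∧ IsPreconnected s) c) :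
    ∀ᶠ m in atTop, IsContactRep K (fun s => (triLattice.induce s).Preconnected)
      (fun i => gridNhd m (c i)) := by
  have hdisj : ∀ᶠ m in atTop, ∀ i j, i ≠ j → ¬ K.Adj i j →
      Disjoint (gridNhd m (c i)) (gridNhd m (c j)) := by
    simp only [eventually_all]
    exact fun i j hij hadj =>
      eventually_disjoint_gridNhd (hc.conn i).1 (hc.conn j).1 (hc.disjoint hij hadj)
  filter_upwards [hdisj] with m hm
  refine ⟨fun i => preconnected_gridNhd m (hc.conn i).2, fun i => ?_, fun i j hij => ?_, hm⟩
  · obtain ⟨p, hp⟩ := hc.nonempty i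
    exact (nonempty_gridNhd_inter hp hp).left
  · obtain ⟨p, hpi, hpj⟩ := hc.inter_nonempty hij
    exact nonempty_gridNhd_inter hpi hpj

theorem IsContactRep.nonempty_latticeModel_of_isCompact {V : Type*} [Finite V]
    {G : SimpleGraph V} {v : V} [Nonempty ({v}ᶜ : Set V)]
    {c : ({v}ᶜ : Set V) ⊕ (G.induce {v}ᶜ).edgeSet → Set (ℝ × ℝ)}
    (hc : IsContactRep (subdivision (G.induce {v}ᶜ)) (fun s => IsCompact s ∧ IsPreconnected s) c)
    (hball : ∀ i, c i ⊆ Metric.closedBall 0 1)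
    (hv : ∀ w : ({v}ᶜ : Set V), G.Adj w v → ∃ p ∈ c (.inl w), ‖p‖ = 1) :
    Nonempty (LatticeModel G v) := by
  obtain ⟨m, hm⟩ := hc.eventually_gridNhd.exists
  refine hm.nonempty_latticeModel (fun i => gridNhd_subset_compl_outsideBox (hball i)) ?_
  intro w hw
  obtain ⟨p, hp, hp1⟩ := hv w hw
  exact exists_mem_gridNhd_of_norm_eq_one hp hp1

end Rounding

/-! ### From a plane embedding to a lattice model -/

section Inversion

variable {F : Type*} [NormedAddCommGroup F] [NormedSpace ℝ F]

/-- The inversion of a normed space that takes the sphere of radius `r` around `c` to the unit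
sphere around `0` and the exterior of the former to the interior of the latter. -/
noncomputable def normInversion (c : F) (r : ℝ) (z : F) : F := (r / ‖z - c‖ ^ 2) • (z - c)

lemma norm_normInversion (c : F) {r : ℝ} (hr : 0 ≤ r) (z : F) :
    ‖normInversion c r z‖ = r / ‖z - c‖ := by
  rw [normInversion, norm_smul, Real.norm_of_nonneg (by positivity)]
  rcases eq_or_ne ‖z - c‖ 0 with h | h
  · simp [h]
  · field_simp

lemma normInversion_injective (c : F) {r : ℝ} (hr : 0 < r) :
    Function.Injective (normInversion c r) := by
  intro x y h
  have hnorm : ‖x - c‖ = ‖y - c‖ := by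
    have := congrArg norm h
    rw [norm_normInversion c hr.le, norm_normInversion c hr.le] at this
    exact inv_injective (mul_left_cancel₀ hr.ne' this)
  rcases eq_or_ne (y - c) 0 with hy | hy
  · rw [hy, norm_zero, norm_eq_zero] at hnorm
    exact sub_left_injective (hnorm.trans hy.symm)
  · have hscalar : r / ‖y - c‖ ^ 2 ≠ 0 := by positivity
    rw [normInversion, normInversion, hnorm] at h
    exact sub_left_injective (smul_right_injective F hscalar h)

lemma continuousOn_normInversion (c : F) (r : ℝ) : ContinuousOn (normInversion c r) {c}ᶜ := by
  refine ContinuousOn.smul (ContinuousOn.div (by fun_prop) (by fun_prop) fun z hz => ?_)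
    (by fun_prop)
  exact pow_ne_zero 2 (norm_ne_zero_iff.2 (sub_ne_zero.2 hz))

end Inversion

lemma IsContactRep.image {ι X Y : Type*} [TopologicalSpace X] [TopologicalSpace Y]
    {K : SimpleGraph ι} {c : ι → Set X}
    (hc : IsContactRep K (fun s => IsCompact s ∧ IsPreconnected s) c) {f : X → Y}
    (hf : Function.Injective f) (hfc : ∀ i, ContinuousOn f (c i)) :
    IsContactRep K (fun s => IsCompact s ∧ IsPreconnected s) (fun i => f '' c i) where
  conn i := ⟨(hc.conn i).1.image_of_continuousOn (hfc i), (hc.conn i).2.image f (hfc i)⟩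
  nonempty i := (hc.nonempty i).image f
  inter_nonempty _ _ hij := Set.image_inter hf ▸ (hc.inter_nonempty hij).image f
  disjoint _ _ hij hadj := (Set.disjoint_image_iff hf).2 (hc.disjoint hij hadj)

lemma exists_first_eq {f : ℝ → ℝ} {a b r : ℝ} (hab : a ≤ b) (hf : ContinuousOn f (Set.Icc a b))
    (ha : r ≤ f a) (hb : f b < r) :
    ∃ t ∈ Set.Ico a b, f t = r ∧ ∀ s ∈ Set.Icc a t, r ≤ f s := by
  have hcompact : IsCompact (Set.Icc a b ∩ f ⁻¹' Set.Iic r) :=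
    isCompact_Icc.of_isClosed_subset (hf.preimage_isClosed_of_isClosed isClosed_Icc isClosed_Iic)
      Set.inter_subset_left
  obtain ⟨t, ⟨ht, htr⟩, hleast⟩ := hcompact.exists_isLeast ⟨b, ⟨hab, le_rfl⟩, hb.le⟩
  have hbefore : ∀ s ∈ Set.Icc a b, f s ≤ r → t ≤ s := fun s hs hsr => hleast ⟨hs, hsr⟩
  obtain ⟨s, hs, hsr⟩ :=
    intermediate_value_Icc' ht.1 (hf.mono (Set.Icc_subset_Icc_right ht.2)) ⟨htr, ha⟩
  obtain rfl : s = t := le_antisymm hs.2 (hbefore s ⟨hs.1, hs.2.trans ht.2⟩ hsr.le)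
  refine ⟨s, ⟨ht.1, lt_of_le_of_ne ht.2 ?_⟩, hsr, fun u hu => ?_⟩
  · rintro rfl
    exact hb.ne hsr
  · by_contra! hur
    have hsu := hbefore u ⟨hu.1, hu.2.trans ht.2⟩ hur.le
    exact hur.ne (le_antisymm hu.2 hsu ▸ hsr)

namespace PlaneEmbedding

variable {V : Type*} {G : SimpleGraph V} (E : PlaneEmbedding G) {a b v w x y : V} {t s : ℝ}

lemma mk_eq_mk_of_arc_eq (hab : G.Adj a b) (hxy : G.Adj x y) (ht : t ∈ Set.Ioo 0 1)
    (hs : s ∈ Set.Icc 0 1) (h : E.arc a b t = E.arc x y s) : s(a, b) = s(x, y) := by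
  by_contra hne
  obtain ⟨hend, -⟩ := E.arc_meet hab hxy hne
    ⟨⟨t, Set.Ioo_subset_Icc_self ht, rfl⟩, s, hs, h.symm⟩
  rcases hend with h | h
  · exact E.arc_avoid hab a ⟨t, ht, h⟩
  · exact E.arc_avoid hab b ⟨t, ht, h⟩

lemma arc_ne_pos (hab : G.Adj a b) (ha : a ≠ v) (hb : b ≠ v) (ht : t ∈ Set.Icc 0 1) :
    E.arc a b t ≠ E.pos v := by
  intro h
  rcases Set.eq_endpoints_or_mem_Ioo_of_mem_Icc ht with rfl | rfl | ht
  · exact ha (E.pos_inj ((E.arc_zero hab).symm.trans h))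
  · exact hb (E.pos_inj ((E.arc_one hab).symm.trans h))
  · exact E.arc_avoid hab v ⟨t, ht, h⟩

lemma exists_radius [Finite V] (v : V) : ∃ r > 0, (∀ w ≠ v, r ≤ dist (E.pos w) (E.pos v)) ∧
    ∀ a b, G.Adj a b → a ≠ v → b ≠ v → ∀ t ∈ Set.Icc 0 1, r ≤ dist (E.arc a b t) (E.pos v) := by
  let pairs : Set (V × V) := {d | G.Adj d.1 d.2 ∧ d.1 ≠ v ∧ d.2 ≠ v}
  let drawing : Set (ℝ × ℝ) :=
    E.pos '' {v}ᶜ ∪ ⋃ d ∈ pairs, E.arc d.1 d.2 '' Set.Icc 0 1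
  have hclosed : IsClosed drawing := (Set.toFinite _).isClosed.union <|
    (Set.toFinite pairs).isClosed_biUnion fun d hd =>
      (isCompact_Icc.image (E.arc_cont hd.1)).isClosed
  have hv : E.pos v ∉ drawing := by
    simp only [drawing, Set.mem_union, Set.mem_iUnion, not_or, not_exists]
    refine ⟨?_, ?_⟩
    · rintro ⟨w, hw, h⟩
      exact hw (E.pos_inj h)
    · rintro d ⟨hadj, h₁, h₂⟩ ⟨t, ht, h⟩
      exact E.arc_ne_pos hadj h₁ h₂ ht h
  obtain ⟨r, hr, hball⟩ := Metric.isOpen_iff.1 hclosed.isOpen_compl _ hv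
  have hfar : ∀ p ∈ drawing, r ≤ dist p (E.pos v) := fun p hp =>
    not_lt.1 fun h => hball h hp
  exact ⟨r, hr, fun w hw => hfar _ (.inl ⟨w, hw, rfl⟩), fun a b hab ha hb t ht =>
    hfar _ (.inr (Set.mem_biUnion (x := (a, b)) ⟨hab, ha, hb⟩ ⟨t, ht, rfl⟩))⟩

/-- The star of `w`: the point of `w` with, for each neighbour `x`, the part of the arc from `w` to
`x` up to the time `τ w x`. -/
def star (τ : V → V → ℝ) (w : V) : Set (ℝ × ℝ) :=
  insert (E.pos w) (⋃ x, ⋃ (_ : G.Adj w x), E.arc w x '' Set.Icc 0 (τ w x))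

/-- The middle third of the arc drawn for an edge `e`. -/
noncomputable def middle (e : Sym2 V) : Set (ℝ × ℝ) :=
  E.arc e.out.1 e.out.2 '' Set.Icc (1 / 3) (2 / 3)

variable {τ : V → V → ℝ} {p : ℝ × ℝ}

lemma mem_star : p ∈ E.star τ w ↔
    p = E.pos w ∨ ∃ x, G.Adj w x ∧ ∃ t ∈ Set.Icc 0 (τ w x), E.arc w x t = p := by
  simp [star]

lemma eq_pos_or_exists_arc_eq_of_mem_star (hτ : ∀ x, G.Adj w x → τ w x < 1)
    (hp : p ∈ E.star τ w) : p = E.pos w ∨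
      ∃ x, G.Adj w x ∧ ∃ t ∈ Set.Ioo 0 1, t ≤ τ w x ∧ E.arc w x t = p := by
  rcases E.mem_star.1 hp with hp | ⟨x, hx, t, ht, rfl⟩
  · exact .inl hp
  rcases ht.1.eq_or_lt with rfl | ht₀
  · exact .inl (E.arc_zero hx)
  · exact .inr ⟨x, hx, t, ⟨ht₀, ht.2.trans_lt (hτ x hx)⟩, ht.2, rfl⟩

lemma isCompact_star [Finite V] (τ : V → V → ℝ) (w : V) : IsCompact (E.star τ w) := by
  refine IsCompact.insert (isCompact_iUnion fun x => isCompact_iUnion fun hx => ?_) _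
  exact isCompact_Icc.image (E.arc_cont hx)

lemma isPreconnected_star (hτ : ∀ x, G.Adj w x → 0 ≤ τ w x) : IsPreconnected (E.star τ w) := by
  refine isPreconnected_of_forall (E.pos w) fun p hp => ?_
  rcases E.mem_star.1 hp with rfl | ⟨x, hx, t, ht, rfl⟩
  · exact ⟨{E.pos w}, by simpa using hp, rfl, rfl, isPreconnected_singleton⟩
  · refine ⟨E.arc w x '' Set.Icc 0 (τ w x), ?_, ⟨0, ⟨le_rfl, hτ x hx⟩, E.arc_zero hx⟩,
      ⟨t, ht, rfl⟩, isPreconnected_Icc.image _ (E.arc_cont hx).continuousOn⟩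
    rintro _ ⟨s, hs, rfl⟩
    exact E.mem_star.2 (.inr ⟨x, hx, s, hs, rfl⟩)

lemma middle_mk (hab : G.Adj a b) :
    E.middle s(a, b) = E.arc a b '' Set.Icc (1 / 3) (2 / 3) := by
  have hout : s((s(a, b) : Sym2 V).out.1, (s(a, b) : Sym2 V).out.2) = s(a, b) := Quot.out_eq _
  rcases Sym2.eq_iff.1 hout with ⟨h₁, h₂⟩ | ⟨h₁, h₂⟩
  · rw [middle, h₁, h₂]
  · have hflip : E.arc b a = E.arc a b ∘ (1 - ·) := funext (E.arc_symm hab)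
    rw [middle, h₁, h₂, hflip, Set.image_comp, Set.image_const_sub_Icc]
    norm_num

lemma exists_arc_eq_of_mem_middle (hab : G.Adj a b) (hp : p ∈ E.middle s(a, b)) :
    ∃ t ∈ Set.Ioo 0 1, E.arc a b t = p := by
  rw [E.middle_mk hab] at hp
  obtain ⟨t, ht, rfl⟩ := hp
  exact ⟨t, ⟨by linarith [ht.1], by linarith [ht.2]⟩, rfl⟩

lemma disjoint_star (hτ : ∀ w x, G.Adj w x → τ w x < 1) (hne : a ≠ b)
    (hsum : G.Adj a b → τ a b + τ b a < 1) : Disjoint (E.star τ a) (E.star τ b) := by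
  rw [Set.disjoint_left]
  intro p ha hb
  rcases E.eq_pos_or_exists_arc_eq_of_mem_star (hτ a) ha with h | ⟨x, hx, t, ht, htτ, h⟩ <;>
    rcases E.eq_pos_or_exists_arc_eq_of_mem_star (hτ b) hb with h' | ⟨y, hy, s, hs, hsτ, h'⟩
  · exact hne (E.pos_inj (h.symm.trans h'))
  · exact E.arc_avoid hy a ⟨s, hs, h'.trans h⟩
  · exact E.arc_avoid hx b ⟨t, ht, h.trans h'⟩
  · have hedge := E.mk_eq_mk_of_arc_eq hx hy ht (Set.Ioo_subset_Icc_self hs) (h.trans h'.symm)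
    obtain ⟨rfl, rfl⟩ := (Sym2.eq_iff.1 hedge).resolve_left fun h => hne h.1
    rw [E.arc_symm hx] at h'
    have htime : t = 1 - s := E.arc_injOn hx (Set.Ioo_subset_Icc_self ht)
      ⟨by linarith [hs.2], by linarith [hs.1]⟩ (h.trans h'.symm)
    linarith [hsum hx]

lemma disjoint_middle_star (hτ : ∀ x, G.Adj w x → τ w x < 1) (hab : G.Adj a b)
    (hw : w ∉ s(a, b)) : Disjoint (E.middle s(a, b)) (E.star τ w) := by
  rw [Set.disjoint_left]
  intro p hp hpw
  obtain ⟨t, ht, h⟩ := E.exists_arc_eq_of_mem_middle hab hp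
  rcases E.eq_pos_or_exists_arc_eq_of_mem_star hτ hpw with h' | ⟨x, hx, s, hs, -, h'⟩
  · exact E.arc_avoid hab w ⟨t, ht, h.trans h'⟩
  · have hedge := E.mk_eq_mk_of_arc_eq hab hx ht (Set.Ioo_subset_Icc_self hs) (h.trans h'.symm)
    exact hw (hedge ▸ Sym2.mem_mk_left w x)

lemma disjoint_middle (hab : G.Adj a b) (hxy : G.Adj x y) (hne : s(a, b) ≠ s(x, y)) :
    Disjoint (E.middle s(a, b)) (E.middle s(x, y)) := by
  rw [Set.disjoint_left]
  intro p hp hp'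
  obtain ⟨t, ht, h⟩ := E.exists_arc_eq_of_mem_middle hab hp
  obtain ⟨s, hs, h'⟩ := E.exists_arc_eq_of_mem_middle hxy hp'
  exact hne (E.mk_eq_mk_of_arc_eq hab hxy ht (Set.Ioo_subset_Icc_self hs) (h.trans h'.symm))

lemma star_inter_middle_nonempty (hab : G.Adj a b) (hτ : 1 / 3 ≤ τ a b) :
    (E.star τ a ∩ E.middle s(a, b)).Nonempty :=
  ⟨E.arc a b (1 / 3), E.mem_star.2 (.inr ⟨b, hab, _, ⟨by norm_num, hτ⟩, rfl⟩),
    E.middle_mk hab ▸ ⟨1 / 3, by norm_num, rfl⟩⟩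

/-- The cells of the vertices and edges of `G.induce S`: stars and middle thirds. -/
noncomputable def cell (τ : V → V → ℝ) (S : Set V) :
    S ⊕ (G.induce S).edgeSet → Set (ℝ × ℝ) :=
  Sum.elim (fun w => E.star τ w) (fun e => E.middle (e.1.map (↑)))

lemma exists_cell_inr_eq (τ : V → V → ℝ) {S : Set V} (e : (G.induce S).edgeSet) : ∃ a b : S,
    G.Adj a b ∧ e.1 = s(a, b) ∧ E.cell τ S (.inr e) = E.middle s(a.1, b.1) := by
  obtain ⟨e, he⟩ := e
  induction e using Sym2.ind with
  | _ a b => exact ⟨a, b, he, rfl, rfl⟩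

lemma disjoint_cell_inr_inl {S : Set V} (hτ : ∀ w x, G.Adj w x → τ w x < 1) {w : S}
    {e : (G.induce S).edgeSet} (hw : w ∉ e.1) :
    Disjoint (E.cell τ S (.inr e)) (E.cell τ S (.inl w)) := by
  obtain ⟨a, b, hab, he, hcell⟩ := E.exists_cell_inr_eq τ e
  rw [he, Sym2.mem_iff, Subtype.ext_iff, Subtype.ext_iff, ← Sym2.mem_iff] at hw
  exact hcell ▸ E.disjoint_middle_star (hτ w) hab hw

lemma cell_inl_inter_inr_nonempty {S : Set V} (hS : ∀ w, ∀ x ∈ S, τ w x = 1 / 3) {w : S}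
    {e : (G.induce S).edgeSet} (hw : w ∈ e.1) :
    (E.cell τ S (.inl w) ∩ E.cell τ S (.inr e)).Nonempty := by
  obtain ⟨e, he⟩ := e
  obtain ⟨b, rfl⟩ := hw
  exact E.star_inter_middle_nonempty he (hS w b b.2).ge

theorem isContactRep_cell [Finite V] {S : Set V} (hτ : ∀ w x, G.Adj w x → τ w x ∈ Set.Ico 0 1)
    (hS : ∀ w, ∀ x ∈ S, τ w x = 1 / 3) :
    IsContactRep (subdivision (G.induce S)) (fun s => IsCompact s ∧ IsPreconnected s)
      (E.cell τ S) := by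
  have hτ₁ : ∀ w x, G.Adj w x → τ w x < 1 := fun w x h => (hτ w x h).2
  refine ⟨?_, ?_, ?_, ?_⟩
  · rintro (w | e)
    · exact ⟨E.isCompact_star τ w, E.isPreconnected_star fun x h => (hτ w x h).1⟩
    · obtain ⟨a, b, hab, -, hcell⟩ := E.exists_cell_inr_eq τ e
      rw [hcell, E.middle_mk hab]
      exact ⟨isCompact_Icc.image (E.arc_cont hab),
        isPreconnected_Icc.image _ (E.arc_cont hab).continuousOn⟩
  · rintro (w | e)
    · exact ⟨E.pos w, E.mem_star.2 (.inl rfl)⟩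
    · exact (E.cell_inl_inter_inr_nonempty hS (Sym2.out_fst_mem e.1)).right
  · rintro (w | e) (w' | e') h
    · simp [subdivision] at h
    · exact E.cell_inl_inter_inr_nonempty hS (subdivision_adj_inr_inl.1 h.symm)
    · rw [Set.inter_comm]
      exact E.cell_inl_inter_inr_nonempty hS (subdivision_adj_inr_inl.1 h)
    · simp [subdivision] at h
  · rintro (w | e) (w' | e') hne h
    · refine E.disjoint_star hτ₁ (Subtype.coe_ne_coe.2 fun h => hne (congrArg _ h)) fun _ => ?_
      rw [hS w w' w'.2, hS w' w w.2]
      norm_num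
    · exact (E.disjoint_cell_inr_inl hτ₁ fun hw => h (subdivision_adj_inr_inl.2 hw).symm).symm
    · exact E.disjoint_cell_inr_inl hτ₁ fun hw => h (subdivision_adj_inr_inl.2 hw)
    · obtain ⟨a, b, hab, he, hcell⟩ := E.exists_cell_inr_eq τ e
      obtain ⟨x, y, hxy, he', hcell'⟩ := E.exists_cell_inr_eq τ e'
      rw [hcell, hcell']
      refine E.disjoint_middle hab hxy fun heq => hne (congrArg _ (Subtype.ext ?_))
      exact Sym2.map.injective Subtype.val_injective (by simpa [he, he'] using heq)

lemma exists_arm_lengths [Finite V] (v : V) : ∃ r > 0, ∃ τ : V → V → ℝ,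
    (∀ w x, G.Adj w x → τ w x ∈ Set.Ico 0 1) ∧ (∀ w, ∀ x ≠ v, τ w x = 1 / 3) ∧
    (∀ i, ∀ p ∈ E.cell τ {v}ᶜ i, r ≤ dist p (E.pos v)) ∧
    ∀ w, G.Adj w v → dist (E.arc w v (τ w v)) (E.pos v) = r := by
  classical
  obtain ⟨r, hr, hpos, harc⟩ := E.exists_radius v
  have hfirst : ∀ w, G.Adj w v → ∃ t ∈ Set.Ico (0 : ℝ) 1, dist (E.arc w v t) (E.pos v) = r ∧
      ∀ s ∈ Set.Icc 0 t, r ≤ dist (E.arc w v s) (E.pos v) := fun w hw =>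
    exists_first_eq zero_le_one ((E.arc_cont hw).dist continuous_const).continuousOn
      (by simpa [E.arc_zero hw] using hpos w hw.ne) (by simpa [E.arc_one hw] using hr)
  choose! T hT hTr hTfar using hfirst
  obtain ⟨τ, hτv, hτ⟩ : ∃ τ : V → V → ℝ, (∀ w, τ w v = T w) ∧ ∀ w, ∀ x ≠ v, τ w x = 1 / 3 :=
    ⟨fun w x => if x = v then T w else 1 / 3, fun _ => if_pos rfl, fun _ _ hx => if_neg hx⟩
  refine ⟨r, hr, τ, fun w x hwx => ?_, hτ, ?_, fun w hw => (hτv w).symm ▸ hTr w hw⟩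
  · rcases eq_or_ne x v with rfl | hx
    · exact hτv w ▸ hT w hwx
    · rw [hτ w x hx]
      norm_num
  · rintro (⟨w, hw⟩ | e) p hp
    · rcases E.mem_star.1 hp with rfl | ⟨x, hx, t, ht, rfl⟩
      · exact hpos w hw
      · rcases eq_or_ne x v with rfl | hxv
        · exact hTfar w hx t (hτv w ▸ ht)
        · rw [hτ w x hxv] at ht
          exact harc w x hx hw hxv t ⟨ht.1, ht.2.trans (by norm_num)⟩
    · obtain ⟨a, b, hab, -, hcell⟩ := E.exists_cell_inr_eq τ e
      obtain ⟨t, ht, rfl⟩ := E.exists_arc_eq_of_mem_middle hab (hcell ▸ hp)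
      exact harc a b hab a.2 b.2 t (Set.Ioo_subset_Icc_self ht)

theorem nonempty_latticeModel (E : PlaneEmbedding G) [Finite V] [Nontrivial V] (v : V) :
    Nonempty (LatticeModel G v) := by
  obtain ⟨r, hr, τ, hτ, hτ', hfar, harm⟩ := E.exists_arm_lengths v
  obtain ⟨u, hu⟩ := exists_ne v
  have : Nonempty ({v}ᶜ : Set V) := ⟨⟨u, hu⟩⟩
  have hcont : ∀ i, ContinuousOn (normInversion (E.pos v) r) (E.cell τ {v}ᶜ i) := fun i =>
    (continuousOn_normInversion _ r).mono fun p hp hpv =>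
      hr.not_ge ((hfar i p hp).trans_eq (dist_eq_zero.2 hpv))
  refine ((E.isContactRep_cell hτ fun w x hx => hτ' w x hx).image
    (normInversion_injective _ hr) hcont).nonempty_latticeModel_of_isCompact ?_ ?_
  · rintro i _ ⟨p, hp, rfl⟩
    rw [mem_closedBall_zero_iff, norm_normInversion _ hr.le, ← dist_eq_norm]
    exact div_le_one_of_le₀ (hfar i p hp) dist_nonneg
  · intro w hw
    refine ⟨_, ⟨E.arc w v (τ w v), E.mem_star.2 (.inr ⟨v, hw, _, ?_, rfl⟩), rfl⟩, ?_⟩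
    · exact Set.right_mem_Icc.2 (hτ w v hw).1
    · rw [norm_normInversion _ hr.le, ← dist_eq_norm, harm w hw, div_self hr.ne']

end PlaneEmbedding

/-- Corollary 1.3: a connected triangle-free planar graph on at least 2 vertices has
2-surviving rate greater than `1/9`. -/
theorem surviving_rate_two_triangle_free {V : Type} [Fintype V] (G : SimpleGraph V)
    (hconn : G.Connected) (hplanar : IsPlanar G)
    (hn : 2 ≤ Fintype.card V)
    (htriangle : ∀ (v : V) (c : G.Walk v v), c.IsCycle → c.length ≠ 3) :
    survivingRate G (fun _ => 2) > 1 / 9 := by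
  classical
  obtain ⟨E⟩ := hplanar
  have : Nontrivial V := Fintype.one_lt_card_iff_nontrivial.1 hn
  have hfree : G.CliqueFree 3 := fun s hs => by
    obtain ⟨v, c, hc, h3⟩ := SimpleGraph.is3Clique_iff_exists_cycle_length_three.1 ⟨s, hs⟩
    exact htriangle v c hc h3
  have hlt : (Fintype.card V : ℝ) ^ 2 < 9 * ∑ v, (sn G (fun _ => 2) v : ℝ) :=
    card_sq_lt_nine_mul_sum_sn hconn E.nonempty_latticeModel hn hfree
  have hpos : (0 : ℝ) < (Fintype.card V : ℝ) ^ 2 := by positivity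
  rw [survivingRate, gt_iff_lt, lt_div_iff₀ hpos]
  linarith
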